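/- arXiv:0902.1330 — 2 statements merged into one kernel-verified Lean document; each statement's English description precedes it below -/
import Mathlib

section
/- Let τ : D → D be injective and suppose there exists 1 < p₀ < ∞ such that for every Banach space E with the UMD property, the operator T_{τ,p₀} ⊗ Id_E is bounded on L^{p₀}_E. Then ‖T_{τ,1}^{−1}‖₁ < ∞, and for every 1 < p < ∞ and every UMD space E, both T_{τ,p} ⊗ Id_E and its inverse T_{τ,p}^{−1} ⊗ Id_E are bounded operators on L^p_E, i.e. ‖T_{τ,p} ⊗ Id_E‖_{L^p_E} · ‖T_{τ,p}^{−1} ⊗ Id_E‖_{L^p_E} < ∞. (The value p₀ = 2 is not excluded.) -/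
open MeasureTheory Set
open scoped ENNReal NNReal Classical

noncomputable section

/-- A dyadic subinterval of `[0,1)`: the half-open interval
`[k/2^n, (k+1)/2^n)` with `k < 2^n`. -/
structure DyadicI where
  n : ℕ
  k : ℕ
  hk : k < 2 ^ n

instance : Nonempty DyadicI := ⟨⟨0, 0, by norm_num⟩⟩

namespace DyadicI

/-- The length `|I| = 2^{-n}` of a dyadic interval. -/
def len (I : DyadicI) : ℝ := (2 : ℝ) ^ (-(I.n : ℤ))

/-- The left endpoint `k 2^{-n}` of a dyadic interval. -/
def lep (I : DyadicI) : ℝ := (I.k : ℝ) * I.len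

/-- The underlying point set `[k/2^n, (k+1)/2^n)` of a dyadic interval. -/
def toSet (I : DyadicI) : Set ℝ := Set.Ico I.lep (I.lep + I.len)

/-- The `L^∞`-normalized Haar function `h_I`: `1` on the left half of `I`,
`-1` on the right half of `I`, `0` off `I`. -/
def haar (I : DyadicI) (t : ℝ) : ℝ :=
  if t ∈ Set.Ico I.lep (I.lep + I.len / 2) then 1
  else if t ∈ Set.Ico (I.lep + I.len / 2) (I.lep + I.len) then -1
  else 0

end DyadicI

open DyadicI

section Defs

variable {X : Type*} [NormedAddCommGroup X] [NormedSpace ℝ X]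

/-- The square function `𝕊(f)` of the `X`-valued Haar expansion `f = ∑_{I ∈ s} x_I h_I`:
`𝕊(f)(t) = (E_ε ‖∑_I ε_I x_I h_I(t)‖²)^{1/2}`, the average being taken over all
choices of signs `ε_I ∈ {±1}`, `I ∈ s`. -/
def sqFn (s : Finset DyadicI) (x : DyadicI → X) (t : ℝ) : ℝ :=
  Real.sqrt ((∑ ε : {I // I ∈ s} → Bool,
    ‖∑ I ∈ s.attach, ((if ε I then (1 : ℝ) else -1) * haar I.1 t) • x I.1‖ ^ 2) /
      2 ^ s.card)

/-- The `H^p_X` (quasi-)norm of `f = ∑_{I ∈ s} x_I h_I`: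
`‖f‖ = (∫₀¹ 𝕊(f)(t)^p dt)^{1/p}`. -/
def HpNormV (p : ℝ) (s : Finset DyadicI) (x : DyadicI → X) : ℝ :=
  (∫ t in Set.Icc (0 : ℝ) 1, sqFn s x t ^ p) ^ (1 / p)

/-- The coefficients of `(T_{τ,p} ⊗ Id_X)(f)` for `f = ∑_{I ∈ s} x_I h_I`, namely
`(T_{τ,p} ⊗ Id_X)(f) = ∑_{I ∈ s} (|I|/|τ(I)|)^{1/p} x_I h_{τ(I)}`, as a family of
coefficients indexed by the Haar support `τ(s)`. -/
def rearrCoef (τ : DyadicI → DyadicI) (p : ℝ) (s : Finset DyadicI) (x : DyadicI → X) :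
    DyadicI → X :=
  fun J => ∑ I ∈ s, if τ I = J then ((len I / len (τ I)) ^ (1 / p)) • x I else 0

/-- The scalar dyadic square function `S(f) = (∑_I a_I² 1_I)^{1/2}`
of `f = ∑_{I ∈ s} a_I h_I`. -/
def sqFnS (s : Finset DyadicI) (a : DyadicI → ℝ) (t : ℝ) : ℝ :=
  Real.sqrt (∑ I ∈ s, a I ^ 2 * Set.indicator (toSet I) (fun _ => (1 : ℝ)) t)

/-- The scalar dyadic `H^p` (quasi-)norm `‖f‖_{H^p} = ‖S(f)‖_{L^p[0,1]}`. -/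
def HpNormS (p : ℝ) (s : Finset DyadicI) (a : DyadicI → ℝ) : ℝ :=
  (∫ t in Set.Icc (0 : ℝ) 1, sqFnS s a t ^ p) ^ (1 / p)

/-- The coefficients of the scalar rearrangement operator `T_{τ,p}` applied to
`f = ∑_{I ∈ s} a_I h_I`; `T_{τ,p}` is determined by
`T_{τ,p}(h_I/|I|^{1/p}) = h_{τ(I)}/|τ(I)|^{1/p}`. -/
def rearrCoefS (τ : DyadicI → DyadicI) (p : ℝ) (s : Finset DyadicI) (a : DyadicI → ℝ) :
    DyadicI → ℝ :=
  fun J => ∑ I ∈ s, if τ I = J then ((len I / len (τ I)) ^ (1 / p)) * a I else 0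

/-- The operator norm `‖T_{τ,p} ⊗ Id_X : H^p_X → H^p_X‖ ∈ [0,∞]`, computed as the
supremum over finitely supported `f` in the unit ball of `H^p_X`. -/
def hpOpNorm (τ : DyadicI → DyadicI) (p : ℝ) (X : Type*) [NormedAddCommGroup X]
    [NormedSpace ℝ X] : ℝ≥0∞ :=
  ⨆ (s : Finset DyadicI) (x : DyadicI → X) (_ : HpNormV p s x ≤ 1),
    ENNReal.ofReal (HpNormV p (s.image τ) (rearrCoef τ p s x))

/-- The scalar operator norm `‖T_{τ,p} : H^p → H^p‖ ∈ [0,∞]`. -/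
def hpOpNormS (τ : DyadicI → DyadicI) (p : ℝ) : ℝ≥0∞ :=
  ⨆ (s : Finset DyadicI) (a : DyadicI → ℝ) (_ : HpNormS p s a ≤ 1),
    ENNReal.ofReal (HpNormS p (s.image τ) (rearrCoefS τ p s a))

/-- For `H = τ(L)` (so that `σ(J) = I` for `J = τ(I)`, `I ∈ L`), the maximal function
`μ_H(t) = sup_{J ∈ H} (|σ(J)|/|J|) 1_J(t) = sup_{I ∈ L} (|I|/|τ(I)|) 1_{τ(I)}(t)`,
as an `[0,∞]`-valued function. -/
def muSet (τ : DyadicI → DyadicI) (L : Set DyadicI) (t : ℝ) : ℝ≥0∞ :=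
  ⨆ (I : DyadicI) (_ : I ∈ L),
    ENNReal.ofReal (len I / len (τ I) * Set.indicator (toSet (τ I)) (fun _ => (1 : ℝ)) t)

/-- For `H = τ(L)` with `L` finite, the (real-valued) maximal function
`μ_H(t) = max_{I ∈ L} (|I|/|τ(I)|) 1_{τ(I)}(t)`. -/
def muFin (τ : DyadicI → DyadicI) (L : Finset DyadicI) (t : ℝ) : ℝ :=
  ((L.sup fun I =>
    Real.toNNReal (len I / len (τ I) * Set.indicator (toSet (τ I)) (fun _ => (1 : ℝ)) t) : ℝ≥0) : ℝ)

/-- The point set `L* = ⋃_{I ∈ L} I` covered by a collection of dyadic intervals. -/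
def pointSet (L : Set DyadicI) : Set ℝ := ⋃ I ∈ L, toSet I

/-- The constant `C₁ = sup_{H ⊆ τ(D), H ≠ ∅} (1/|σ(H)*|) ∫₀¹ μ_H(t) dt`, where
nonempty collections `H ⊆ τ(D)` are parametrized as `H = τ(L)` for nonempty `L ⊆ D`,
so that `σ(H)* = L*`. -/
def Cone (τ : DyadicI → DyadicI) : ℝ≥0∞ :=
  ⨆ (L : Set DyadicI) (_ : L.Nonempty),
    (∫⁻ t in Set.Icc (0 : ℝ) 1, muSet τ L t) / volume (pointSet L)

/-- The square of the dyadic BMO norm of `g = ∑_{J ∈ s} a_J h_J`: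
`‖g‖_{BMO}² = sup_{I ∈ D} (1/|I|) ∑_{J ⊆ I} a_J² |J|`. -/
def bmoSq (s : Finset DyadicI) (a : DyadicI → ℝ) : ℝ≥0∞ :=
  ⨆ I : DyadicI, ENNReal.ofReal
    ((∑ J ∈ s.filter fun J => toSet J ⊆ toSet I, a J ^ 2 * len J) / len I)

/-- The coefficients of `S_σ(g)` for `g = ∑_{J ∈ s} a_J h_J`, where `σ = τ⁻¹` on `τ(D)`:
`S_σ(h_J) = h_{σ(J)}` for `J ∈ τ(D)` and `S_σ(h_J) = 0` otherwise, so that the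
coefficient of `h_K` in `S_σ(g)` is `a_{τ(K)}` if `τ(K) ∈ s`, and `0` otherwise. -/
def sSigmaCoef (τ : DyadicI → DyadicI) (s : Finset DyadicI) (a : DyadicI → ℝ) :
    DyadicI → ℝ :=
  fun K => if τ K ∈ s then a (τ K) else 0

/-- The Haar support of `S_σ(g)` for `g` with Haar support `s`:
`σ(s ∩ τ(D))`, i.e. the preimage under `τ` of `s`. -/
def sSigmaSupp (τ : DyadicI → DyadicI) (s : Finset DyadicI) : Finset DyadicI :=
  (s.filter fun J => J ∈ Set.range τ).image (Function.invFun τ)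

/-- The operator norm `‖S_σ‖_{BMO} ∈ [0,∞]` of `S_σ` with respect to the dyadic BMO
norm, computed over finitely supported Haar expansions. -/
def bmoOpNorm (τ : DyadicI → DyadicI) : ℝ≥0∞ :=
  ⨆ (s : Finset DyadicI) (a : DyadicI → ℝ) (_ : bmoSq s a ≤ 1),
    (bmoSq (sSigmaSupp τ s) (sSigmaCoef τ s a)) ^ (1 / 2 : ℝ)

/-- The Carleson constant `⟦C⟧ = sup_{I ∈ C} (1/|I|) ∑_{J ∈ C, J ⊆ I} |J| ∈ [0,∞]`
of a collection of dyadic intervals. -/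
def carleson (C : Set DyadicI) : ℝ≥0∞ :=
  ⨆ (I : DyadicI) (_ : I ∈ C),
    (∑' J : {J : DyadicI // J ∈ C ∧ toSet J ⊆ toSet I}, ENNReal.ofReal (len J.1)) /
      ENNReal.ofReal (len I)

/-- The `L^p_X = L^p([0,1]; X)` (Bochner) norm of `f = ∑_{I ∈ s} x_I h_I`. -/
def LpNormV (p : ℝ) (s : Finset DyadicI) (x : DyadicI → X) : ℝ :=
  (∫ t in Set.Icc (0 : ℝ) 1, ‖∑ I ∈ s, haar I t • x I‖ ^ p) ^ (1 / p)

/-- The operator norm `‖T_{τ,p} ⊗ Id_X : L^p_X → L^p_X‖ ∈ [0,∞]`, computed over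
finitely supported Haar expansions. -/
def lpOpNorm (τ : DyadicI → DyadicI) (p : ℝ) (X : Type*) [NormedAddCommGroup X]
    [NormedSpace ℝ X] : ℝ≥0∞ :=
  ⨆ (s : Finset DyadicI) (x : DyadicI → X) (_ : LpNormV p s x ≤ 1),
    ENNReal.ofReal (LpNormV p (s.image τ) (rearrCoef τ p s x))

/-- The operator norm `‖T_{τ,p}^{-1} ⊗ Id_X‖ ∈ [0,∞]` on the span of
`{h_J : J ∈ τ(D)}` with the `L^p_X` norm: the map determined by
`x h_{τ(I)}/|τ(I)|^{1/p} ↦ x h_I/|I|^{1/p}`, i.e. sending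
`g = ∑_{I ∈ L} x_I h_{τ(I)}` to `∑_{I ∈ L} (|τ(I)|/|I|)^{1/p} x_I h_I`. -/
def lpInvOpNorm (τ : DyadicI → DyadicI) (p : ℝ) (X : Type*) [NormedAddCommGroup X]
    [NormedSpace ℝ X] : ℝ≥0∞ :=
  ⨆ (L : Finset DyadicI) (x : DyadicI → X)
    (_ : LpNormV p (L.image τ) (fun J => ∑ I ∈ L, if τ I = J then x I else 0) ≤ 1),
    ENNReal.ofReal (LpNormV p L fun I => ((len (τ I) / len I) ^ (1 / p)) • x I)

/-- The operator norm `‖T_{τ,1}^{-1}‖₁ ∈ [0,∞]` on the span of `{h_J : J ∈ τ(D)}`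
with the dyadic `H¹` norm: the map determined by `h_{τ(I)}/|τ(I)| ↦ h_I/|I|`,
i.e. sending `g = ∑_{I ∈ L} a_I h_{τ(I)}` to `∑_{I ∈ L} (|τ(I)|/|I|) a_I h_I`. -/
def h1InvOpNorm (τ : DyadicI → DyadicI) : ℝ≥0∞ :=
  ⨆ (L : Finset DyadicI) (a : DyadicI → ℝ)
    (_ : HpNormS 1 (L.image τ) (fun J => ∑ I ∈ L, if τ I = J then a I else 0) ≤ 1),
    ENNReal.ofReal (HpNormS 1 L fun I => (len (τ I) / len I) * a I)

/-- The Rademacher average `(E_ε ‖∑_{i<n} ε_i a_i‖^p)^{1/p}` over all choices of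
signs `ε_i ∈ {±1}`. -/
def radAvg (p : ℝ) {Y : Type*} [NormedAddCommGroup Y] [NormedSpace ℝ Y] (n : ℕ)
    (a : Fin n → Y) : ℝ :=
  ((∑ ε : Fin n → Bool, ‖∑ i, (if ε i then (1 : ℝ) else -1) • a i‖ ^ p) / 2 ^ n) ^ (1 / p)

/-- The type-`p` constant `Type_p(Y) ∈ [0,∞]`: the least `C` such that
`(E_ε ‖∑ ε_i a_i‖^p)^{1/p} ≤ C (∑ ‖a_i‖^p)^{1/p}` for all finite families in `Y`. -/
def typeConst (p : ℝ) (Y : Type*) [NormedAddCommGroup Y] [NormedSpace ℝ Y] : ℝ≥0∞ :=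
  sInf {C : ℝ≥0∞ | ∀ (n : ℕ) (a : Fin n → Y),
    ENNReal.ofReal (radAvg p n a) ≤ C * ENNReal.ofReal ((∑ i, ‖a i‖ ^ p) ^ (1 / p))}

/-- The UMD property of a Banach space `E`: for each `1 < r < ∞` the Haar system is
unconditional in `L^r_E`. -/
def IsUMD (E : Type*) [NormedAddCommGroup E] [NormedSpace ℝ E] : Prop :=
  ∀ r : ℝ, 1 < r → ∃ β : ℝ, ∀ (s : Finset DyadicI) (x : DyadicI → E) (ε : DyadicI → ℝ),
    (∀ I, ε I = 1 ∨ ε I = -1) →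
    LpNormV r s (fun I => ε I • x I) ≤ β * LpNormV r s x

/-- `B` is a block in `L` with top `I`: `B ⊆ L`, `I` is the unique maximal interval
of `B`, and `B` is order-convex in `L` between its elements and `I`. -/
def IsBlock (L : Set DyadicI) (B : Set DyadicI) (I : DyadicI) : Prop :=
  B ⊆ L ∧ I ∈ B ∧ (∀ J ∈ B, toSet J ⊆ toSet I) ∧
    ∀ J ∈ B, ∀ K ∈ L, toSet J ⊆ toSet K → toSet K ⊆ toSet I → K ∈ B

/-- `G₁(K | E)`: the maximal dyadic intervals of `E` strictly contained in `K`. -/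
def gen1 (K : DyadicI) (E : Set DyadicI) : Set DyadicI :=
  {J | J ∈ E ∧ toSet J ⊂ toSet K ∧
    ∀ J' ∈ E, toSet J' ⊂ toSet K → toSet J ⊆ toSet J' → J' = J}

end Defs


section RTHelpers
open DyadicI

namespace RT

/-! ### Averages over the leaves of the dyadic tree -/

def av (N : ℕ) (φ : ℕ → ℝ) : ℝ := (∑ j ∈ Finset.range (2 ^ N), φ j) / 2 ^ N

lemma sum_two (n : ℕ) (φ : ℕ → ℝ) :
    ∑ j ∈ Finset.range (2 * n), φ j = ∑ j ∈ Finset.range n, (φ (2 * j) + φ (2 * j + 1)) := by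
  induction n with
  | zero => simp
  | succ n ih =>
    rw [show 2 * (n + 1) = 2 * n + 1 + 1 by ring, Finset.sum_range_succ, Finset.sum_range_succ, ih,
      Finset.sum_range_succ]
    ring

lemma av_succ (N : ℕ) (φ : ℕ → ℝ) :
    av (N + 1) φ = av N (fun j => (φ (2 * j) + φ (2 * j + 1)) / 2) := by
  unfold av
  rw [pow_succ, mul_comm (2 ^ N) 2, sum_two, ← Finset.sum_div, pow_succ]
  field_simp

lemma half_even (j : ℕ) : (2 * j) / 2 = j := by omega
lemma half_odd (j : ℕ) : (2 * j + 1) / 2 = j := by omega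

lemma av_half (N : ℕ) (φ : ℕ → ℝ) : av (N + 1) (fun c => φ (c / 2)) = av N φ := by
  rw [av_succ]
  simp only [half_even, half_odd, add_self_div_two]

lemma av_mono {N : ℕ} {φ ψ : ℕ → ℝ} (h : ∀ j < 2 ^ N, φ j ≤ ψ j) : av N φ ≤ av N ψ := by
  unfold av
  gcongr with j hj
  exact h j (Finset.mem_range.1 hj)

lemma av_congr {N : ℕ} {φ ψ : ℕ → ℝ} (h : ∀ j < 2 ^ N, φ j = ψ j) : av N φ = av N ψ := by
  unfold av
  rw [Finset.sum_congr rfl fun j hj => h j (Finset.mem_range.1 hj)]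

lemma av_nonneg {N : ℕ} {φ : ℕ → ℝ} (h : ∀ j, 0 ≤ φ j) : 0 ≤ av N φ := by
  unfold av
  exact div_nonneg (Finset.sum_nonneg fun j _ => h j) (by positivity)

lemma av_add (N : ℕ) (φ ψ : ℕ → ℝ) : av N (fun j => φ j + ψ j) = av N φ + av N ψ := by
  unfold av
  rw [Finset.sum_add_distrib, add_div]

lemma av_sub (N : ℕ) (φ ψ : ℕ → ℝ) : av N (fun j => φ j - ψ j) = av N φ - av N ψ := by
  unfold av
  rw [Finset.sum_sub_distrib, sub_div]

lemma av_mul (N : ℕ) (a : ℝ) (φ : ℕ → ℝ) : av N (fun j => a * φ j) = a * av N φ := by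
  unfold av
  rw [← Finset.mul_sum, mul_div_assoc]

lemma av_const (N : ℕ) (a : ℝ) : av N (fun _ => a) = a := by
  unfold av
  simp

lemma av_sum {ι : Type*} (N : ℕ) (L : Finset ι) (φ : ι → ℕ → ℝ) :
    av N (fun j => ∑ i ∈ L, φ i j) = ∑ i ∈ L, av N (φ i) := by
  unfold av
  rw [Finset.sum_comm, Finset.sum_div]

lemma av_holder {N : ℕ} {p q : ℝ} (hpq : p.HolderConjugate q) {φ ψ : ℕ → ℝ}
    (hφ : ∀ j, 0 ≤ φ j) (hψ : ∀ j, 0 ≤ ψ j) :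
    av N (fun j => φ j * ψ j) ≤
      av N (fun j => φ j ^ p) ^ (1 / p) * av N (fun j => ψ j ^ q) ^ (1 / q) := by
  unfold av
  have h := Real.inner_le_Lp_mul_Lq_of_nonneg (Finset.range (2 ^ N)) (f := φ) (g := ψ) hpq
    (fun j _ => hφ j) (fun j _ => hψ j)
  have e : (2 : ℝ) ^ N = ((2 : ℝ) ^ N) ^ (1 / p) * ((2 : ℝ) ^ N) ^ (1 / q) := by
    rw [← Real.rpow_add (by positivity)]
    have := hpq.inv_add_inv_eq_one
    rw [one_div, one_div, this, Real.rpow_one]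
  have h1 : 0 ≤ ∑ j ∈ Finset.range (2 ^ N), φ j ^ p :=
    Finset.sum_nonneg fun j _ => Real.rpow_nonneg (hφ j) _
  have h2 : 0 ≤ ∑ j ∈ Finset.range (2 ^ N), ψ j ^ q :=
    Finset.sum_nonneg fun j _ => Real.rpow_nonneg (hψ j) _
  rw [Real.div_rpow h1 (by positivity), Real.div_rpow h2 (by positivity), div_mul_div_comm, ← e]
  gcongr

/-- Hölder with `av (φ^a ψ^b)`, `a + b = 1`. -/
lemma av_holder' {N : ℕ} {a b : ℝ} (ha : 0 < a) (hb : 0 < b) (hab : a + b = 1) {φ ψ : ℕ → ℝ}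
    (hφ : ∀ j, 0 ≤ φ j) (hψ : ∀ j, 0 ≤ ψ j) :
    av N (fun j => φ j ^ a * ψ j ^ b) ≤ av N φ ^ a * av N ψ ^ b := by
  have hpq : (1 / a).HolderConjugate (1 / b) := by
    rw [Real.holderConjugate_iff]
    refine ⟨?_, ?_⟩
    · rw [lt_div_iff₀ ha]; linarith
    · simpa using hab
  have := av_holder (N := N) hpq (φ := fun j => φ j ^ a) (ψ := fun j => ψ j ^ b)
    (fun j => Real.rpow_nonneg (hφ j) _) (fun j => Real.rpow_nonneg (hψ j) _)
  simp only [one_div_one_div, ← Real.rpow_mul (hφ _), ← Real.rpow_mul (hψ _),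
    mul_one_div_cancel ha.ne', mul_one_div_cancel hb.ne', Real.rpow_one] at this
  exact this

lemma selfimp {Q R K a : ℝ} (ha : 0 < a) (hQ : 0 ≤ Q) (hR : 0 ≤ R) (hK : 0 ≤ K)
    (h : Q ≤ K * R ^ a * Q ^ (1 - a)) : Q ≤ K ^ (1 / a) * R := by
  rcases hQ.eq_or_lt with h0 | h0
  · rw [← h0]; positivity
  have h1 : Q ^ a ≤ K * R ^ a := by
    have e : Q = Q ^ a * Q ^ (1 - a) := by
      rw [← Real.rpow_add h0]; simp
    have : Q ^ a * Q ^ (1 - a) ≤ K * R ^ a * Q ^ (1 - a) := by rw [← e]; exact h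
    exact le_of_mul_le_mul_right this (Real.rpow_pos_of_pos h0 _)
  have h2 := Real.rpow_le_rpow (by positivity) h1 (show 0 ≤ 1 / a by positivity)
  rw [Real.mul_rpow hK (by positivity), ← Real.rpow_mul hQ, ← Real.rpow_mul hR,
    mul_one_div_cancel ha.ne', Real.rpow_one, Real.rpow_one] at h2
  exact h2

lemma conv_half {p a b : ℝ} (hp : 1 ≤ p) (ha : 0 ≤ a) (hb : 0 ≤ b) :
    ((a + b) / 2) ^ p ≤ (a ^ p + b ^ p) / 2 := by
  have := (convexOn_rpow hp).2 (show a ∈ Ici 0 from ha) (show b ∈ Ici 0 from hb)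
    (show (0 : ℝ) ≤ 1 / 2 by norm_num) (show (0 : ℝ) ≤ 1 / 2 by norm_num) (by norm_num)
  simp only [smul_eq_mul] at this
  rw [show (a + b) / 2 = 1 / 2 * a + 1 / 2 * b by ring]
  linarith

/-! ### Tree recursions -/

section
variable {E : Type*} [NormedAddCommGroup E] [NormedSpace ℝ E]

def sg (c : ℕ) : ℝ := if c % 2 = 0 then 1 else -1

lemma sg_even (j : ℕ) : sg (2 * j) = 1 := by simp [sg]
lemma sg_odd (j : ℕ) : sg (2 * j + 1) = -1 := by simp [sg]
lemma abs_sg (j : ℕ) : |sg j| = 1 := by unfold sg; split_ifs <;> simp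

/-- Signed (Haar) sums along the tree. -/
def F (X : ℕ → ℕ → E) : ℕ → ℕ → E
  | 0, _ => 0
  | n + 1, c => F X n (c / 2) + sg c • X n (c / 2)

/-- Unsigned sums along the tree. -/
def G (W : ℕ → ℕ → ℝ) : ℕ → ℕ → ℝ
  | 0, _ => 0
  | n + 1, c => G W n (c / 2) + W n (c / 2)

/-- Maxima along the tree. -/
def Mx (m : ℕ → ℕ → ℝ) : ℕ → ℕ → ℝ
  | 0, _ => 0
  | n + 1, c => max (Mx m n (c / 2)) (m n (c / 2))

def rm (m : ℕ → ℕ → ℝ) (n j : ℕ) : ℝ := max (Mx m n j) (m n j)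

lemma F_zero (X : ℕ → ℕ → E) (c : ℕ) : F X 0 c = 0 := rfl
lemma F_succ (X : ℕ → ℕ → E) (n c : ℕ) :
    F X (n + 1) c = F X n (c / 2) + sg c • X n (c / 2) := rfl
lemma G_succ (X : ℕ → ℕ → ℝ) (n c : ℕ) :
    G X (n + 1) c = G X n (c / 2) + X n (c / 2) := rfl
lemma Mx_succ (m : ℕ → ℕ → ℝ) (n c : ℕ) : Mx m (n + 1) c = rm m n (c / 2) := rfl
lemma rm_succ (m : ℕ → ℕ → ℝ) (n c : ℕ) :
    rm m (n + 1) c = max (rm m n (c / 2)) (m (n + 1) c) := rfl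

lemma F_even (X : ℕ → ℕ → E) (n j : ℕ) : F X (n + 1) (2 * j) = F X n j + X n j := by
  rw [F_succ, half_even, sg_even, one_smul]
lemma F_odd (X : ℕ → ℕ → E) (n j : ℕ) : F X (n + 1) (2 * j + 1) = F X n j - X n j := by
  rw [F_succ, half_odd, sg_odd, neg_one_smul, sub_eq_add_neg]

lemma half_lt {n c : ℕ} (h : c < 2 ^ (n + 1)) : c / 2 < 2 ^ n := by
  rw [pow_succ] at h; omega

lemma F_congr {X Y : ℕ → ℕ → E} {N : ℕ} (h : ∀ n < N, ∀ j < 2 ^ n, X n j = Y n j) :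
    ∀ n ≤ N, ∀ c < 2 ^ n, F X n c = F Y n c := by
  intro n
  induction n with
  | zero => intros; rfl
  | succ n ih =>
    intro hn c hc
    rw [F_succ, F_succ, ih (by omega) _ (half_lt hc), h n (by omega) _ (half_lt hc)]

lemma F_add (X Y : ℕ → ℕ → E) (a b : ℝ) (n c : ℕ) :
    F (fun n j => a • X n j + b • Y n j) n c = a • F X n c + b • F Y n c := by
  induction n generalizing c with
  | zero => simp [F]
  | succ n ih => rw [F_succ, F_succ, F_succ, ih]; module

lemma F_map {E' : Type*} [NormedAddCommGroup E'] [NormedSpace ℝ E'] (T : E →ₗ[ℝ] E')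
    (X : ℕ → ℕ → E) (n c : ℕ) : T (F X n c) = F (fun n j => T (X n j)) n c := by
  induction n generalizing c with
  | zero => simp [F]
  | succ n ih => rw [F_succ, F_succ, map_add, ih, map_smul]

/-- `p`-th power of the `L^p` norm. -/
def nm (p : ℝ) (N : ℕ) (X : ℕ → ℕ → E) : ℝ := av N (fun c => ‖F X N c‖ ^ p)

lemma nm_nonneg (p : ℝ) (N : ℕ) (X : ℕ → ℕ → E) : 0 ≤ nm p N X :=
  av_nonneg fun _ => Real.rpow_nonneg (norm_nonneg _) _

lemma nm_congr {p : ℝ} {N : ℕ} {X Y : ℕ → ℕ → E} (h : ∀ n < N, ∀ j < 2 ^ n, X n j = Y n j) :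
    nm p N X = nm p N Y :=
  av_congr fun c hc => by rw [F_congr h N le_rfl c hc]

lemma Mx_nonneg (m : ℕ → ℕ → ℝ) (n c : ℕ) : 0 ≤ Mx m n c := by
  induction n generalizing c with
  | zero => exact le_rfl
  | succ n ih => exact le_max_of_le_left (ih _)

lemma rm_nonneg (m : ℕ → ℕ → ℝ) (n c : ℕ) : 0 ≤ rm m n c := le_max_of_le_left (Mx_nonneg _ _ _)

lemma Mx_mono {a b : ℕ → ℕ → ℝ} (h : ∀ n j, a n j ≤ b n j) (n c : ℕ) : Mx a n c ≤ Mx b n c := by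
  induction n generalizing c with
  | zero => exact le_rfl
  | succ n ih => exact max_le_max (ih _) (h _ _)

lemma rpow_max' {x y e : ℝ} (hx : 0 ≤ x) (hy : 0 ≤ y) (he : 0 < e) :
    max x y ^ e = max (x ^ e) (y ^ e) := by
  rcases le_total x y with h | h
  · rw [max_eq_right h, max_eq_right (Real.rpow_le_rpow hx h he.le)]
  · rw [max_eq_left h, max_eq_left (Real.rpow_le_rpow hy h he.le)]

lemma Mx_rpow {a : ℕ → ℕ → ℝ} (h : ∀ n j, 0 ≤ a n j) {e : ℝ} (he : 0 < e) (n c : ℕ) :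
    Mx (fun n j => a n j ^ e) n c = Mx a n c ^ e := by
  induction n generalizing c with
  | zero => simp [Mx, Real.zero_rpow he.ne']
  | succ n ih => simp only [Mx]; rw [ih, rpow_max' (Mx_nonneg _ _ _) (h _ _) he]

lemma G_nonneg {W : ℕ → ℕ → ℝ} (h : ∀ n j, 0 ≤ W n j) (n c : ℕ) : 0 ≤ G W n c := by
  induction n generalizing c with
  | zero => exact le_rfl
  | succ n ih => exact add_nonneg (ih _) (h _ _)

/-! ### The Doob maximal inequality -/

lemma doob_aux {p x y : ℝ} (hp : 1 < p) (hx : 0 ≤ x) (hxy : x ≤ y) :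
    y ^ p - x ^ p ≤ p / (p - 1) * ((y ^ (p - 1) - x ^ (p - 1)) * y) := by
  have hp1 : 0 < p - 1 := by linarith
  have hy : 0 ≤ y := hx.trans hxy
  have h := Real.geom_mean_le_arith_mean2_weighted (w₁ := (p - 1) / p) (w₂ := 1 / p)
    (p₁ := x ^ p) (p₂ := y ^ p) (by positivity) (by positivity) (by positivity) (by positivity)
    (by field_simp; ring)
  rw [← Real.rpow_mul hx, ← Real.rpow_mul hy] at h
  have e1 : p * ((p - 1) / p) = p - 1 := by field_simp
  have e2 : p * (1 / p) = 1 := by field_simp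
  rw [e1, e2, Real.rpow_one] at h
  have e3 : y ^ p = y ^ (p - 1) * y := by
    rcases hy.eq_or_lt with h0 | h0
    · rw [← h0, Real.zero_rpow (by linarith)]; simp
    · rw [← Real.rpow_add_one h0.ne']; simp
  rw [div_mul_eq_mul_div, le_div_iff₀ hp1, sub_mul (y ^ (p - 1)), ← e3]
  have : (p - 1) / p * x ^ p + 1 / p * y ^ p = ((p - 1) * x ^ p + y ^ p) / p := by
    field_simp
  rw [this, le_div_iff₀ (by linarith)] at h
  nlinarith

lemma doob_step {u : ℕ → ℕ → ℝ} (hu : ∀ n j, 0 ≤ u n j)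
    (hsub : ∀ n j, u n j ≤ (u (n + 1) (2 * j) + u (n + 1) (2 * j + 1)) / 2) {p : ℝ} (hp : 1 < p)
    (n : ℕ) :
    av n (fun j => rm u n j ^ p) ≤ p / (p - 1) * av n (fun j => rm u n j ^ (p - 1) * u n j) := by
  have hp1 : 0 < p - 1 := by linarith
  induction n with
  | zero =>
    have e : ∀ j, rm u 0 j = u 0 j := fun j => max_eq_right (hu _ _)
    simp only [e]
    rw [← av_mul]
    refine av_mono fun j _ => ?_
    have := doob_aux hp le_rfl (hu 0 j)
    rw [Real.zero_rpow (by linarith), Real.zero_rpow (by linarith)] at this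
    simpa using this
  | succ n ih =>
    have key : ∀ c, rm u (n + 1) c ^ p - rm u n (c / 2) ^ p ≤
        p / (p - 1) * ((rm u (n + 1) c ^ (p - 1) - rm u n (c / 2) ^ (p - 1)) * u (n + 1) c) := by
      intro c
      rw [rm_succ]
      rcases le_total (u (n + 1) c) (rm u n (c / 2)) with h | h
      · rw [max_eq_left h]; simp
      · rw [max_eq_right h]
        exact doob_aux hp (rm_nonneg _ _ _) h
    have h1 := av_mono (N := n + 1) (fun c _ => key c)
    rw [av_sub, av_mul, av_half n (fun c => rm u n c ^ p)] at h1
    simp only [sub_mul] at h1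
    rw [av_sub] at h1
    have h2 : av n (fun j => rm u n j ^ (p - 1) * u n j) ≤
        av (n + 1) (fun c => rm u n (c / 2) ^ (p - 1) * u (n + 1) c) := by
      rw [av_succ]
      refine av_mono fun j _ => ?_
      simp only [half_even, half_odd]
      have := mul_le_mul_of_nonneg_left (hsub n j) (Real.rpow_nonneg (rm_nonneg u n j) (p - 1))
      linarith
    have h3 := mul_le_mul_of_nonneg_left h2 (show 0 ≤ p / (p - 1) by positivity)
    linarith [mul_sub (p / (p - 1)) (av (n + 1) fun c => rm u (n + 1) c ^ (p - 1) * u (n + 1) c)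
      (av (n + 1) fun c => rm u n (c / 2) ^ (p - 1) * u (n + 1) c)]

lemma doob {u : ℕ → ℕ → ℝ} (hu : ∀ n j, 0 ≤ u n j)
    (hsub : ∀ n j, u n j ≤ (u (n + 1) (2 * j) + u (n + 1) (2 * j + 1)) / 2) {p : ℝ} (hp : 1 < p)
    (n : ℕ) :
    av n (fun j => rm u n j ^ p) ≤ (p / (p - 1)) ^ p * av n (fun j => u n j ^ p) := by
  have hp1 : 0 < p - 1 := by linarith
  have hpp : 0 < p := by linarith
  have h := doob_step hu hsub hp n
  have h2 := av_holder' (N := n) (a := (p - 1) / p) (b := 1 / p) (by positivity) (by positivity)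
    (by field_simp; ring) (φ := fun j => rm u n j ^ p) (ψ := fun j => u n j ^ p)
    (fun j => Real.rpow_nonneg (rm_nonneg _ _ _) _) (fun j => Real.rpow_nonneg (hu _ _) _)
  have e1 : p * ((p - 1) / p) = p - 1 := by field_simp
  have e2 : p * (1 / p) = 1 := by field_simp
  simp only [← Real.rpow_mul (rm_nonneg u n _), ← Real.rpow_mul (hu n _), e1, e2,
    Real.rpow_one] at h2
  have := selfimp (a := 1 / p) (by positivity)
    (av_nonneg fun j => Real.rpow_nonneg (rm_nonneg u n j) p)
    (av_nonneg (N := n) fun j => Real.rpow_nonneg (hu n j) p)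
    (show 0 ≤ p / (p - 1) by positivity) (by
      refine h.trans ?_
      rw [mul_assoc, show 1 - 1 / p = (p - 1) / p by field_simp]
      refine mul_le_mul_of_nonneg_left ?_ (by positivity)
      rw [mul_comm (_ ^ (1 / p))]
      exact h2)
  rwa [one_div_one_div] at this

lemma doob_F {p : ℝ} (hp : 1 < p) (N : ℕ) (X : ℕ → ℕ → E) :
    av N (fun j => rm (fun n j => ‖F X n j‖) N j ^ p) ≤ (p / (p - 1)) ^ p * nm p N X := by
  refine doob (u := fun n j => ‖F X n j‖) (fun _ _ => norm_nonneg _) (fun n j => ?_) hp N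
  rw [F_even, F_odd]
  have := norm_add_le (F X n j + X n j) (F X n j - X n j)
  rw [show F X n j + X n j + (F X n j - X n j) = (2 : ℝ) • F X n j by module, norm_smul] at this
  norm_num at this
  linarith

/-- one-step-ahead average norm -/
def uu (X : ℕ → ℕ → E) (n j : ℕ) : ℝ := (‖F X n j + X n j‖ + ‖F X n j - X n j‖) / 2

def A (X : ℕ → ℕ → E) (n j : ℕ) : ℝ := rm (uu X) n j

lemma uu_nonneg (X : ℕ → ℕ → E) (n j : ℕ) : 0 ≤ uu X n j := by unfold uu; positivity

lemma F_le_uu (X : ℕ → ℕ → E) (n j : ℕ) : ‖F X n j‖ ≤ uu X n j := by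
  have := norm_add_le (F X n j + X n j) (F X n j - X n j)
  rw [show F X n j + X n j + (F X n j - X n j) = (2 : ℝ) • F X n j by module, norm_smul] at this
  norm_num at this
  unfold uu
  linarith

lemma X_le_uu (X : ℕ → ℕ → E) (n j : ℕ) : ‖X n j‖ ≤ uu X n j := by
  have := norm_sub_le (F X n j + X n j) (F X n j - X n j)
  rw [show F X n j + X n j - (F X n j - X n j) = (2 : ℝ) • X n j by module, norm_smul] at this
  norm_num at this
  unfold uu
  linarith

lemma uu_le_A (X : ℕ → ℕ → E) (n j : ℕ) : uu X n j ≤ A X n j := le_max_right _ _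
lemma A_nonneg (X : ℕ → ℕ → E) (n j : ℕ) : 0 ≤ A X n j := rm_nonneg _ _ _

lemma A_succ (X : ℕ → ℕ → E) (n j : ℕ) : A X n (j / 2) ≤ A X (n + 1) j := le_max_left _ _

lemma F_succ_le_A (X : ℕ → ℕ → E) (n c : ℕ) : ‖F X (n + 1) c‖ ≤ 2 * A X n (c / 2) := by
  rw [F_succ]
  refine (norm_add_le _ _).trans ?_
  rw [norm_smul, Real.norm_eq_abs, abs_sg, one_mul]
  have := F_le_uu X n (c / 2)
  have := X_le_uu X n (c / 2)
  have := uu_le_A X n (c / 2)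
  linarith

lemma av_A {p : ℝ} (hp : 1 < p) (N : ℕ) (X : ℕ → ℕ → E) :
    av N (fun j => A X N j ^ p) ≤ (p / (p - 1)) ^ p * nm p (N + 1) X := by
  have hp1 : 0 < p - 1 := by linarith
  refine (doob (u := uu X) (uu_nonneg X) (fun n j => ?_) hp N).trans ?_
  · have h1 := F_le_uu X (n + 1) (2 * j)
    have h2 := F_le_uu X (n + 1) (2 * j + 1)
    rw [F_even] at h1
    rw [F_odd] at h2
    have : uu X n j = (‖F X n j + X n j‖ + ‖F X n j - X n j‖) / 2 := rfl
    linarith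
  · refine mul_le_mul_of_nonneg_left ?_ (by positivity)
    unfold nm
    rw [av_succ]
    refine av_mono fun j _ => ?_
    rw [F_even, F_odd]
    exact conv_half hp.le (norm_nonneg _) (norm_nonneg _)

lemma Mx_A (X : ℕ → ℕ → E) (n c : ℕ) : Mx (A X) (n + 1) c = A X n (c / 2) := by
  induction n generalizing c with
  | zero => exact max_eq_right (A_nonneg _ _ _)
  | succ n ih =>
    change max (Mx (A X) (n + 1) (c / 2)) (A X (n + 1) (c / 2)) = _
    rw [ih]
    exact max_eq_right (A_succ _ _ _)

end
end RT

namespace RT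
section
variable {E : Type*} [NormedAddCommGroup E] [NormedSpace ℝ E]

/-! ### Garling type factorization -/

lemma garling_aux {θ a b : ℝ} (h0 : 0 < θ) (h1 : θ < 1) (ha : 0 ≤ a) (hab : a ≤ b) :
    |a ^ (-θ) - b ^ (-θ)| * a ≤ θ / (1 - θ) * (b ^ (1 - θ) - a ^ (1 - θ)) := by
  have h1' : 0 < 1 - θ := by linarith
  rcases ha.eq_or_lt with h | h
  · rw [← h, Real.zero_rpow h1'.ne']
    have : 0 ≤ b ^ (1 - θ) := Real.rpow_nonneg (ha.trans hab) _
    simp only [mul_zero, sub_zero]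
    positivity
  have hb : 0 < b := h.trans_le hab
  have hle : b ^ (-θ) ≤ a ^ (-θ) := Real.rpow_le_rpow_of_nonpos h hab (by linarith)
  rw [abs_of_nonneg (by linarith), sub_mul]
  have e1 : a ^ (-θ) * a = a ^ (1 - θ) := by
    rw [← Real.rpow_add_one h.ne']; congr 1; ring
  have am := Real.geom_mean_le_arith_mean2_weighted h1'.le h0.le ha hb.le (by ring)
  have e2 : b ^ (-θ) * b = b ^ (1 - θ) := by
    rw [← Real.rpow_add_one hb.ne']; congr 1; ring
  have e3 : b ^ (-θ) * b ^ θ = 1 := by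
    rw [← Real.rpow_add hb]; simp
  have am2 := mul_le_mul_of_nonneg_left am (Real.rpow_nonneg hb.le (-θ))
  have e4 : b ^ (-θ) * (a ^ (1 - θ) * b ^ θ) = a ^ (1 - θ) := by
    rw [mul_left_comm, e3, mul_one]
  rw [e4] at am2
  rw [e1, div_mul_eq_mul_div, le_div_iff₀ h1']
  have e5 : b ^ (-θ) * ((1 - θ) * a + θ * b) = (1 - θ) * (b ^ (-θ) * a) + θ * b ^ (1 - θ) := by
    rw [← e2]; ring
  rw [e5] at am2
  nlinarith

lemma garling_pt {θ : ℝ} (h0 : 0 < θ) (h1 : θ < 1) (X : ℕ → ℕ → E) (n c : ℕ) :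
    ‖F (fun n j => A X n j ^ (-θ) • X n j) (n + 1) c - A X n (c / 2) ^ (-θ) • F X (n + 1) c‖ ≤
      2 * (θ / (1 - θ)) * A X n (c / 2) ^ (1 - θ) := by
  have h1' : 0 < 1 - θ := by linarith
  induction n generalizing c with
  | zero =>
    rw [F_succ, F_succ, F_zero, F_zero, zero_add, zero_add, smul_comm, sub_self, norm_zero]
    have := Real.rpow_nonneg (A_nonneg X 0 (c / 2)) (1 - θ)
    positivity
  | succ n ih =>
    have e : F (fun n j => A X n j ^ (-θ) • X n j) (n + 1 + 1) c
        - A X (n + 1) (c / 2) ^ (-θ) • F X (n + 1 + 1) c =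
        (F (fun n j => A X n j ^ (-θ) • X n j) (n + 1) (c / 2)
          - A X n (c / 2 / 2) ^ (-θ) • F X (n + 1) (c / 2)) +
        (A X n (c / 2 / 2) ^ (-θ) - A X (n + 1) (c / 2) ^ (-θ)) • F X (n + 1) (c / 2) := by
      rw [F_succ (n := n + 1), F_succ X (n + 1)]
      module
    rw [e]
    refine (norm_add_le _ _).trans ?_
    rw [norm_smul, Real.norm_eq_abs]
    have a1 := ih (c / 2)
    have a2 := garling_aux h0 h1 (A_nonneg X n (c / 2 / 2)) (A_succ X n (c / 2))
    have a3 := mul_le_mul_of_nonneg_left (F_succ_le_A X n (c / 2))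
      (abs_nonneg (A X n (c / 2 / 2) ^ (-θ) - A X (n + 1) (c / 2) ^ (-θ)))
    nlinarith

lemma garling_pt' {θ : ℝ} (h0 : 0 < θ) (h1 : θ < 1) (X : ℕ → ℕ → E) (n c : ℕ) :
    ‖F (fun n j => A X n j ^ (-θ) • X n j) (n + 1) c‖ ≤
      2 / (1 - θ) * A X n (c / 2) ^ (1 - θ) := by
  have h1' : 0 < 1 - θ := by linarith
  have h := garling_pt h0 h1 X n c
  have h2 : ‖A X n (c / 2) ^ (-θ) • F X (n + 1) c‖ ≤ 2 * A X n (c / 2) ^ (1 - θ) := by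
    rw [norm_smul, Real.norm_eq_abs, abs_of_nonneg (Real.rpow_nonneg (A_nonneg _ _ _) _)]
    have h3 := mul_le_mul_of_nonneg_left (F_succ_le_A X n c)
      (Real.rpow_nonneg (A_nonneg X n (c / 2)) (-θ))
    refine h3.trans (le_of_eq ?_)
    rcases (A_nonneg X n (c / 2)).eq_or_lt with h | h
    · rw [← h, Real.zero_rpow h1'.ne']; simp
    · rw [mul_left_comm, ← Real.rpow_add_one h.ne']
      congr 2; ring
  have h4 := norm_add_le (F (fun n j => A X n j ^ (-θ) • X n j) (n + 1) c
    - A X n (c / 2) ^ (-θ) • F X (n + 1) c) (A X n (c / 2) ^ (-θ) • F X (n + 1) c)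
  rw [sub_add_cancel] at h4
  have e : 2 / (1 - θ) * A X n (c / 2) ^ (1 - θ) =
      2 * (θ / (1 - θ)) * A X n (c / 2) ^ (1 - θ) + 2 * A X n (c / 2) ^ (1 - θ) := by
    field_simp; ring
  linarith

/-- Domain side of the extrapolation. -/
lemma garling {p q : ℝ} (hq : 1 < q) (hqp : q < p) : ∃ K : ℝ, 0 ≤ K ∧
    ∀ (N : ℕ) (X : ℕ → ℕ → E),
      nm p (N + 1) (fun n j => A X n j ^ (-(1 - q / p)) • X n j) ≤ K * nm q (N + 1) X := by
  have hp : 0 < p := by linarith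
  have hq0 : 0 < q := by linarith
  have h0 : 0 < 1 - q / p := by
    have : q / p < 1 := by rw [div_lt_one hp]; exact hqp
    linarith
  have h1 : 1 - q / p < 1 := by
    have : 0 < q / p := by positivity
    linarith
  have hK : 0 < q / p := by positivity
  have hq1 : 0 < q - 1 := by linarith
  refine ⟨(2 / (q / p)) ^ p * (q / (q - 1)) ^ q, by positivity, fun N X => ?_⟩
  have : nm p (N + 1) (fun n j => A X n j ^ (-(1 - q / p)) • X n j) ≤
      av (N + 1) (fun c => (2 / (q / p)) ^ p * A X N (c / 2) ^ q) := by
    refine av_mono fun c _ => ?_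
    have h := Real.rpow_le_rpow (norm_nonneg _) (garling_pt' h0 h1 X N c) hp.le
    rw [show 1 - (1 - q / p) = q / p by ring, Real.mul_rpow (by positivity)
      (Real.rpow_nonneg (A_nonneg _ _ _) _), ← Real.rpow_mul (A_nonneg _ _ _),
      div_mul_cancel₀ _ hp.ne'] at h
    exact h
  refine this.trans ?_
  rw [av_mul, av_half N (fun c => A X N c ^ q), mul_assoc]
  exact mul_le_mul_of_nonneg_left (av_A hq N X) (by positivity)

/-! ### UMD constants, multipliers -/

variable (E) in
def UMDp (p : ℝ) : Prop := ∃ β : ℝ, 0 ≤ β ∧ ∀ (N : ℕ) (X : ℕ → ℕ → E) (ε : ℕ → ℕ → ℝ),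
  (∀ n j, ε n j = 1 ∨ ε n j = -1) → nm p N (fun n j => ε n j • X n j) ≤ β * nm p N X

lemma conv_norm {p t : ℝ} (hp : 1 ≤ p) (h0 : 0 ≤ t) (h1 : t ≤ 1) (u v : E) :
    ‖t • u + (1 - t) • v‖ ^ p ≤ t * ‖u‖ ^ p + (1 - t) * ‖v‖ ^ p := by
  have h2 : ‖t • u + (1 - t) • v‖ ≤ t * ‖u‖ + (1 - t) * ‖v‖ := by
    refine (norm_add_le _ _).trans (le_of_eq ?_)
    rw [norm_smul, norm_smul, Real.norm_eq_abs, Real.norm_eq_abs, abs_of_nonneg h0,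
      abs_of_nonneg (by linarith)]
  refine (Real.rpow_le_rpow (norm_nonneg _) h2 (by linarith)).trans ?_
  have := (convexOn_rpow hp).2 (show ‖u‖ ∈ Ici 0 from norm_nonneg u)
    (show ‖v‖ ∈ Ici 0 from norm_nonneg v) h0 (show (0 : ℝ) ≤ 1 - t by linarith) (by ring)
  simpa only [smul_eq_mul] using this

lemma mult_aux {p β : ℝ} (hp : 1 ≤ p) {N : ℕ} {X : ℕ → ℕ → E}
    (h : ∀ (ε : ℕ → ℕ → ℝ), (∀ n j, ε n j = 1 ∨ ε n j = -1) →
      nm p N (fun n j => ε n j • X n j) ≤ β) (T : Finset (ℕ × ℕ)) :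
    ∀ ρ : ℕ → ℕ → ℝ, (∀ n j, |ρ n j| ≤ 1) → (∀ n j, (n, j) ∉ T → ρ n j = 1 ∨ ρ n j = -1) →
      nm p N (fun n j => ρ n j • X n j) ≤ β := by
  induction T using Finset.induction_on with
  | empty => intro ρ _ h2; exact h ρ fun n j => h2 n j (by simp)
  | insert v T hv ih =>
    intro ρ h1 h2
    obtain ⟨a, b⟩ := v
    set ρ1 : ℝ → ℕ → ℕ → ℝ := fun e n j => if (n, j) = (a, b) then e else ρ n j with hρ1
    have B : ∀ e : ℝ, (e = 1 ∨ e = -1) → nm p N (fun n j => ρ1 e n j • X n j) ≤ β := by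
      intro e he
      refine ih _ (fun n j => ?_) (fun n j hn => ?_)
      · simp only [hρ1]; split_ifs
        · rcases he with rfl | rfl <;> simp
        · exact h1 n j
      · simp only [hρ1]; split_ifs with hh
        · exact he
        · exact h2 n j (by simp [Finset.mem_insert, hn, hh])
    set t : ℝ := (1 + ρ a b) / 2 with ht
    have hab := abs_le.1 (h1 a b)
    have t0 : 0 ≤ t := by rw [ht]; linarith
    have t1 : t ≤ 1 := by rw [ht]; linarith
    have e : (fun n j => ρ n j • X n j) = fun n j =>
        t • (ρ1 1 n j • X n j) + (1 - t) • (ρ1 (-1) n j • X n j) := by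
      funext n j
      simp only [hρ1]
      split_ifs with hh
      · obtain ⟨rfl, rfl⟩ := Prod.mk.inj hh
        rw [ht]; module
      · module
    rw [e]
    have : nm p N (fun n j => t • (ρ1 1 n j • X n j) + (1 - t) • (ρ1 (-1) n j • X n j)) ≤
        t * nm p N (fun n j => ρ1 1 n j • X n j) +
          (1 - t) * nm p N (fun n j => ρ1 (-1) n j • X n j) := by
      unfold nm
      rw [← av_mul, ← av_mul, ← av_add]
      refine av_mono fun c _ => ?_
      rw [F_add]
      exact conv_norm hp t0 t1 _ _
    have b1 := mul_le_mul_of_nonneg_left (B 1 (Or.inl rfl)) t0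
    have b2 := mul_le_mul_of_nonneg_left (B (-1) (Or.inr rfl)) (show 0 ≤ 1 - t by linarith)
    nlinarith

lemma UMDp.mult {p : ℝ} (hp : 1 ≤ p) (h : UMDp E p) : ∃ β : ℝ, 0 ≤ β ∧
    ∀ (N : ℕ) (X : ℕ → ℕ → E) (ρ : ℕ → ℕ → ℝ), (∀ n j, |ρ n j| ≤ 1) →
      nm p N (fun n j => ρ n j • X n j) ≤ β * nm p N X := by
  obtain ⟨β, hβ, h⟩ := h
  refine ⟨β, hβ, fun N X ρ hρ => ?_⟩
  have := mult_aux hp (fun ε hε => h N X ε hε) (Finset.range N ×ˢ Finset.range (2 ^ N))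
    (fun n j => if (n, j) ∈ Finset.range N ×ˢ Finset.range (2 ^ N) then ρ n j else 1)
    (fun n j => by split_ifs; exacts [hρ n j, by simp])
    (fun n j hn => Or.inl (if_neg hn))
  refine le_trans (le_of_eq (nm_congr fun n hn j hj => ?_)) this
  rw [if_pos]
  simp only [Finset.mem_product, Finset.mem_range]
  exact ⟨hn, hj.trans_le (Nat.pow_le_pow_right (by norm_num) hn.le)⟩

/-! ### Range side: multipliers controlled by a maximal function -/

lemma abel_pt {m : ℕ → ℕ → ℝ} {V : ℕ → ℕ → E} (n c : ℕ) :
    ‖F (fun n j => rm m n j • V n j) n c - Mx m n c • F V n c‖ ≤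
      Mx m n c * rm (fun n j => ‖F V n j‖) n c := by
  induction n generalizing c with
  | zero => simp [F, Mx]
  | succ n ih =>
    have e : F (fun n j => rm m n j • V n j) (n + 1) c - Mx m (n + 1) c • F V (n + 1) c =
        (F (fun n j => rm m n j • V n j) n (c / 2) - Mx m n (c / 2) • F V n (c / 2)) +
        (Mx m n (c / 2) - rm m n (c / 2)) • F V n (c / 2) := by
      rw [F_succ, F_succ, Mx_succ]; module
    rw [e]
    refine (norm_add_le _ _).trans ?_
    have hle : Mx m n (c / 2) ≤ rm m n (c / 2) := le_max_left _ _
    rw [norm_smul, Real.norm_eq_abs, abs_of_nonpos (by linarith), Mx_succ]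
    have a1 := ih (c / 2)
    have a2 : ‖F V n (c / 2)‖ ≤ rm (fun n j => ‖F V n j‖) n (c / 2) := le_max_right _ _
    have a3 : rm (fun n j => ‖F V n j‖) n (c / 2) ≤ rm (fun n j => ‖F V n j‖) (n + 1) c :=
      le_max_left _ _
    have a4 := rm_nonneg m n (c / 2)
    have a5 := mul_le_mul_of_nonneg_left a2 (show 0 ≤ -(Mx m n (c / 2) - rm m n (c / 2)) by linarith)
    have a6 := mul_le_mul_of_nonneg_left a3 a4
    nlinarith

lemma abel_pt' {m : ℕ → ℕ → ℝ} {V : ℕ → ℕ → E} (n c : ℕ) :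
    ‖F (fun n j => rm m n j • V n j) n c‖ ≤
      2 * (Mx m n c * rm (fun n j => ‖F V n j‖) n c) := by
  have h := abel_pt (m := m) (V := V) n c
  have h2 : ‖Mx m n c • F V n c‖ ≤ Mx m n c * rm (fun n j => ‖F V n j‖) n c := by
    rw [norm_smul, Real.norm_eq_abs, abs_of_nonneg (Mx_nonneg _ _ _)]
    exact mul_le_mul_of_nonneg_left (le_max_right _ _) (Mx_nonneg _ _ _)
  have h4 := norm_add_le (F (fun n j => rm m n j • V n j) n c - Mx m n c • F V n c)
    (Mx m n c • F V n c)
  rw [sub_add_cancel] at h4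
  linarith

lemma range_side {p q : ℝ} (hq : 1 < q) (hqp : q < p) (hU : UMDp E p) : ∃ K : ℝ, 0 ≤ K ∧
    ∀ (N : ℕ) (a : ℕ → ℕ → ℝ) (Z : ℕ → ℕ → E), (∀ n j, 0 ≤ a n j) →
      nm q N (fun n j => a n j ^ (1 / q - 1 / p) • Z n j) ≤
        K * (av N (Mx a N) ^ (1 - q / p) * nm p N Z ^ (q / p)) := by
  obtain ⟨β, hβ, hU⟩ := hU.mult (by linarith)
  have hp : 0 < p := by linarith
  have hp1 : 0 < p - 1 := by linarith
  have hq0 : 0 < q := by linarith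
  have hqp1 : q / p < 1 := by rw [div_lt_one hp]; exact hqp
  have hs : 0 < 1 / q - 1 / p := by
    rw [sub_pos]; exact one_div_lt_one_div_of_lt hq0 hqp
  refine ⟨2 ^ q * ((p / (p - 1)) ^ p * β) ^ (q / p), by positivity, fun N a Z ha => ?_⟩
  set m : ℕ → ℕ → ℝ := fun n j => a n j ^ (1 / q - 1 / p) with hm
  have hm0 : ∀ n j, 0 ≤ m n j := fun n j => Real.rpow_nonneg (ha n j) _
  set ρ : ℕ → ℕ → ℝ := fun n j => m n j / rm m n j with hρ
  have hρ1 : ∀ n j, |ρ n j| ≤ 1 := by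
    intro n j
    rw [hρ, abs_of_nonneg (div_nonneg (hm0 _ _) (rm_nonneg _ _ _))]
    exact div_le_one_of_le₀ (le_max_right _ _) (rm_nonneg _ _ _)
  set V : ℕ → ℕ → E := fun n j => ρ n j • Z n j with hV
  have e : (fun n j => m n j • Z n j) = fun n j => rm m n j • V n j := by
    funext n j
    rw [hV, smul_smul]
    congr 1
    rcases (rm_nonneg m n j).eq_or_lt with h | h
    · have : m n j ≤ rm m n j := le_max_right _ _
      have h0 := hm0 n j
      rw [← h] at this ⊢
      linarith
    · rw [hρ]; field_simp
  change nm q N (fun n j => m n j • Z n j) ≤ _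
  rw [e]
  set D : ℕ → ℝ := fun c => rm (fun n j => ‖F V n j‖) N c with hD
  have hD0 : ∀ c, 0 ≤ D c := fun c => rm_nonneg _ _ _
  have s1 : nm q N (fun n j => rm m n j • V n j) ≤
      av N (fun c => 2 ^ q * (Mx a N c ^ (1 - q / p) * (D c ^ p) ^ (q / p))) := by
    refine av_mono fun c _ => ?_
    refine (Real.rpow_le_rpow (norm_nonneg _) (abel_pt' N c) hq0.le).trans (le_of_eq ?_)
    rw [Real.mul_rpow (by norm_num) (mul_nonneg (Mx_nonneg _ _ _) (rm_nonneg _ _ _)),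
      Real.mul_rpow (Mx_nonneg _ _ _) (rm_nonneg _ _ _), ← Real.rpow_mul (hD0 c), hm,
      Mx_rpow ha hs, ← Real.rpow_mul (Mx_nonneg _ _ _)]
    congr 3
    · field_simp
    · field_simp
  refine s1.trans ?_
  rw [av_mul, mul_assoc]
  refine mul_le_mul_of_nonneg_left ?_ (by positivity)
  refine (av_holder' (by linarith) (by positivity) (by ring) (fun c => Mx_nonneg _ _ _)
    (fun c => Real.rpow_nonneg (hD0 c) _)).trans ?_
  rw [mul_left_comm]
  refine mul_le_mul_of_nonneg_left ?_ (Real.rpow_nonneg (av_nonneg (Mx_nonneg _ _)) _)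
  rw [← Real.mul_rpow (by positivity) (nm_nonneg _ _ _)]
  refine Real.rpow_le_rpow (av_nonneg fun c => Real.rpow_nonneg (hD0 c) _) ?_ (by positivity)
  refine (doob_F (by linarith) N V).trans ?_
  rw [mul_assoc]
  exact mul_le_mul_of_nonneg_left (hU N Z ρ hρ1) (by positivity)

lemma A_cancel {p q : ℝ} (hq : 1 < q) (hqp : q < p) (X : ℕ → ℕ → E) (n j : ℕ) :
    (A X n j ^ q) ^ (1 / q - 1 / p) • A X n j ^ (-(1 - q / p)) • X n j = X n j := by
  have hp : 0 < p := by linarith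
  have hq0 : 0 < q := by linarith
  rcases (A_nonneg X n j).eq_or_lt with h | h
  · have h1 := (X_le_uu X n j).trans (uu_le_A X n j)
    rw [← h] at h1
    rw [norm_le_zero_iff.1 h1]; simp
  · rw [smul_smul, ← Real.rpow_mul h.le, ← Real.rpow_add h]
    have : q * (1 / q - 1 / p) + -(1 - q / p) = 0 := by field_simp; ring
    rw [this, Real.rpow_zero, one_smul]

/-- extrapolation of the UMD property downwards -/
lemma UMDp.down {p q : ℝ} (hq : 1 < q) (hqp : q < p) (hU : UMDp E p) : UMDp E q := by
  obtain ⟨K₁, hK₁, h1⟩ := garling (E := E) hq hqp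
  obtain ⟨K₂, hK₂, h2⟩ := range_side hq hqp hU
  obtain ⟨β, hβ, hU⟩ := hU
  have hp : 0 < p := by linarith
  have hq1 : 0 < q - 1 := by linarith
  have hq0 : 0 < q := by linarith
  have hqp1 : q / p < 1 := by rw [div_lt_one hp]; exact hqp
  refine ⟨K₂ * (((q / (q - 1)) ^ q) ^ (1 - q / p) * (β * K₁) ^ (q / p)), by positivity,
    fun N X ε hε => ?_⟩
  cases N with
  | zero =>
    have : ∀ Y : ℕ → ℕ → E, nm q 0 Y = 0 := fun Y => by
      simp [nm, F, Real.zero_rpow hq0.ne', av]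
    rw [this, this, mul_zero]
  | succ N =>
    set Y : ℕ → ℕ → E := fun n j => A X n j ^ (-(1 - q / p)) • X n j with hY
    have e : (fun n j => ε n j • X n j) =
        fun n j => (A X n j ^ q) ^ (1 / q - 1 / p) • (ε n j • Y n j) := by
      funext n j
      rw [smul_comm, hY, A_cancel hq hqp]
    rw [e]
    refine (h2 (N + 1) _ _ fun n j => Real.rpow_nonneg (A_nonneg _ _ _) _).trans ?_
    rw [mul_assoc]
    refine mul_le_mul_of_nonneg_left ?_ hK₂
    have a1 : av (N + 1) (Mx (fun n j => A X n j ^ q) (N + 1)) ≤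
        (q / (q - 1)) ^ q * nm q (N + 1) X := by
      have : ∀ c, Mx (fun n j => A X n j ^ q) (N + 1) c = A X N (c / 2) ^ q := fun c => by
        rw [Mx_rpow (A_nonneg X) hq0, Mx_A]
      rw [av_congr fun c _ => this c, av_half N (fun c => A X N c ^ q)]
      exact av_A hq N X
    have a2 : nm p (N + 1) (fun n j => ε n j • Y n j) ≤ β * K₁ * nm q (N + 1) X :=
      (hU _ _ _ hε).trans (by
        rw [mul_assoc]; exact mul_le_mul_of_nonneg_left (h1 N X) hβ)
    have n0 := nm_nonneg q (N + 1) X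
    refine (mul_le_mul (Real.rpow_le_rpow (av_nonneg (Mx_nonneg _ _)) a1 (by linarith))
      (Real.rpow_le_rpow (nm_nonneg _ _ _) a2 (by positivity))
      (Real.rpow_nonneg (nm_nonneg _ _ _) _) (by positivity)).trans (le_of_eq ?_)
    rw [Real.mul_rpow (by positivity) n0, Real.mul_rpow (by positivity) n0, mul_mul_mul_comm]
    congr 1
    rcases n0.eq_or_lt with h | h
    · rw [← h, Real.zero_rpow (by positivity)]; simp
    · rw [← Real.rpow_add h]; simp

end
end RT

namespace RT
section
variable {E : Type*} [NormedAddCommGroup E] [NormedSpace ℝ E]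
variable {E' : Type*} [NormedAddCommGroup E'] [NormedSpace ℝ E']

/-! ### Coefficient families -/

/-- the coefficient family on the tree of `∑_{i ∈ L} x_i h_{α i}` -/
def co {V : Type*} [AddCommMonoid V] (α : DyadicI → DyadicI) (L : Finset DyadicI)
    (x : DyadicI → V) (n j : ℕ) : V :=
  ∑ i ∈ L, if (α i).n = n ∧ (α i).k = j then x i else 0

lemma dy_ext {I J : DyadicI} (h1 : I.n = J.n) (h2 : I.k = J.k) : I = J := by
  cases I; cases J; simp_all

lemma co_node {V : Type*} [AddCommMonoid V] {α : DyadicI → DyadicI} (hα : Function.Injective α)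
    {L : Finset DyadicI} (x : DyadicI → V) {i : DyadicI} (hi : i ∈ L) {n j : ℕ}
    (h : (α i).n = n ∧ (α i).k = j) : co α L x n j = x i := by
  unfold co
  rw [Finset.sum_eq_single i]
  · rw [if_pos h]
  · intro k _ hk
    rw [if_neg]
    rintro ⟨h1, h2⟩
    exact hk (hα (dy_ext (h1.trans h.1.symm) (h2.trans h.2.symm)))
  · intro h; exact absurd hi h

lemma co_off {V : Type*} [AddCommMonoid V] {α : DyadicI → DyadicI}
    {L : Finset DyadicI} (x : DyadicI → V) {n j : ℕ}
    (h : ¬ ∃ i ∈ L, (α i).n = n ∧ (α i).k = j) : co α L x n j = 0 := by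
  unfold co
  refine Finset.sum_eq_zero fun i hi => if_neg fun h' => h ⟨i, hi, h'⟩

lemma co_apply {V W : Type*} [AddCommMonoid V] [AddCommMonoid W] {α : DyadicI → DyadicI}
    (hα : Function.Injective α) {L : Finset DyadicI} (x : DyadicI → V) (Θ : ℕ → ℕ → V → W)
    (h0 : ∀ n j, Θ n j 0 = 0) (n j : ℕ) :
    Θ n j (co α L x n j) = co α L (fun i => Θ (α i).n (α i).k (x i)) n j := by
  by_cases h : ∃ i ∈ L, (α i).n = n ∧ (α i).k = j
  · obtain ⟨i, hi, h⟩ := h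
    rw [co_node hα _ hi h, co_node hα _ hi h]
    obtain ⟨rfl, rfl⟩ := h; rfl
  · rw [co_off _ h, co_off _ h, h0]

lemma co_nonneg {α : DyadicI → DyadicI} {L : Finset DyadicI} {d : DyadicI → ℝ}
    (hd : ∀ i, 0 ≤ d i) (n j : ℕ) : 0 ≤ co α L d n j :=
  Finset.sum_nonneg fun i _ => by split_ifs; exacts [hd i, le_rfl]

lemma co_congr {V : Type*} [AddCommMonoid V] {α : DyadicI → DyadicI} {L : Finset DyadicI}
    {x y : DyadicI → V} (h : ∀ i ∈ L, x i = y i) : co α L x = co α L y := by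
  funext n j
  exact Finset.sum_congr rfl fun i hi => by rw [h i hi]

lemma av_single {n k : ℕ} (hk : k < 2 ^ n) (a : ℝ) :
    av n (fun j => if k = j then a else 0) = a * (2 : ℝ) ^ (-(n : ℤ)) := by
  unfold av
  rw [Finset.sum_ite_eq, if_pos (Finset.mem_range.2 hk), zpow_neg, zpow_natCast, div_eq_mul_inv]

lemma sum_co {α : DyadicI → DyadicI} {L : Finset DyadicI} {N : ℕ} (hL : ∀ i ∈ L, (α i).n < N)
    (d : DyadicI → ℝ) :
    ∑ n ∈ Finset.range N, av n (co α L d n) = ∑ i ∈ L, d i * (α i).len := by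
  have : ∀ n, av n (co α L d n) =
      ∑ i ∈ L, av n (fun j => if (α i).n = n ∧ (α i).k = j then d i else 0) := by
    intro n
    rw [← av_sum]; rfl
  simp only [this]
  rw [Finset.sum_comm]
  refine Finset.sum_congr rfl fun i hi => ?_
  rw [Finset.sum_eq_single (α i).n]
  · simp only [true_and]
    rw [av_single (α i).hk]; rfl
  · intro n _ hn
    have : ∀ j, ¬ ((α i).n = n ∧ (α i).k = j) := fun j h => hn h.1.symm
    simp only [this, if_false, av_const]
  · intro h; exact absurd (Finset.mem_range.2 (hL i hi)) h

lemma co_add {V : Type*} [AddCommMonoid V] (α : DyadicI → DyadicI) (L : Finset DyadicI)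
    (x y : DyadicI → V) (n j : ℕ) :
    co α L (fun i => x i + y i) n j = co α L x n j + co α L y n j := by
  unfold co
  rw [← Finset.sum_add_distrib]
  exact Finset.sum_congr rfl fun i _ => by split_ifs <;> simp

/-! ### Duality -/

def up (g : ℕ → E) (j : ℕ) : E := (1 / 2 : ℝ) • (g (2 * j) + g (2 * j + 1))

def De : ℕ → (ℕ → E) → ℕ → ℕ → E
  | 0, _, _, _ => 0
  | N + 1, g, n, j => if n = N then (1 / 2 : ℝ) • (g (2 * j) - g (2 * j + 1)) else De N (up g) n j

def mean : ℕ → (ℕ → E) → E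
  | 0, g => g 0
  | N + 1, g => mean N (up g)

lemma De_rec (N : ℕ) (g : ℕ → E) : ∀ c < 2 ^ N, F (De N g) N c + mean N g = g c := by
  induction N generalizing g with
  | zero =>
    intro c hc
    have : c = 0 := by simpa using hc
    subst this
    simp [F, mean]
  | succ N ih =>
    intro c hc
    have h1 : F (De (N + 1) g) N (c / 2) = F (De N (up g)) N (c / 2) :=
      F_congr (N := N) (fun n hn j _ => by rw [De, if_neg hn.ne]) N le_rfl _ (half_lt hc)
    have h2 := ih (up g) (c / 2) (half_lt hc)
    rw [F_succ, h1, mean, De, if_pos rfl]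
    rw [add_right_comm, h2]
    rcases Nat.even_or_odd' c with ⟨k, rfl | rfl⟩
    · rw [half_even, sg_even, up]; module
    · rw [half_odd, sg_odd, up]; module

lemma mean_le {p : ℝ} (hp : 1 ≤ p) (N : ℕ) (g : ℕ → E) :
    ‖mean N g‖ ^ p ≤ av N (fun c => ‖g c‖ ^ p) := by
  induction N generalizing g with
  | zero => simp [mean, av]
  | succ N ih =>
    rw [mean, av_succ]
    refine (ih (up g)).trans (av_mono fun j _ => ?_)
    refine le_trans ?_ (conv_half hp (norm_nonneg _) (norm_nonneg _))
    refine Real.rpow_le_rpow (norm_nonneg _) ?_ (by linarith)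
    rw [up, norm_smul]
    have := norm_add_le (g (2 * j)) (g (2 * j + 1))
    norm_num
    linarith

lemma nm_De {p : ℝ} (hp : 1 ≤ p) (N : ℕ) (g : ℕ → E) :
    nm p N (De N g) ≤ 2 ^ p * av N (fun c => ‖g c‖ ^ p) := by
  have hp0 : 0 ≤ p := by linarith
  have h1 : nm p N (De N g) ≤ av N (fun c => 2 ^ p * ((‖g c‖ ^ p + ‖mean N g‖ ^ p) / 2)) := by
    refine av_mono fun c hc => ?_
    have e : F (De N g) N c = g c - mean N g := by rw [← De_rec N g c hc]; abel
    rw [e]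
    have h2 : ‖g c - mean N g‖ ≤ 2 * ((‖g c‖ + ‖mean N g‖) / 2) := by
      have := norm_sub_le (g c) (mean N g); linarith
    refine (Real.rpow_le_rpow (norm_nonneg _) h2 hp0).trans ?_
    rw [Real.mul_rpow (by norm_num) (by positivity)]
    exact mul_le_mul_of_nonneg_left (conv_half hp (norm_nonneg _) (norm_nonneg _)) (by positivity)
  refine h1.trans ?_
  rw [av_mul]
  refine mul_le_mul_of_nonneg_left ?_ (by positivity)
  have e : ∀ c, (‖g c‖ ^ p + ‖mean N g‖ ^ p) / 2 =
    1 / 2 * ‖g c‖ ^ p + 1 / 2 * ‖mean N g‖ ^ p := fun c => by ring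
  simp only [e]
  rw [av_add, av_mul, av_const]
  have := mean_le hp N g
  linarith

lemma pair_FF (B : E →ₗ[ℝ] E' →ₗ[ℝ] ℝ) (X : ℕ → ℕ → E) (Y : ℕ → ℕ → E') (N : ℕ) :
    av N (fun c => B (F X N c) (F Y N c)) =
      ∑ n ∈ Finset.range N, av n (fun j => B (X n j) (Y n j)) := by
  induction N with
  | zero => simp [F, av]
  | succ N ih =>
    rw [Finset.sum_range_succ, ← ih, av_succ, ← av_add]
    refine av_congr fun j _ => ?_
    rw [F_even, F_even, F_odd, F_odd]
    simp only [map_add, map_sub, LinearMap.add_apply, LinearMap.sub_apply]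
    ring

lemma pair_const (B : E →ₗ[ℝ] E' →ₗ[ℝ] ℝ) (X : ℕ → ℕ → E) (m : E') (N : ℕ) :
    av N (fun c => B (F X N c) m) = 0 := by
  induction N with
  | zero => simp [F, av]
  | succ N ih =>
    rw [← ih, av_succ]
    refine av_congr fun j _ => ?_
    rw [F_even, F_odd]
    simp only [map_add, map_sub, LinearMap.add_apply, LinearMap.sub_apply]
    ring

/-- Abstract duality lemma. -/
lemma dual_lemma {p q C : ℝ} (hpq : p.HolderConjugate q) (hC : 0 ≤ C)
    (B : E →ₗ[ℝ] E' →ₗ[ℝ] ℝ)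
    (hB : ∀ x y, B x y ≤ ‖x‖ * ‖y‖) (hB' : ∀ x, ∃ y, ‖y‖ ≤ 1 ∧ ‖x‖ / 2 ≤ B x y)
    (N : ℕ) (X V : ℕ → ℕ → E)
    (h : ∀ y : ℕ → ℕ → E', ∃ y' : ℕ → ℕ → E', nm p N y' ≤ C * nm p N y ∧
      ∑ n ∈ Finset.range N, av n (fun j => B (X n j) (y n j)) =
        ∑ n ∈ Finset.range N, av n (fun j => B (V n j) (y' n j))) :
    nm q N X ≤ (2 * (C * 2 ^ p) ^ (1 / p)) ^ q * nm q N V := by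
  have hp := hpq.pos
  have hq := hpq.symm.pos
  have hq1 := hpq.symm.lt
  have hp1 := hpq.lt
  choose u hu1 hu2 using hB'
  set g : ℕ → E' := fun c => ‖F X N c‖ ^ (q - 1) • u (F X N c) with hg
  obtain ⟨y', hy1, hy2⟩ := h (De N g)
  have e1 : nm q N X ≤ 2 * av N (fun c => B (F X N c) (g c)) := by
    rw [← av_mul]
    refine av_mono fun c _ => ?_
    rw [hg, map_smul, smul_eq_mul]
    have h1 := mul_le_mul_of_nonneg_left (hu2 (F X N c))
      (Real.rpow_nonneg (norm_nonneg (F X N c)) (q - 1))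
    have h2 : ‖F X N c‖ ^ (q - 1) * ‖F X N c‖ = ‖F X N c‖ ^ q := by
      rcases (norm_nonneg (F X N c)).eq_or_lt with h | h
      · rw [← h, Real.zero_rpow hq.ne', mul_zero]
      · rw [← Real.rpow_add_one h.ne']; congr 1; ring
    rw [← h2]
    linarith
  have e2 : av N (fun c => B (F X N c) (g c)) = av N (fun c => B (F V N c) (F y' N c)) := by
    rw [pair_FF, ← hy2, ← pair_FF]
    have : av N (fun c => B (F X N c) (g c)) =
        av N (fun c => B (F X N c) (F (De N g) N c) + B (F X N c) (mean N g)) := by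
      refine av_congr fun c hc => ?_
      rw [← map_add, De_rec N g c hc]
    rw [this, av_add, pair_const, add_zero]
  have e3 : av N (fun c => B (F V N c) (F y' N c)) ≤ nm q N V ^ (1 / q) * nm p N y' ^ (1 / p) :=
    (av_mono fun c _ => hB _ _).trans
      (av_holder hpq.symm (fun c => norm_nonneg _) (fun c => norm_nonneg _))
  have e4 : nm p N y' ≤ C * 2 ^ p * nm q N X := by
    refine hy1.trans ?_
    rw [mul_assoc]
    refine mul_le_mul_of_nonneg_left ?_ hC
    refine (nm_De hp1.le N g).trans ?_
    refine mul_le_mul_of_nonneg_left (av_mono fun c _ => ?_) (by positivity)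
    have hn : ‖g c‖ ≤ ‖F X N c‖ ^ (q - 1) := by
      rw [hg, norm_smul, Real.norm_eq_abs, abs_of_nonneg (Real.rpow_nonneg (norm_nonneg _) _)]
      exact mul_le_of_le_one_right (Real.rpow_nonneg (norm_nonneg _) _) (hu1 _)
    refine (Real.rpow_le_rpow (norm_nonneg _) hn hp.le).trans (le_of_eq ?_)
    rw [← Real.rpow_mul (norm_nonneg _)]
    congr 1
    have := hpq.symm.sub_one_mul_conj
    exact this
  have n0 := nm_nonneg q N X
  have n1 := nm_nonneg q N V
  have e5 : nm p N y' ^ (1 / p) ≤ (C * 2 ^ p) ^ (1 / p) * nm q N X ^ (1 / p) := by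
    rw [← Real.mul_rpow (by positivity) n0]
    exact Real.rpow_le_rpow (nm_nonneg _ _ _) e4 (by positivity)
  have e6 : nm q N X ≤ (2 * (C * 2 ^ p) ^ (1 / p)) * nm q N V ^ (1 / q) *
      nm q N X ^ (1 - 1 / q) := by
    have : (1 : ℝ) - 1 / q = 1 / p := by
      have := hpq.inv_add_inv_eq_one
      rw [one_div, one_div]; linarith
    rw [this]
    have := mul_le_mul_of_nonneg_left e5 (Real.rpow_nonneg n1 (1 / q))
    rw [e2] at e1
    nlinarith
  have := selfimp (by positivity) n0 n1 (by positivity) e6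
  rwa [one_div_one_div] at this

/-! the two dual pairings -/

lemma norming (x : E) : ∃ y : StrongDual ℝ E, ‖y‖ ≤ 1 ∧ ‖x‖ / 2 ≤ y x := by
  obtain ⟨g, hg, hx⟩ := exists_dual_vector'' ℝ x
  refine ⟨g, hg, ?_⟩
  rw [hx]
  have := norm_nonneg x
  simp only [RCLike.ofReal_real_eq_id, id_eq]
  linarith

lemma norming' (y : StrongDual ℝ E) : ∃ x : E, ‖x‖ ≤ 1 ∧ ‖y‖ / 2 ≤ y x := by
  rcases (norm_nonneg y).eq_or_lt with h | h
  · exact ⟨0, by simp, by rw [← h]; simp⟩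
  obtain ⟨x, hx1, hx2⟩ := y.exists_lt_apply_of_lt_opNorm (r := ‖y‖ / 2) (by linarith)
  rw [Real.norm_eq_abs] at hx2
  rcases le_total 0 (y x) with h0 | h0
  · exact ⟨x, hx1.le, by rw [abs_of_nonneg h0] at hx2; exact hx2.le⟩
  · exact ⟨-x, by rw [norm_neg]; exact hx1.le, by
      rw [abs_of_nonpos h0] at hx2; rw [map_neg]; exact hx2.le⟩

variable (E) in
/-- evaluation pairing `E* × E` -/
def BB : StrongDual ℝ E →ₗ[ℝ] E →ₗ[ℝ] ℝ :=
  LinearMap.mk₂ ℝ (fun y x => y x) (by intros; rfl) (by intros; rfl)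
    (by intros; simp) (by intros; simp)

lemma BB_le (y : StrongDual ℝ E) (x : E) : BB E y x ≤ ‖y‖ * ‖x‖ := by
  change y x ≤ _
  exact (le_abs_self _).trans (y.le_opNorm x)

lemma BB_le' (x : E) (y : StrongDual ℝ E) : (BB E).flip x y ≤ ‖x‖ * ‖y‖ := by
  rw [mul_comm]; exact BB_le y x

lemma UMDp.dual {p q : ℝ} (hpq : p.HolderConjugate q) (h : UMDp E p) :
    UMDp (StrongDual ℝ E) q := by
  obtain ⟨β, hβ, h⟩ := h
  refine ⟨_, ?_, fun N X ε hε => dual_lemma hpq hβ (BB E) BB_le (fun y => norming' y) N _ X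
    fun y => ⟨fun n j => ε n j • y n j, h N y ε hε, ?_⟩⟩
  · positivity
  · simp only [map_smul, LinearMap.smul_apply]

lemma UMDp.predual {p q : ℝ} (hpq : p.HolderConjugate q) (h : UMDp (StrongDual ℝ E) p) :
    UMDp E q := by
  obtain ⟨β, hβ, h⟩ := h
  refine ⟨_, ?_, fun N X ε hε => dual_lemma hpq hβ (BB E).flip BB_le' (fun y => norming y) N _ X
    fun y => ⟨fun n j => ε n j • y n j, h N y ε hε, ?_⟩⟩
  · positivity
  · simp only [map_smul, LinearMap.smul_apply]

/-- independence of the UMD property of the exponent -/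
lemma UMDp.all {p r : ℝ} (hp : 1 < p) (hr : 1 < r) (h : UMDp E p) : UMDp E r := by
  rcases lt_trichotomy r p with h1 | h1 | h1
  · exact h.down hr h1
  · rwa [h1]
  · have c1 := Real.HolderConjugate.conjExponent hp
    have c2 := Real.HolderConjugate.conjExponent hr
    have d := h.dual c1
    refine UMDp.predual c2.symm (d.down c2.symm.lt ?_)
    have i1 := c1.inv_add_inv_eq_one
    have i2 := c2.inv_add_inv_eq_one
    have i3 : r⁻¹ < p⁻¹ := inv_strictAnti₀ (by linarith) h1
    have := c1.symm.pos
    have := c2.symm.pos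
    refine (inv_lt_inv₀ (by assumption) (by assumption)).1 ?_
    linarith

end
end RT

namespace RT
section
variable {E : Type*} [NormedAddCommGroup E] [NormedSpace ℝ E]
variable {E' : Type*} [NormedAddCommGroup E'] [NormedSpace ℝ E']

lemma len_pos (I : DyadicI) : 0 < I.len := zpow_pos (by norm_num) _

/-- the weights -/
def wt (α β : DyadicI → DyadicI) (i : DyadicI) : ℝ := (α i).len / (β i).len

lemma wt_pos (α β : DyadicI → DyadicI) (i : DyadicI) : 0 < wt α β i :=
  div_pos (len_pos _) (len_pos _)

lemma wt_inv (α β : DyadicI → DyadicI) (i : DyadicI) : wt β α i = (wt α β i)⁻¹ := by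
  unfold wt; rw [inv_div]

lemma wt_len (α β : DyadicI → DyadicI) (i : DyadicI) : wt α β i * (β i).len = (α i).len := by
  unfold wt; exact div_mul_cancel₀ _ (len_pos _).ne'

def Lev (α β : DyadicI → DyadicI) (N : ℕ) (L : Finset DyadicI) : Prop :=
  ∀ i ∈ L, (α i).n < N ∧ (β i).n < N

lemma Lev.symm {α β : DyadicI → DyadicI} {N : ℕ} {L : Finset DyadicI} (h : Lev α β N L) :
    Lev β α N L := fun i hi => (h i hi).symm

variable (E) in
/-- boundedness of the rearrangement `h_{α i} ↦ w_i^{1/p} h_{β i}` on `L^p_E` -/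
def Bd (α β : DyadicI → DyadicI) (p : ℝ) : Prop :=
  ∃ C : ℝ, 0 ≤ C ∧ ∀ (N : ℕ) (L : Finset DyadicI) (x : DyadicI → E), Lev α β N L →
    nm p N (co β L (fun i => wt α β i ^ (1 / p) • x i)) ≤ C * nm p N (co α L x)

lemma pair_co (B : E →ₗ[ℝ] E' →ₗ[ℝ] ℝ) {α : DyadicI → DyadicI} (hα : Function.Injective α)
    {L : Finset DyadicI} {N : ℕ} (hL : ∀ i ∈ L, (α i).n < N) (x : DyadicI → E)
    (y : ℕ → ℕ → E') :
    ∑ n ∈ Finset.range N, av n (fun j => B (co α L x n j) (y n j)) =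
      ∑ i ∈ L, B (x i) (y (α i).n (α i).k) * (α i).len := by
  rw [← sum_co hL]
  refine Finset.sum_congr rfl fun n _ => av_congr fun j _ => ?_
  exact co_apply hα x (fun n j v => B v (y n j)) (fun n j => by simp) n j

lemma Bd.dual_gen {α β : DyadicI → DyadicI} (hα : Function.Injective α)
    (hβ : Function.Injective β) {p q : ℝ} (hpq : p.HolderConjugate q)
    (B : E →ₗ[ℝ] E' →ₗ[ℝ] ℝ)
    (hB : ∀ x y, B x y ≤ ‖x‖ * ‖y‖) (hB' : ∀ x, ∃ y, ‖y‖ ≤ 1 ∧ ‖x‖ / 2 ≤ B x y)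
    (hU : UMDp E' p) (h : Bd E' α β p) : Bd E β α q := by
  obtain ⟨C, hC, h⟩ := h
  obtain ⟨K, hK, hU⟩ := hU.mult hpq.lt.le
  refine ⟨(2 * (C * K * 2 ^ p) ^ (1 / p)) ^ q, by positivity, fun N L x hL => ?_⟩
  refine dual_lemma hpq (by positivity) B hB hB' N _ _ fun y =>
    ⟨co β L (fun i => wt α β i ^ (1 / p) • y (α i).n (α i).k), ?_, ?_⟩
  · refine (h N L _ hL.symm).trans ?_
    rw [mul_assoc]
    refine mul_le_mul_of_nonneg_left ?_ hC
    have := hU N y (co α L fun _ => 1) (fun n j => ?_)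
    · refine le_trans (le_of_eq ?_) this
      congr 1
      funext n j
      rw [co_apply hα (fun _ => (1 : ℝ)) (fun n j v => v • y n j) (by simp)]
      simp
    · by_cases hh : ∃ i ∈ L, (α i).n = n ∧ (α i).k = j
      · obtain ⟨i, hi, hh⟩ := hh
        rw [co_node hα _ hi hh]; simp
      · rw [co_off _ hh]; simp
  · rw [pair_co B hα (fun i hi => (hL i hi).2), pair_co B hβ (fun i hi => (hL i hi).1)]
    refine Finset.sum_congr rfl fun i hi => ?_
    rw [co_node hβ _ hi ⟨rfl, rfl⟩, map_smul, map_smul, LinearMap.smul_apply, smul_eq_mul,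
      smul_eq_mul, ← wt_len α β i, wt_inv α β i]
    have w0 := wt_pos α β i
    have : (wt α β i)⁻¹ ^ (1 / q) * wt α β i = wt α β i ^ (1 / p) := by
      rw [Real.inv_rpow w0.le, ← Real.rpow_neg w0.le, ← Real.rpow_add_one w0.ne']
      congr 1
      have := hpq.inv_add_inv_eq_one
      rw [one_div, one_div]; linarith
    rw [← this]; ring

lemma Bd.dual {α β : DyadicI → DyadicI} (hα : Function.Injective α)
    (hβ : Function.Injective β) {p q : ℝ} (hpq : p.HolderConjugate q)
    (hU : UMDp (StrongDual ℝ E) p) (h : Bd (StrongDual ℝ E) α β p) : Bd E β α q :=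
  Bd.dual_gen hα hβ hpq (BB E).flip BB_le' (fun y => norming y) hU h

/-! ### `ℓ^q` -/

lemma UMDp_real : UMDp ℝ 2 := by
  refine ⟨1, by norm_num, fun N X ε hε => ?_⟩
  have key : ∀ Y : ℕ → ℕ → ℝ, nm 2 N Y =
      ∑ n ∈ Finset.range N, av n (fun j => Y n j * Y n j) := by
    intro Y
    have := pair_FF (LinearMap.mul ℝ ℝ) Y Y N
    simp only [LinearMap.mul_apply'] at this
    rw [← this]
    refine av_congr fun c _ => ?_
    rw [Real.norm_eq_abs, Real.rpow_two, sq_abs, sq]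
  rw [key, key, one_mul]
  refine le_of_eq (Finset.sum_congr rfl fun n _ => av_congr fun j _ => ?_)
  rw [smul_eq_mul]
  rcases hε n j with h | h <;> rw [h] <;> ring

abbrev lq (q : ℝ) : Type := lp (fun _ : DyadicI => ℝ) (ENNReal.ofReal q)

lemma F_lq {q : ℝ} [Fact (1 ≤ ENNReal.ofReal q)] (X : ℕ → ℕ → lq q) (i : DyadicI) (n c : ℕ) :
    (F X n c) i = F (fun n j => (X n j) i) n c := by
  induction n generalizing c with
  | zero => simp [F]
  | succ n ih => rw [F_succ, F_succ, lp.coeFn_add, Pi.add_apply, ih, lp.coeFn_smul]; rfl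

lemma UMDp_lq {q : ℝ} (hq : 1 < q) [Fact (1 ≤ ENNReal.ofReal q)] : UMDp (lq q) q := by
  obtain ⟨β, hβ, h⟩ := UMDp_real.all (by norm_num) hq
  have hq0 : 0 < q := by linarith
  refine ⟨β, hβ, fun N X ε hε => ?_⟩
  have key : ∀ Y : ℕ → ℕ → lq q,
      HasSum (fun i => nm q N (fun n j => (Y n j) i)) (nm q N Y) := by
    intro Y
    unfold nm av
    refine HasSum.div_const (hasSum_sum fun c _ => ?_) _
    have := lp.hasSum_norm (p := ENNReal.ofReal q) (by rwa [ENNReal.toReal_ofReal hq0.le])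
      (F Y N c)
    rw [ENNReal.toReal_ofReal hq0.le] at this
    simp only [F_lq] at this
    exact this
  refine hasSum_le (fun i => ?_) (key _) ((key X).mul_left β)
  exact h N (fun n j => (X n j) i) ε hε

/-! ### Explicit values of Haar functions on the tree -/

def hs (I : DyadicI) (N c : ℕ) : ℝ := F (fun n j => if I.n = n ∧ I.k = j then (1 : ℝ) else 0) N c

lemma hs_zero (I : DyadicI) {N : ℕ} (h : N ≤ I.n) (c : ℕ) : hs I N c = 0 := by
  induction N generalizing c with
  | zero => rfl
  | succ N ih =>
    unfold hs at *
    rw [F_succ, ih (by omega), if_neg (by omega)]; simp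

lemma hs_succ (I : DyadicI) (N c : ℕ) : hs I (N + 1) c =
    hs I N (c / 2) + sg c * (if I.n = N ∧ I.k = c / 2 then (1 : ℝ) else 0) := rfl

lemma hs_succ_abs (I : DyadicI) (N c : ℕ) : |hs I (N + 1) c| =
    |hs I N (c / 2)| + (if I.n = N ∧ I.k = c / 2 then (1 : ℝ) else 0) := by
  rw [hs_succ]
  split_ifs with h
  · rw [hs_zero I h.1.ge]; simp [abs_sg]
  · simp

lemma hs_abs (I : DyadicI) (N c : ℕ) : |hs I N c| = 0 ∨ |hs I N c| = 1 := by
  induction N generalizing c with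
  | zero => left; rw [hs_zero I (by omega)]; simp
  | succ N ih =>
    rw [hs_succ_abs]
    split_ifs with h
    · rw [hs_zero I h.1.ge]; simp
    · simpa using ih (c / 2)

lemma F_co (α : DyadicI → DyadicI) (L : Finset DyadicI) (x : DyadicI → E) (N c : ℕ) :
    F (co α L x) N c = ∑ i ∈ L, hs (α i) N c • x i := by
  induction N generalizing c with
  | zero => simp [F, hs]
  | succ N ih =>
    rw [F_succ, ih, co, Finset.smul_sum, ← Finset.sum_add_distrib]
    refine Finset.sum_congr rfl fun i _ => ?_
    rw [hs_succ, add_smul]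
    congr 1
    split_ifs <;> simp

lemma G_co (α : DyadicI → DyadicI) (L : Finset DyadicI) (d : DyadicI → ℝ) (N c : ℕ) :
    G (co α L d) N c = ∑ i ∈ L, |hs (α i) N c| * d i := by
  induction N generalizing c with
  | zero => simp [G, hs, F]
  | succ N ih =>
    rw [G_succ, ih, co, ← Finset.sum_add_distrib]
    refine Finset.sum_congr rfl fun i _ => ?_
    rw [hs_succ_abs, add_mul]
    congr 1
    split_ifs <;> simp

lemma lq_norm {q : ℝ} (hq : 1 < q) [Fact (1 ≤ ENNReal.ofReal q)] (α : DyadicI → DyadicI)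
    (L : Finset DyadicI) (b : DyadicI → ℝ) (hb : ∀ i, 0 ≤ b i) (N c : ℕ) :
    ‖F (co α L (fun i => b i ^ (1 / q) •
      (lp.single (ENNReal.ofReal q) i (1 : ℝ) : lq q))) N c‖ ^ q =
      G (co α L b) N c := by
  have hq0 : 0 < q := by linarith
  rw [F_co, G_co]
  have e : ∀ i ∈ L, hs (α i) N c • b i ^ (1 / q) •
      (lp.single (ENNReal.ofReal q) i (1 : ℝ) : lq q) =
      lp.single (ENNReal.ofReal q) i (hs (α i) N c * b i ^ (1 / q)) := by
    intro i _
    rw [smul_smul, ← lp.single_smul, smul_eq_mul, mul_one]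
  rw [Finset.sum_congr rfl e]
  have := lp.norm_sum_single (p := ENNReal.ofReal q) (E := fun _ : DyadicI => ℝ)
    (by rwa [ENNReal.toReal_ofReal hq0.le]) (fun i => hs (α i) N c * b i ^ (1 / q)) L
  rw [ENNReal.toReal_ofReal hq0.le] at this
  rw [this]
  refine Finset.sum_congr rfl fun i _ => ?_
  rw [Real.norm_eq_abs, abs_mul, abs_of_nonneg (Real.rpow_nonneg (hb i) _),
    Real.mul_rpow (abs_nonneg _) (Real.rpow_nonneg (hb i) _), ← Real.rpow_mul (hb i),
    one_div_mul_cancel hq0.ne', Real.rpow_one]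
  congr 1
  rcases hs_abs (α i) N c with h | h <;> rw [h]
  · exact Real.zero_rpow hq0.ne'
  · exact Real.one_rpow _

lemma Bd_lq {α β : DyadicI → DyadicI} {p q : ℝ} (hq : 1 < q) (hqp : q < p)
    [Fact (1 ≤ ENNReal.ofReal q)] (h : Bd (lq q) α β p) :
    ∃ C : ℝ, 0 ≤ C ∧ ∀ (N : ℕ) (L : Finset DyadicI) (b : DyadicI → ℝ), (∀ i, 0 ≤ b i) →
      Lev α β N L →
      av N (fun c => G (co β L (fun i => b i * wt α β i ^ (1 / (p / q)))) N c ^ (p / q)) ≤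
        C * av N (fun c => G (co α L b) N c ^ (p / q)) := by
  obtain ⟨C, hC, h⟩ := h
  have hq0 : 0 < q := by linarith
  refine ⟨C, hC, fun N L b hb hL => ?_⟩
  have := h N L (fun i => b i ^ (1 / q) • (lp.single (ENNReal.ofReal q) i (1 : ℝ) : lq q)) hL
  have pw : ∀ t : ℝ, 0 ≤ t → t ^ p = (t ^ q) ^ (p / q) := fun t ht => by
    rw [← Real.rpow_mul ht, mul_div_cancel₀ _ hq0.ne']
  have e : (fun i => wt α β i ^ (1 / p) • b i ^ (1 / q) •
      (lp.single (ENNReal.ofReal q) i (1 : ℝ) : lq q)) =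
      fun i => (b i * wt α β i ^ (1 / (p / q))) ^ (1 / q) •
      (lp.single (ENNReal.ofReal q) i (1 : ℝ) : lq q) := by
    funext i
    have w0 := wt_pos α β i
    rw [smul_smul, Real.mul_rpow (hb i) (Real.rpow_nonneg w0.le _), ← Real.rpow_mul w0.le,
      mul_comm]
    congr 3
    field_simp
  rw [e] at this
  unfold nm at this
  simp only [pw _ (norm_nonneg _)] at this
  simp only [lq_norm hq α L b hb, lq_norm hq β L _ (fun i => mul_nonneg (hb i)
    (Real.rpow_nonneg (wt_pos α β i).le _))] at this
  exact this

/-! ### The maximal function estimate -/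

def WC (γ δ : DyadicI → DyadicI) : Prop :=
  ∃ C : ℝ, 0 ≤ C ∧ ∀ (N : ℕ) (L : Finset DyadicI) (a : DyadicI → ℝ), (∀ i, 0 ≤ a i) →
    Lev γ δ N L →
    av N (Mx (co δ L (fun i => a i * wt γ δ i)) N) ≤ C * av N (Mx (co γ L a) N)

lemma sum_le_GM {d g : ℕ → ℕ → ℝ} (hd : ∀ n j, 0 ≤ d n j) (N : ℕ) :
    ∑ n ∈ Finset.range N, av n (fun j => d n j * g n j) ≤
      av N (fun c => G d N c * Mx g N c) := by
  induction N with
  | zero => simp [G, av]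
  | succ N ih =>
    rw [Finset.sum_range_succ]
    have e : av (N + 1) (fun c => G d (N + 1) c * Mx g (N + 1) c) =
      av N (fun j => (G d N j + d N j) * rm g N j) :=
      av_half N (fun j => (G d N j + d N j) * rm g N j)
    rw [e]
    refine (add_le_add_left ih _).trans ?_
    rw [← av_add]
    refine av_mono fun j _ => ?_
    have h1 : Mx g N j ≤ rm g N j := le_max_left _ _
    have h2 : g N j ≤ rm g N j := le_max_right _ _
    have h3 := mul_le_mul_of_nonneg_left h1 (G_nonneg hd N j)
    have h4 := mul_le_mul_of_nonneg_left h2 (hd N j)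
    linarith

lemma av_Mx (v : ℕ → ℕ → ℝ) (N : ℕ) :
    av N (Mx v N) = ∑ n ∈ Finset.range N, av n (fun j => rm v n j - Mx v n j) := by
  induction N with
  | zero => simp [av, Mx]
  | succ N ih =>
    rw [Finset.sum_range_succ, ← ih, av_sub]
    have e : av (N + 1) (Mx v (N + 1)) = av N (rm v N) := av_half N (rm v N)
    rw [e]
    change _ = av N (Mx v N) + (av N (rm v N) - av N (Mx v N))
    ring

lemma G_tel (v : ℕ → ℕ → ℝ) {s : ℝ} (hs : 0 < s) (N c : ℕ) :
    G (fun n j => rm v n j ^ s - Mx v n j ^ s) N c = Mx v N c ^ s := by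
  induction N generalizing c with
  | zero => simp [G, Mx, Real.zero_rpow hs.ne']
  | succ N ih => rw [G_succ, ih, Mx_succ]; ring

lemma co_self {α : DyadicI → DyadicI} (hα : Function.Injective α) {L : Finset DyadicI}
    {V : Type*} [AddCommMonoid V] {b : ℕ → ℕ → V}
    (h : ∀ n j, (¬ ∃ i ∈ L, (α i).n = n ∧ (α i).k = j) → b n j = 0) :
    co α L (fun i => b (α i).n (α i).k) = b := by
  funext n j
  by_cases hh : ∃ i ∈ L, (α i).n = n ∧ (α i).k = j
  · obtain ⟨i, hi, hh⟩ := hh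
    rw [co_node hα _ hi hh, hh.1, hh.2]
  · rw [co_off _ hh, h n j hh]

lemma jump_le {r r' x v : ℝ} (hr : r.HolderConjugate r') (hx : 0 ≤ x) (hv : 0 ≤ v) :
    max x v - x ≤ r * ((max x v ^ (1 / r) - x ^ (1 / r)) * v ^ (1 / r')) := by
  rcases le_total v x with h | h
  · rw [max_eq_left h]; simp
  · rw [max_eq_right h]
    have hr0 := hr.pos
    have hr0' := hr.symm.pos
    have hi := hr.inv_add_inv_eq_one
    rw [← one_div, ← one_div] at hi
    have am := Real.geom_mean_le_arith_mean2_weighted (w₁ := 1 / r) (w₂ := 1 / r')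
      (by positivity) (by positivity) hx hv hi
    have e : v ^ (1 / r) * v ^ (1 / r') = v := by
      rcases hv.eq_or_lt with h | h
      · rw [← h, Real.zero_rpow (by positivity)]; simp
      · rw [← Real.rpow_add h, hi, Real.rpow_one]
    rw [sub_mul, e]
    have h3 := mul_le_mul_of_nonneg_left am hr0.le
    have e1 : r * (1 / r * x + 1 / r' * v) = x + r * (1 / r') * v := by
      field_simp
    have e2 : r * (1 / r') = r - 1 := by
      have : 1 / r' = 1 - 1 / r := by linarith
      rw [this, mul_sub, mul_one_div_cancel hr0.ne', mul_one]
    rw [e1, e2] at h3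
    nlinarith

lemma WC_of {α β : DyadicI → DyadicI} (hα : Function.Injective α) (hβ : Function.Injective β)
    {r : ℝ} (hr : 1 < r)
    (h : ∃ C : ℝ, 0 ≤ C ∧ ∀ (N : ℕ) (L : Finset DyadicI) (b : DyadicI → ℝ), (∀ i, 0 ≤ b i) →
      Lev α β N L →
      av N (fun c => G (co β L (fun i => b i * wt α β i ^ (1 / r))) N c ^ r) ≤
        C * av N (fun c => G (co α L b) N c ^ r)) : WC β α := by
  obtain ⟨C, hC, h⟩ := h
  set r' := r.conjExponent with hr'
  have hc : r.HolderConjugate r' := Real.HolderConjugate.conjExponent hr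
  have hr0 := hc.pos
  have hr0' := hc.symm.pos
  have hi := hc.inv_add_inv_eq_one
  rw [← one_div, ← one_div] at hi
  refine ⟨(r * C ^ (1 / r)) ^ r', by positivity, fun N L a ha hL => ?_⟩
  set v := co α L (fun i => a i * wt β α i) with hv
  have hv0 : ∀ n j, 0 ≤ v n j := co_nonneg fun i => mul_nonneg (ha i) (wt_pos _ _ _).le
  set b : ℕ → ℕ → ℝ := fun n j => rm v n j ^ (1 / r) - Mx v n j ^ (1 / r) with hb
  have hb0 : ∀ n j, 0 ≤ b n j := fun n j => sub_nonneg.2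
    (Real.rpow_le_rpow (Mx_nonneg _ _ _) (le_max_left _ _) (by positivity))
  have hbco : co α L (fun i => b (α i).n (α i).k) = b := by
    refine co_self hα fun n j hn => ?_
    have : v n j = 0 := co_off _ hn
    simp only [hb, rm, this, max_eq_left (Mx_nonneg v n j), sub_self]
  have hM := h N L (fun i => b (α i).n (α i).k) (fun i => hb0 _ _) hL.symm
  rw [hbco] at hM
  have e0 : ∀ c, G b N c ^ r = Mx v N c := fun c => by
    rw [hb, G_tel v (by positivity), ← Real.rpow_mul (Mx_nonneg _ _ _),
      one_div_mul_cancel hr0.ne', Real.rpow_one]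
  simp only [e0] at hM
  set d := co β L (fun i => b (α i).n (α i).k * wt α β i ^ (1 / r)) with hd
  have hd0 : ∀ n j, 0 ≤ d n j := co_nonneg fun i =>
    mul_nonneg (hb0 _ _) (Real.rpow_nonneg (wt_pos _ _ _).le _)
  set g : ℕ → ℕ → ℝ := fun n j => co β L a n j ^ (1 / r') with hg
  have ha0 : ∀ n j, 0 ≤ co β L a n j := co_nonneg ha
  have n1 : 0 ≤ av N (Mx v N) := av_nonneg (Mx_nonneg _ _)
  have n2 : 0 ≤ av N (Mx (co β L a) N) := av_nonneg (Mx_nonneg _ _)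
  have s1 : av N (Mx v N) ≤ r * ∑ n ∈ Finset.range N, av n (fun j => b n j * v n j ^ (1 / r')) := by
    rw [av_Mx, Finset.mul_sum]
    refine Finset.sum_le_sum fun n _ => ?_
    rw [← av_mul]
    exact av_mono fun j _ => jump_le hc (Mx_nonneg _ _ _) (hv0 _ _)
  have z' : (0 : ℝ) ^ (1 / r') = 0 := Real.zero_rpow (by positivity)
  have s2 : ∑ n ∈ Finset.range N, av n (fun j => b n j * v n j ^ (1 / r')) =
      ∑ n ∈ Finset.range N, av n (fun j => d n j * g n j) := by
    have e1 : ∀ n j, b n j * v n j ^ (1 / r') =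
        co α L (fun i => b (α i).n (α i).k * (a i * wt β α i) ^ (1 / r')) n j := fun n j =>
      co_apply hα _ (fun n j t => b n j * t ^ (1 / r')) (fun n j => by simp only [z', mul_zero]) n j
    have e2 : ∀ n j, d n j * g n j =
        co β L (fun i => b (α i).n (α i).k * wt α β i ^ (1 / r) * a i ^ (1 / r')) n j := by
      intro n j
      rw [hg, hd]
      dsimp only
      rw [co_apply hβ a (fun n j t => co β L
        (fun i => b (α i).n (α i).k * wt α β i ^ (1 / r)) n j * t ^ (1 / r'))
        (fun n j => by simp only [z', mul_zero])]
      refine congrFun (congrFun (co_congr fun i hi => ?_) n) j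
      rw [co_node hβ _ hi ⟨rfl, rfl⟩]
    simp only [e1, e2]
    rw [sum_co (fun i hi => (hL i hi).2), sum_co (fun i hi => (hL i hi).1)]
    refine Finset.sum_congr rfl fun i _ => ?_
    have w0 := wt_pos α β i
    rw [← wt_len α β i, wt_inv α β i, Real.mul_rpow (ha i) (by positivity),
      Real.inv_rpow w0.le, ← Real.rpow_neg w0.le]
    have : wt α β i ^ (-(1 / r')) * wt α β i = wt α β i ^ (1 / r) := by
      rw [← Real.rpow_add_one w0.ne']; congr 1; linarith
    rw [← this]; ring
  have s3 := (sum_le_GM hd0 (g := g) N).trans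
    (av_holder hc (fun c => G_nonneg hd0 N c) (fun c => Mx_nonneg g N c))
  have e3 : ∀ c, Mx g N c ^ r' = Mx (co β L a) N c := fun c => by
    rw [hg, Mx_rpow ha0 (by positivity), ← Real.rpow_mul (Mx_nonneg _ _ _),
      one_div_mul_cancel hr0'.ne', Real.rpow_one]
  simp only [e3] at s3
  have s4 : av N (fun c => G d N c ^ r) ^ (1 / r) ≤ C ^ (1 / r) * av N (Mx v N) ^ (1 / r) := by
    rw [← Real.mul_rpow hC n1]
    exact Real.rpow_le_rpow (av_nonneg fun c => Real.rpow_nonneg (G_nonneg hd0 N c) _) hM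
      (by positivity)
  have s5 : av N (Mx v N) ≤ (r * C ^ (1 / r)) * av N (Mx (co β L a) N) ^ (1 / r') *
      av N (Mx v N) ^ (1 - 1 / r') := by
    rw [show 1 - 1 / r' = 1 / r by linarith]
    have h5 := mul_le_mul_of_nonneg_right s4 (Real.rpow_nonneg n2 (1 / r'))
    have h6 := mul_le_mul_of_nonneg_left (s3.trans h5) hr0.le
    rw [← s2] at h6
    refine (s1.trans h6).trans (le_of_eq ?_)
    ring
  have := selfimp (by positivity) n1 n2 (by positivity) s5
  rwa [one_div_one_div] at this

lemma WC_of_Bd {α β : DyadicI → DyadicI} (hα : Function.Injective α)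
    (hβ : Function.Injective β) {p q : ℝ} (hq : 1 < q) (hqp : q < p)
    [Fact (1 ≤ ENNReal.ofReal q)] (h : Bd (lq q) α β p) : WC β α :=
  WC_of hα hβ (r := p / q) (by rw [one_lt_div (by linarith)]; exact hqp) (Bd_lq hq hqp h)

end
end RT

namespace RT
section
variable {E : Type*} [NormedAddCommGroup E] [NormedSpace ℝ E]

/-! ### Extrapolation downwards -/

lemma Bd.down {α β : DyadicI → DyadicI} (hα : Function.Injective α) (hβ : Function.Injective β)
    {p q : ℝ} (hq : 1 < q) (hqp : q < p) (hU : UMDp E p) (hW : WC α β) (h : Bd E α β p) :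
    Bd E α β q := by
  obtain ⟨K₁, hK₁, h1⟩ := garling (E := E) hq hqp
  obtain ⟨K₂, hK₂, h2⟩ := range_side hq hqp hU
  obtain ⟨C, hC, h⟩ := h
  obtain ⟨W, hW0, hW⟩ := hW
  have hp : 0 < p := by linarith
  have hq1 : 0 < q - 1 := by linarith
  have hq0 : 0 < q := by linarith
  have hqp1 : q / p < 1 := by rw [div_lt_one hp]; exact hqp
  refine ⟨K₂ * ((W * (q / (q - 1)) ^ q) ^ (1 - q / p) * (C * K₁) ^ (q / p)), by positivity,
    fun N L x hL => ?_⟩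
  cases N with
  | zero =>
    have : ∀ Y : ℕ → ℕ → E, nm q 0 Y = 0 := fun Y => by
      simp [nm, F, Real.zero_rpow hq0.ne', av]
    rw [this, this, mul_zero]
  | succ N =>
    set X := co α L x with hX
    set y : DyadicI → E := fun i => A X (α i).n (α i).k ^ (-(1 - q / p)) • x i with hy
    set a : DyadicI → ℝ := fun i => A X (α i).n (α i).k ^ q with ha
    have ha0 : ∀ i, 0 ≤ a i := fun i => Real.rpow_nonneg (A_nonneg _ _ _) _
    have e : co β L (fun i => wt α β i ^ (1 / q) • x i) =
        fun n j => co β L (fun i => a i * wt α β i) n j ^ (1 / q - 1 / p) •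
          co β L (fun i => wt α β i ^ (1 / p) • y i) n j := by
      funext n j
      by_cases hh : ∃ i ∈ L, (β i).n = n ∧ (β i).k = j
      · obtain ⟨i, hi, hh⟩ := hh
        rw [co_node hβ _ hi hh, co_node hβ _ hi hh, co_node hβ _ hi hh]
        have w0 := wt_pos α β i
        have := A_cancel hq hqp X (α i).n (α i).k
        have hxi : X (α i).n (α i).k = x i := co_node hα _ hi ⟨rfl, rfl⟩
        rw [hxi] at this
        rw [Real.mul_rpow (ha0 i) w0.le, hy, ha]
        dsimp only
        conv_lhs => rw [← this]
        simp only [smul_smul]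
        congr 1
        have e : wt α β i ^ (1 / q) = wt α β i ^ (1 / q - 1 / p) * wt α β i ^ (1 / p) := by
          rw [← Real.rpow_add w0]; congr 1; ring
        rw [e]; ring
      · rw [co_off _ hh, co_off _ hh, co_off _ hh, smul_zero]
    rw [e]
    refine (h2 (N + 1) _ _ (co_nonneg fun i => mul_nonneg (ha0 i) (wt_pos α β i).le)).trans ?_
    rw [mul_assoc]
    refine mul_le_mul_of_nonneg_left ?_ hK₂
    have a1 : av (N + 1) (Mx (co β L (fun i => a i * wt α β i)) (N + 1)) ≤
        W * (q / (q - 1)) ^ q * nm q (N + 1) X := by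
      refine (hW (N + 1) L a ha0 hL).trans ?_
      rw [mul_assoc]
      refine mul_le_mul_of_nonneg_left ?_ hW0
      have m1 : ∀ c, Mx (co α L a) (N + 1) c ≤ A X N (c / 2) ^ q := fun c => by
        have : Mx (fun n j => A X n j ^ q) (N + 1) c = A X N (c / 2) ^ q := by
          rw [Mx_rpow (A_nonneg X) hq0, Mx_A]
        rw [← this]
        refine Mx_mono (fun n j => ?_) _ _
        by_cases hh : ∃ i ∈ L, (α i).n = n ∧ (α i).k = j
        · obtain ⟨i, hi, hh⟩ := hh
          rw [co_node hα _ hi hh, ha]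
          obtain ⟨rfl, rfl⟩ := hh
          exact le_rfl
        · rw [co_off _ hh]; exact Real.rpow_nonneg (A_nonneg _ _ _) _
      refine (av_mono fun c _ => m1 c).trans ?_
      rw [av_half N (fun c => A X N c ^ q)]
      exact av_A hq N X
    have a2 : nm p (N + 1) (co β L (fun i => wt α β i ^ (1 / p) • y i)) ≤
        C * K₁ * nm q (N + 1) X := by
      refine (h _ _ _ hL).trans ?_
      rw [mul_assoc]
      refine mul_le_mul_of_nonneg_left ?_ hC
      refine le_trans (le_of_eq ?_) (h1 N X)
      congr 1
      funext n j
      exact (co_apply hα x (fun n j v => A X n j ^ (-(1 - q / p)) • v) (by simp) n j).symm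
    have n0 := nm_nonneg q (N + 1) X
    refine (mul_le_mul (Real.rpow_le_rpow (av_nonneg (Mx_nonneg _ _)) a1 (by linarith))
      (Real.rpow_le_rpow (nm_nonneg _ _ _) a2 (by positivity))
      (Real.rpow_nonneg (nm_nonneg _ _ _) _) (by positivity)).trans (le_of_eq ?_)
    rw [Real.mul_rpow (by positivity) n0, Real.mul_rpow (by positivity) n0, mul_mul_mul_comm]
    congr 1
    rcases n0.eq_or_lt with h | h
    · rw [← h, Real.zero_rpow (by positivity)]; simp
    · rw [← Real.rpow_add h]; simp

/-! ### The `H^1` estimate -/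

lemma av_G (W : ℕ → ℕ → ℝ) (N : ℕ) :
    av N (G W N) = ∑ n ∈ Finset.range N, av n (W n) := by
  induction N with
  | zero => simp [av, G]
  | succ N ih =>
    rw [Finset.sum_range_succ, ← ih, ← av_add]
    exact av_half N (fun j => G W N j + W N j)

lemma G_mul_le {f g : ℕ → ℕ → ℝ} (hg : ∀ n j, 0 ≤ g n j) (N c : ℕ) :
    G (fun n j => f n j * g n j) N c ≤ Mx f N c * G g N c := by
  induction N generalizing c with
  | zero => simp [G]
  | succ N ih =>
    rw [G_succ, G_succ, Mx_succ]
    have h1 : Mx f N (c / 2) ≤ rm f N (c / 2) := le_max_left _ _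
    have h2 : f N (c / 2) ≤ rm f N (c / 2) := le_max_right _ _
    have h3 := mul_le_mul_of_nonneg_right h1 (G_nonneg hg N (c / 2))
    have h4 := mul_le_mul_of_nonneg_right h2 (hg N (c / 2))
    have := ih (c / 2)
    linarith

lemma H1_of {α β : DyadicI → DyadicI} (hα : Function.Injective α) (hβ : Function.Injective β)
    (hW : WC α β) : ∃ C : ℝ, 0 ≤ C ∧ ∀ (N : ℕ) (L : Finset DyadicI) (d : DyadicI → ℝ),
      (∀ i, 0 ≤ d i) → Lev α β N L →
      av N (fun c => Real.sqrt (G (co β L (fun i => wt α β i ^ 2 * d i)) N c)) ≤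
        C * av N (fun c => Real.sqrt (G (co α L d) N c)) := by
  obtain ⟨W, hW0, hW⟩ := hW
  refine ⟨(W * 2) ^ (1 / 2 : ℝ), by positivity, fun N L d hd hL => ?_⟩
  set D := co α L d with hD
  have hD0 : ∀ n j, 0 ≤ D n j := co_nonneg hd
  set R : ℕ → ℕ → ℝ := fun n j => Real.sqrt (G D n j + D n j) with hR
  have hR0 : ∀ n j, 0 ≤ R n j := fun n j => Real.sqrt_nonneg _
  set r : DyadicI → ℝ := fun i => R (α i).n (α i).k with hr
  have hr0 : ∀ i, 0 ≤ r i := fun i => hR0 _ _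
  set f := co β L (fun i => r i * wt α β i) with hf
  set g := co β L (fun i => wt α β i * (d i / r i)) with hg
  have hdr : ∀ i, 0 ≤ d i / r i := fun i => div_nonneg (hd i) (hr0 i)
  have hg0 : ∀ n j, 0 ≤ g n j := co_nonneg fun i => mul_nonneg (wt_pos _ _ _).le (hdr i)
  set S := av N (fun c => Real.sqrt (G D N c)) with hS
  have hS0 : 0 ≤ S := av_nonneg fun c => Real.sqrt_nonneg _
  have e : co β L (fun i => wt α β i ^ 2 * d i) = fun n j => f n j * g n j := by
    funext n j
    by_cases hh : ∃ i ∈ L, (β i).n = n ∧ (β i).k = j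
    · obtain ⟨i, hi, hh⟩ := hh
      rw [hf, hg, co_node hβ _ hi hh, co_node hβ _ hi hh, co_node hβ _ hi hh]
      rcases (hr0 i).eq_or_lt with h | h
      · have hDi : D (α i).n (α i).k = d i := co_node hα _ hi ⟨rfl, rfl⟩
        have : Real.sqrt (G D (α i).n (α i).k + D (α i).n (α i).k) = 0 := h.symm
        rw [Real.sqrt_eq_zero (add_nonneg (G_nonneg hD0 _ _) (hD0 _ _)), hDi] at this
        have g0 := G_nonneg hD0 (α i).n (α i).k
        have d0 : d i = 0 := by have := hd i; linarith
        rw [d0]; simp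
      · field_simp
    · rw [hf, hg, co_off _ hh, co_off _ hh, co_off _ hh, mul_zero]
  rw [e]
  have s1 : av N (fun c => Real.sqrt (G (fun n j => f n j * g n j) N c)) ≤
      av N (Mx f N) ^ (1 / 2 : ℝ) * av N (G g N) ^ (1 / 2 : ℝ) := by
    refine le_trans (av_mono fun c _ => ?_) (av_holder' (by norm_num) (by norm_num) (by norm_num)
      (fun c => Mx_nonneg f N c) (fun c => G_nonneg hg0 N c))
    rw [← Real.sqrt_eq_rpow, ← Real.sqrt_eq_rpow, ← Real.sqrt_mul (Mx_nonneg _ _ _)]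
    exact Real.sqrt_le_sqrt (G_mul_le hg0 N c)
  have m1 : ∀ n c, Mx R n c ≤ Real.sqrt (G D n c) := by
    intro n
    induction n with
    | zero => intro c; simp [Mx, G]
    | succ n ih =>
      intro c
      rw [Mx_succ, G_succ]
      refine max_le ((ih _).trans (Real.sqrt_le_sqrt ?_)) le_rfl
      have := hD0 n (c / 2)
      linarith
  have s2 : av N (Mx f N) ≤ W * S := by
    refine (hW N L r hr0 hL).trans (mul_le_mul_of_nonneg_left (av_mono fun c _ => ?_) hW0)
    refine (Mx_mono (fun n j => ?_) N c).trans (m1 N c)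
    by_cases hh : ∃ i ∈ L, (α i).n = n ∧ (α i).k = j
    · obtain ⟨i, hi, hh⟩ := hh
      rw [co_node hα _ hi hh, hr]
      obtain ⟨rfl, rfl⟩ := hh
      exact le_rfl
    · rw [co_off _ hh]; exact hR0 _ _
  have s3 : av N (G g N) = av N (G (co α L (fun i => d i / r i)) N) := by
    rw [av_G, av_G]
    rw [sum_co (fun i hi => (hL i hi).1), sum_co (fun i hi => (hL i hi).2)]
    refine Finset.sum_congr rfl fun i _ => ?_
    rw [← wt_len α β i]; ring
  have m2 : ∀ n c, G (co α L (fun i => d i / r i)) n c ≤ 2 * Real.sqrt (G D n c) := by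
    intro n
    induction n with
    | zero => intro c; simp [G]
    | succ n ih =>
      intro c
      rw [G_succ, G_succ]
      have e1 : co α L (fun i => d i / r i) n (c / 2) = D n (c / 2) / R n (c / 2) :=
        (co_apply hα d (fun n j t => t / R n j) (by simp) n (c / 2)).symm
      rw [e1]
      have h1 := ih (c / 2)
      have g0 := G_nonneg hD0 n (c / 2)
      have d0 := hD0 n (c / 2)
      change _ ≤ 2 * R n (c / 2)
      have q1 : R n (c / 2) * R n (c / 2) = G D n (c / 2) + D n (c / 2) :=
        Real.mul_self_sqrt (by linarith)
      have q2 := Real.mul_self_sqrt g0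
      have q3 : Real.sqrt (G D n (c / 2)) ≤ R n (c / 2) := Real.sqrt_le_sqrt (by linarith)
      have q4 := Real.sqrt_nonneg (G D n (c / 2))
      have q5 : D n (c / 2) / R n (c / 2) ≤ 2 * (R n (c / 2) - Real.sqrt (G D n (c / 2))) := by
        rcases (hR0 n (c / 2)).eq_or_lt with h | h
        · rw [← h] at q3 ⊢; simp; linarith
        · rw [div_le_iff₀ h]; nlinarith
      linarith
  have s4 : av N (G g N) ≤ 2 * S := by
    rw [s3, hS, ← av_mul]
    exact av_mono fun c _ => m2 N c
  refine s1.trans ((mul_le_mul (Real.rpow_le_rpow (av_nonneg (Mx_nonneg _ _)) s2 (by norm_num))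
    (Real.rpow_le_rpow (av_nonneg (G_nonneg hg0 _)) s4 (by norm_num))
    (Real.rpow_nonneg (av_nonneg (G_nonneg hg0 _)) _) (by positivity)).trans (le_of_eq ?_))
  rw [← Real.mul_rpow (by positivity) (by positivity), show W * S * (2 * S) = W * 2 * (S * S) by ring,
    Real.mul_rpow (by positivity) (by positivity)]
  congr 1
  rw [← Real.sqrt_eq_rpow, Real.sqrt_mul_self hS0]

/-! ### Combination -/

def AllBd (α β : DyadicI → DyadicI) (p : ℝ) : Prop :=
  ∀ (E : Type) [NormedAddCommGroup E] [NormedSpace ℝ E] [CompleteSpace E],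
    UMDp E 2 → Bd E α β p

variable {α β : DyadicI → DyadicI}

lemma AllBd.dual (hα : Function.Injective α) (hβ : Function.Injective β) {p q : ℝ}
    (hpq : p.HolderConjugate q) (h : AllBd α β p) : AllBd β α q := by
  intro E _ _ _ hE
  have h2 : UMDp (StrongDual ℝ E) 2 := hE.dual Real.HolderConjugate.two_two
  exact Bd.dual hα hβ hpq (h2.all (by norm_num) hpq.lt) (h _ h2)

lemma AllBd.WC (hα : Function.Injective α) (hβ : Function.Injective β) {p : ℝ} (hp : 1 < p)
    (h : AllBd α β p) : WC β α := by
  have hq : 1 < (1 + p) / 2 := by linarith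
  haveI : Fact (1 ≤ ENNReal.ofReal ((1 + p) / 2)) :=
    ⟨by rw [← ENNReal.ofReal_one]; exact ENNReal.ofReal_le_ofReal hq.le⟩
  exact WC_of_Bd hα hβ hq (by linarith) (h _ ((UMDp_lq hq).all hq (by norm_num)))

lemma AllBd.down (hα : Function.Injective α) (hβ : Function.Injective β) {p q : ℝ}
    (hq : 1 < q) (hqp : q ≤ p) (hW : RT.WC α β) (h : AllBd α β p) : AllBd α β q := by
  rcases hqp.eq_or_lt with rfl | hqp
  · exact h
  intro E _ _ _ hE
  exact Bd.down hα hβ hq hqp (hE.all (by norm_num) (by linarith)) hW (h E hE)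

lemma AllBd.main (hα : Function.Injective α) (hβ : Function.Injective β) {p : ℝ}
    (hp : 1 < p) (h : AllBd α β p) :
    RT.WC α β ∧ RT.WC β α ∧ ∀ q, 1 < q → AllBd α β q := by
  have c1 := Real.HolderConjugate.conjExponent hp
  have hd := h.dual hα hβ c1
  have w1 := h.WC hα hβ hp
  have w2 := hd.WC hβ hα c1.symm.lt
  refine ⟨w2, w1, fun q hq => ?_⟩
  rcases le_total q p with hqp | hqp
  · exact h.down hα hβ hq hqp w2
  · have c2 := Real.HolderConjugate.conjExponent hq
    refine (hd.down hβ hα c2.symm.lt ?_ w1).dual hβ hα c2.symm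
    have i1 := c1.inv_add_inv_eq_one
    have i2 := c2.inv_add_inv_eq_one
    have i3 : q⁻¹ ≤ p⁻¹ := inv_anti₀ (by linarith) hqp
    refine (inv_le_inv₀ c1.symm.pos c2.symm.pos).1 ?_
    linarith

lemma AllBd.both (hα : Function.Injective α) (hβ : Function.Injective β) {p : ℝ}
    (hp : 1 < p) (h : AllBd α β p) :
    RT.WC β α ∧ ∀ q, 1 < q → AllBd α β q ∧ AllBd β α q := by
  have c1 := Real.HolderConjugate.conjExponent hp
  have m1 := h.main hα hβ hp
  have m2 := (h.dual hα hβ c1).main hβ hα c1.symm.lt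
  exact ⟨m1.2.1, fun q hq => ⟨m1.2.2 q hq, m2.2.2 q hq⟩⟩

end
end RT

namespace RT
section
variable {E : Type*} [NormedAddCommGroup E] [NormedSpace ℝ E]

/-! ### Bridges to the Haar functions on `[0,1]` -/

lemma floor_half (t : ℝ) (N : ℕ) : ⌊t * 2 ^ (N + 1)⌋₊ / 2 = ⌊t * 2 ^ N⌋₊ := by
  rw [← Nat.floor_div_ofNat]
  congr 1
  rw [pow_succ, ← mul_assoc]
  exact mul_div_cancel_right₀ _ (by norm_num)

lemma hs_floor (I : DyadicI) (t : ℝ) {N : ℕ} (hN : I.n < N) :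
    hs I N ⌊t * 2 ^ N⌋₊ = sg ⌊t * 2 ^ (I.n + 1)⌋₊ * (if I.k = ⌊t * 2 ^ I.n⌋₊ then 1 else 0) := by
  induction N with
  | zero => omega
  | succ N ih =>
    rw [hs_succ, floor_half]
    rcases Nat.lt_succ_iff_lt_or_eq.1 hN with h | h
    · rw [ih h, if_neg (by omega : ¬ (I.n = N ∧ _))]; simp
    · subst h
      rw [hs_zero I le_rfl]; simp

lemma haar_eq (I : DyadicI) {t : ℝ} (ht : 0 ≤ t) {N : ℕ} (hN : I.n < N) :
    I.haar t = hs I N ⌊t * 2 ^ N⌋₊ := by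
  rw [hs_floor I t hN]
  set m := ⌊t * 2 ^ (I.n + 1)⌋₊ with hm
  have hP : (0 : ℝ) < 2 ^ (I.n + 1) := by positivity
  have hlen : I.len * 2 ^ (I.n + 1) = 2 := by
    unfold DyadicI.len
    rw [zpow_neg, zpow_natCast, pow_succ]; field_simp
  have ht' : 0 ≤ t * 2 ^ (I.n + 1) := by positivity
  have hA : t ∈ Set.Ico I.lep (I.lep + I.len / 2) ↔ m = 2 * I.k := by
    rw [hm, Nat.floor_eq_iff ht', Set.mem_Ico, ← mul_le_mul_iff_left₀ hP, ← mul_lt_mul_iff_left₀ hP]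
    have e1 : I.lep * 2 ^ (I.n + 1) = 2 * I.k := by
      unfold DyadicI.lep; rw [mul_assoc, hlen]; ring
    have e2 : (I.lep + I.len / 2) * 2 ^ (I.n + 1) = 2 * I.k + 1 := by
      rw [add_mul, e1, div_mul_eq_mul_div, hlen]; norm_num
    rw [e1, e2]; push_cast; rfl
  have hB : t ∈ Set.Ico (I.lep + I.len / 2) (I.lep + I.len) ↔ m = 2 * I.k + 1 := by
    rw [hm, Nat.floor_eq_iff ht', Set.mem_Ico, ← mul_le_mul_iff_left₀ hP, ← mul_lt_mul_iff_left₀ hP]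
    have e1 : I.lep * 2 ^ (I.n + 1) = 2 * I.k := by
      unfold DyadicI.lep; rw [mul_assoc, hlen]; ring
    have e2 : (I.lep + I.len / 2) * 2 ^ (I.n + 1) = 2 * I.k + 1 := by
      rw [add_mul, e1, div_mul_eq_mul_div, hlen]; norm_num
    have e3 : (I.lep + I.len) * 2 ^ (I.n + 1) = 2 * I.k + 1 + 1 := by
      rw [add_mul, e1, hlen]; ring
    rw [e2, e3]; push_cast; rfl
  unfold DyadicI.haar
  rw [← floor_half, ← hm]
  simp only [hA, hB]
  by_cases h1 : m = 2 * I.k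
  · rw [if_pos h1, h1, half_even, sg_even]; simp
  · rw [if_neg h1]
    by_cases h2 : m = 2 * I.k + 1
    · rw [if_pos h2, h2, half_odd, sg_odd]; simp
    · rw [if_neg h2, if_neg (by omega)]; simp

lemma ind_eq (I : DyadicI) (t : ℝ) :
    Set.indicator (toSet I) (fun _ => (1 : ℝ)) t = |I.haar t| := by
  have h := len_pos I
  unfold DyadicI.haar DyadicI.toSet
  rw [Set.indicator_apply]
  simp only [Set.mem_Ico]
  split_ifs with a b c d e
  · simp
  · simp
  · exfalso
    rcases lt_or_ge t (I.lep + I.len / 2) with h2 | h2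
    · exact b ⟨a.1, h2⟩
    · exact c ⟨h2, a.2⟩
  · exfalso
    exact a ⟨d.1, by linarith [d.2]⟩
  · exfalso
    exact a ⟨by linarith [e.1], e.2⟩
  · simp

lemma int_floor (N : ℕ) (φ : ℕ → ℝ) :
    ∫ t in Set.Icc (0 : ℝ) 1, φ ⌊t * 2 ^ N⌋₊ = av N φ := by
  rw [integral_Icc_eq_integral_Ico]
  have hP : (0 : ℝ) < 2 ^ N := by positivity
  have hU : Set.Ico (0 : ℝ) 1 = ⋃ j ∈ Finset.range (2 ^ N),
      Set.Ico ((j : ℝ) / 2 ^ N) ((j + 1 : ℝ) / 2 ^ N) := by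
    ext t
    simp only [Set.mem_iUnion, Finset.mem_range, Set.mem_Ico, exists_prop]
    constructor
    · rintro ⟨h0, h1⟩
      have ht : 0 ≤ t * 2 ^ N := by positivity
      refine ⟨⌊t * 2 ^ N⌋₊, ?_, ?_, ?_⟩
      · rw [Nat.floor_lt ht]; push_cast; nlinarith
      · rw [div_le_iff₀ hP]; exact Nat.floor_le ht
      · rw [lt_div_iff₀ hP]; exact Nat.lt_floor_add_one _
    · rintro ⟨j, hj, h0, h1⟩
      refine ⟨le_trans (by positivity) h0, h1.trans_le ?_⟩
      rw [div_le_one hP]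
      exact_mod_cast hj
  have hf : ∀ (j : ℕ) (t : ℝ), t ∈ Set.Ico ((j : ℝ) / 2 ^ N) ((j + 1 : ℝ) / 2 ^ N) →
      ⌊t * 2 ^ N⌋₊ = j := by
    rintro j t ⟨h0, h1⟩
    rw [div_le_iff₀ hP] at h0
    rw [lt_div_iff₀ hP] at h1
    exact (Nat.floor_eq_iff (le_trans (by positivity) h0)).2 ⟨h0, h1⟩
  have hvol : ∀ j : ℕ, volume.real (Set.Ico ((j : ℝ) / 2 ^ N) ((j + 1 : ℝ) / 2 ^ N)) =
      1 / 2 ^ N := by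
    intro j
    rw [Real.volume_real_Ico_of_le (by gcongr; linarith)]; ring
  rw [hU, integral_biUnion_finset]
  · unfold av
    rw [Finset.sum_div]
    refine Finset.sum_congr rfl fun j _ => ?_
    rw [setIntegral_congr_fun (g := fun _ => φ j) measurableSet_Ico
      (fun t ht => by simp only [hf j t ht])]
    rw [setIntegral_const, hvol, smul_eq_mul]; ring
  · intro j _; exact measurableSet_Ico
  · intro i _ j _ hij
    refine Set.disjoint_left.2 fun t h1 h2 => hij ?_
    rw [← hf i t h1, ← hf j t h2]
  · intro j _
    rw [integrableOn_congr_fun (g := fun _ => φ j) (fun t ht => by simp only [hf j t ht])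
      measurableSet_Ico]
    exact integrableOn_const (by simp)

lemma lp_eq {α : DyadicI → DyadicI} {s : Finset DyadicI} {N : ℕ} (hN : ∀ i ∈ s, (α i).n < N)
    (p : ℝ) (v : DyadicI → E) :
    ∫ t in Set.Icc (0 : ℝ) 1, ‖∑ i ∈ s, (α i).haar t • v i‖ ^ p = nm p N (co α s v) := by
  unfold nm
  rw [← int_floor]
  refine setIntegral_congr_fun measurableSet_Icc fun t ht => ?_
  rw [F_co]
  congr 2
  exact Finset.sum_congr rfl fun i hi => by rw [haar_eq _ ht.1 (hN i hi)]

lemma LpNormV_eq {s : Finset DyadicI} {N : ℕ} (hN : ∀ i ∈ s, i.n < N)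
    (p : ℝ) (v : DyadicI → E) : LpNormV p s v = nm p N (co id s v) ^ (1 / p) := by
  unfold LpNormV
  rw [← lp_eq (α := id) hN]; rfl

lemma inner_sum {V : Type*} [AddCommMonoid V] {τ : DyadicI → DyadicI}
    (hτ : Function.Injective τ) {s : Finset DyadicI} (v : DyadicI → V) {i : DyadicI}
    (hi : i ∈ s) : (∑ k ∈ s, if τ k = τ i then v k else 0) = v i := by
  simp only [hτ.eq_iff]
  rw [Finset.sum_ite_eq' s i v, if_pos hi]

lemma LpNormV_image {τ : DyadicI → DyadicI} (hτ : Function.Injective τ) {s : Finset DyadicI}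
    {N : ℕ} (hN : ∀ i ∈ s, (τ i).n < N) (p : ℝ) (v : DyadicI → E) :
    LpNormV p (s.image τ) (fun J => ∑ I ∈ s, if τ I = J then v I else 0) =
      nm p N (co τ s v) ^ (1 / p) := by
  unfold LpNormV
  rw [← lp_eq hN]
  congr 1
  refine setIntegral_congr_fun measurableSet_Icc fun t _ => ?_
  rw [Finset.sum_image fun a _ b _ h => hτ h]
  congr 2
  exact Finset.sum_congr rfl fun i hi => by beta_reduce; rw [inner_sum hτ v hi]

lemma h1_eq {α : DyadicI → DyadicI} {s : Finset DyadicI} {N : ℕ} (hN : ∀ i ∈ s, (α i).n < N)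
    (d : DyadicI → ℝ) :
    ∫ t in Set.Icc (0 : ℝ) 1, Real.sqrt (∑ i ∈ s, d i * Set.indicator (toSet (α i))
      (fun _ => (1 : ℝ)) t) = av N (fun c => Real.sqrt (G (co α s d) N c)) := by
  rw [← int_floor]
  refine setIntegral_congr_fun measurableSet_Icc fun t ht => ?_
  rw [G_co]
  congr 1
  exact Finset.sum_congr rfl fun i hi => by
    rw [ind_eq, haar_eq _ ht.1 (hN i hi), mul_comm]

lemma HpNormS_eq {s : Finset DyadicI} {N : ℕ} (hN : ∀ i ∈ s, i.n < N) (a : DyadicI → ℝ) :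
    HpNormS 1 s a = av N (fun c => Real.sqrt (G (co id s (fun i => a i ^ 2)) N c)) := by
  unfold HpNormS sqFnS
  simp only [div_one, Real.rpow_one]
  rw [← h1_eq (α := id) hN]; rfl

lemma HpNormS_image {τ : DyadicI → DyadicI} (hτ : Function.Injective τ) {s : Finset DyadicI}
    {N : ℕ} (hN : ∀ i ∈ s, (τ i).n < N) (a : DyadicI → ℝ) :
    HpNormS 1 (s.image τ) (fun J => ∑ I ∈ s, if τ I = J then a I else 0) =
      av N (fun c => Real.sqrt (G (co τ s (fun i => a i ^ 2)) N c)) := by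
  unfold HpNormS sqFnS
  simp only [div_one, Real.rpow_one]
  rw [← h1_eq hN]
  refine setIntegral_congr_fun measurableSet_Icc fun t _ => ?_
  rw [Finset.sum_image fun a _ b _ h => hτ h]
  congr 1
  exact Finset.sum_congr rfl fun i hi => by rw [inner_sum hτ a hi]

lemma exists_lev (α β : DyadicI → DyadicI) (s : Finset DyadicI) : ∃ N, Lev α β N s := by
  refine ⟨s.sup (fun i => max (α i).n (β i).n) + 1, fun i hi => ?_⟩
  have := Finset.le_sup (f := fun i => max (α i).n (β i).n) hi
  omega

/-! ### operator norms -/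

lemma hom_bound {P Q C p : ℝ} (hp : 0 < p) (hP : 0 ≤ P) (hQ : 0 ≤ Q) (hC : 0 ≤ C)
    (h : ∀ t : ℝ, 0 < t → t ^ p * Q ≤ 1 → (t ^ p * P) ^ (1 / p) ≤ C) : P ≤ C ^ p * Q := by
  refine le_of_forall_pos_le_add fun ε hε => ?_
  set δ := ε / (C ^ p + 1) with hδ
  have hCp : 0 ≤ C ^ p := by positivity
  have hδ0 : 0 < δ := by positivity
  have hQd : 0 < Q + δ := by linarith
  have e : ((Q + δ)⁻¹ ^ (1 / p)) ^ p = (Q + δ)⁻¹ := by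
    rw [← Real.rpow_mul (by positivity), one_div_mul_cancel hp.ne', Real.rpow_one]
  have := h ((Q + δ)⁻¹ ^ (1 / p)) (by positivity) (by
    rw [e, inv_mul_le_iff₀ hQd]; linarith)
  rw [e] at this
  have h2 := Real.rpow_le_rpow (by positivity) this hp.le
  rw [← Real.rpow_mul (by positivity), one_div_mul_cancel hp.ne', Real.rpow_one,
    inv_mul_le_iff₀ hQd] at h2
  have h3 : δ * C ^ p ≤ ε := by
    rw [hδ, div_mul_eq_mul_div, div_le_iff₀ (by positivity)]
    nlinarith
  nlinarith

lemma nm_smul {p : ℝ} {t : ℝ} (ht : 0 < t) (N : ℕ) (α : DyadicI → DyadicI)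
    (s : Finset DyadicI) (x : DyadicI → E) :
    nm p N (co α s (fun i => t • x i)) = t ^ p * nm p N (co α s x) := by
  unfold nm
  rw [← av_mul]
  refine av_congr fun c _ => ?_
  rw [F_co, F_co]
  have : ∑ i ∈ s, hs (α i) N c • t • x i = t • ∑ i ∈ s, hs (α i) N c • x i := by
    rw [Finset.smul_sum]
    exact Finset.sum_congr rfl fun i _ => smul_comm _ _ _
  rw [this, norm_smul, Real.norm_eq_abs, abs_of_pos ht, Real.mul_rpow ht.le (norm_nonneg _)]

lemma Bd_of_lpOpNorm {τ : DyadicI → DyadicI} (hτ : Function.Injective τ) {p : ℝ} (hp : 1 < p)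
    (h : lpOpNorm τ p E < ⊤) : Bd E id τ p := by
  have hp0 : 0 < p := by linarith
  refine ⟨(lpOpNorm τ p E).toReal ^ p, by positivity, fun N L x hL => ?_⟩
  refine hom_bound hp0 (nm_nonneg _ _ _) (nm_nonneg _ _ _) ENNReal.toReal_nonneg
    fun t ht h1 => ?_
  rw [← nm_smul ht] at h1 ⊢
  have h2 : LpNormV p L (fun i => t • x i) ≤ 1 := by
    rw [LpNormV_eq (fun i hi => (hL i hi).1)]
    exact Real.rpow_le_one (nm_nonneg _ _ _) h1 (by positivity)
  have h3 : ENNReal.ofReal (LpNormV p (L.image τ) (rearrCoef τ p L (fun i => t • x i))) ≤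
      lpOpNorm τ p E := by
    unfold lpOpNorm
    exact le_iSup_of_le L (le_iSup_of_le (fun i => t • x i) (le_iSup_of_le h2 le_rfl))
  have h4 := (ENNReal.ofReal_le_iff_le_toReal h.ne).1 h3
  unfold rearrCoef at h4
  rw [LpNormV_image hτ (fun i hi => (hL i hi).2)] at h4
  refine le_trans (le_of_eq ?_) h4
  congr 2
  refine co_congr fun i _ => ?_
  rw [smul_comm]; rfl

lemma rpow_bd {P Q C p : ℝ} (hp : 0 < p) (hP : 0 ≤ P) (hQ : 0 ≤ Q) (hC : 0 ≤ C)
    (h : P ≤ C * Q) (h1 : Q ^ (1 / p) ≤ 1) : P ^ (1 / p) ≤ C ^ (1 / p) := by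
  have := Real.rpow_le_rpow hP h (show 0 ≤ 1 / p by positivity)
  rw [Real.mul_rpow hC hQ] at this
  exact this.trans (mul_le_of_le_one_right (by positivity) h1)

lemma lpOpNorm_lt {τ : DyadicI → DyadicI} (hτ : Function.Injective τ) {p : ℝ} (hp : 1 < p)
    (h : Bd E id τ p) : lpOpNorm τ p E < ⊤ := by
  obtain ⟨C, hC, h⟩ := h
  have hp0 : 0 < p := by linarith
  refine lt_of_le_of_lt ?_ (ENNReal.ofReal_lt_top (r := C ^ (1 / p)))
  unfold lpOpNorm
  refine iSup_le fun s => iSup_le fun x => iSup_le fun hx => ENNReal.ofReal_le_ofReal ?_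
  obtain ⟨N, hN⟩ := exists_lev id τ s
  unfold rearrCoef
  rw [LpNormV_image hτ (fun i hi => (hN i hi).2)]
  rw [LpNormV_eq (fun i hi => (hN i hi).1)] at hx
  exact rpow_bd hp0 (nm_nonneg _ _ _) (nm_nonneg _ _ _) hC (h N s x hN) hx

lemma lpInvOpNorm_lt {τ : DyadicI → DyadicI} (hτ : Function.Injective τ) {p : ℝ} (hp : 1 < p)
    (h : Bd E τ id p) : lpInvOpNorm τ p E < ⊤ := by
  obtain ⟨C, hC, h⟩ := h
  have hp0 : 0 < p := by linarith
  refine lt_of_le_of_lt ?_ (ENNReal.ofReal_lt_top (r := C ^ (1 / p)))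
  unfold lpInvOpNorm
  refine iSup_le fun s => iSup_le fun x => iSup_le fun hx => ENNReal.ofReal_le_ofReal ?_
  obtain ⟨N, hN⟩ := exists_lev τ id s
  rw [LpNormV_eq (fun i hi => (hN i hi).2)]
  rw [LpNormV_image hτ (fun i hi => (hN i hi).1)] at hx
  exact rpow_bd hp0 (nm_nonneg _ _ _) (nm_nonneg _ _ _) hC (h N s x hN) hx

lemma h1InvOpNorm_lt {τ : DyadicI → DyadicI} (hτ : Function.Injective τ)
    (h : WC τ id) : h1InvOpNorm τ < ⊤ := by
  obtain ⟨C, hC, h⟩ := H1_of hτ Function.injective_id h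
  refine lt_of_le_of_lt ?_ (ENNReal.ofReal_lt_top (r := C))
  unfold h1InvOpNorm
  refine iSup_le fun s => iSup_le fun a => iSup_le fun ha => ENNReal.ofReal_le_ofReal ?_
  obtain ⟨N, hN⟩ := exists_lev τ id s
  rw [HpNormS_eq (fun i hi => (hN i hi).2)]
  rw [HpNormS_image hτ (fun i hi => (hN i hi).1)] at ha
  have := h N s (fun i => a i ^ 2) (fun i => sq_nonneg _) hN
  have e : (fun i => (len (τ i) / len i * a i) ^ 2) = fun i => wt τ id i ^ 2 * a i ^ 2 := by
    funext i; rw [mul_pow]; rfl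
  rw [e]
  exact this.trans (mul_le_of_le_one_right hC ha)

/-! ### The UMD property -/

def allN (N : ℕ) : Finset DyadicI :=
  (Finset.univ : Finset (Σ n : Fin N, Fin (2 ^ (n : ℕ)))).image fun z => ⟨z.1, z.2, z.2.2⟩

lemma mem_allN {N : ℕ} (I : DyadicI) : I ∈ allN N ↔ I.n < N := by
  unfold allN
  simp only [Finset.mem_image, Finset.mem_univ, true_and]
  constructor
  · rintro ⟨z, rfl⟩; exact z.1.2
  · intro h
    exact ⟨⟨⟨I.n, h⟩, ⟨I.k, I.hk⟩⟩, rfl⟩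

lemma co_allN {N : ℕ} (X : ℕ → ℕ → E) :
    ∀ n < N, ∀ j < 2 ^ n, co id (allN N) (fun I => X I.n I.k) n j = X n j := by
  intro n hn j hj
  exact co_node (i := ⟨n, j, hj⟩) Function.injective_id _ ((mem_allN _).2 hn) ⟨rfl, rfl⟩

lemma UMDp_of_IsUMD (h : IsUMD E) {r : ℝ} (hr : 1 < r) : UMDp E r := by
  obtain ⟨β, h⟩ := h r hr
  have hr0 : 0 < r := by linarith
  refine ⟨|β| ^ r, by positivity, fun N X ε hε => ?_⟩
  have h1 := h (allN N) (fun I => X I.n I.k) (fun I => ε I.n I.k) (fun I => hε _ _)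
  have hl : ∀ i ∈ allN N, i.n < N := fun i hi => (mem_allN i).1 hi
  rw [LpNormV_eq hl, LpNormV_eq hl] at h1
  rw [nm_congr (co_allN X), nm_congr (co_allN fun n j => ε n j • X n j)] at h1
  have n1 := nm_nonneg r N X
  have h2 := h1.trans (mul_le_mul_of_nonneg_right (le_abs_self β) (Real.rpow_nonneg n1 _))
  have n2 := nm_nonneg r N (fun n j => ε n j • X n j)
  have h3 := Real.rpow_le_rpow (Real.rpow_nonneg n2 _) h2 hr0.le
  rwa [Real.mul_rpow (abs_nonneg _) (Real.rpow_nonneg n1 _), ← Real.rpow_mul n1,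
    ← Real.rpow_mul n2, one_div_mul_cancel hr0.ne', Real.rpow_one, Real.rpow_one] at h3

lemma IsUMD_of_UMDp (h : UMDp E 2) : IsUMD E := by
  intro r hr
  obtain ⟨β, hβ, h⟩ := h.all (by norm_num) hr
  have hr0 : 0 < r := by linarith
  refine ⟨β ^ (1 / r), fun s x ε hε => ?_⟩
  obtain ⟨N, hN⟩ := exists_lev id id s
  have hl : ∀ i ∈ s, i.n < N := fun i hi => (hN i hi).1
  rw [LpNormV_eq hl, LpNormV_eq hl, ← Real.mul_rpow hβ (nm_nonneg _ _ _)]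
  refine Real.rpow_le_rpow (nm_nonneg _ _ _) ?_ (by positivity)
  set ε' : ℕ → ℕ → ℝ := fun n j => if hj : j < 2 ^ n then ε ⟨n, j, hj⟩ else 1 with hε'
  have h1 := h N (co id s x) ε' (fun n j => by
    simp only [hε']; split_ifs; exacts [hε _, Or.inl rfl])
  refine le_trans (le_of_eq ?_) h1
  congr 1
  funext n j
  rw [co_apply Function.injective_id x (fun n j v => ε' n j • v) (by simp)]
  refine congrFun (congrFun (co_congr fun i _ => ?_) n) j
  simp only [hε', id]
  rw [dif_pos i.hk]

end
end RT

end RTHelpers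

/-- Let `τ : D → D` be injective and suppose there is `1 < p₀ < ∞`
such that for every Banach space `E` with the UMD property `T_{τ,p₀} ⊗ Id_E` is
bounded on `L^{p₀}_E`. Then `‖T_{τ,1}⁻¹‖₁ < ∞`, and for every `1 < p < ∞` and every
UMD space `E`, both `T_{τ,p} ⊗ Id_E` and its inverse `T_{τ,p}⁻¹ ⊗ Id_E` are bounded
on `L^p_E` (i.e. `‖T_{τ,p} ⊗ Id_E‖_{L^p_E} · ‖T_{τ,p}⁻¹ ⊗ Id_E‖_{L^p_E} < ∞`).
The value `p₀ = 2` is not excluded. -/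
theorem statement13 (τ : DyadicI → DyadicI) (hτ : Function.Injective τ)
    (p₀ : ℝ) (hp₀ : 1 < p₀)
    (h : ∀ (E : Type) [NormedAddCommGroup E] [NormedSpace ℝ E] [CompleteSpace E],
      IsUMD E → lpOpNorm τ p₀ E < ⊤) :
    h1InvOpNorm τ < ⊤ ∧
      ∀ (p : ℝ), 1 < p →
        ∀ (E : Type) [NormedAddCommGroup E] [NormedSpace ℝ E] [CompleteSpace E],
          IsUMD E → lpOpNorm τ p E < ⊤ ∧ lpInvOpNorm τ p E < ⊤ := by
  have hA : RT.AllBd id τ p₀ := fun E _ _ _ hE =>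
    RT.Bd_of_lpOpNorm hτ hp₀ (h E (RT.IsUMD_of_UMDp hE))
  obtain ⟨hW, hb⟩ := hA.both Function.injective_id hτ hp₀
  refine ⟨RT.h1InvOpNorm_lt hτ hW, fun p hp E _ _ _ hE => ?_⟩
  have hU : RT.UMDp E 2 := RT.UMDp_of_IsUMD hE (by norm_num)
  exact ⟨RT.lpOpNorm_lt hτ hp ((hb p hp).1 E hU), RT.lpInvOpNorm_lt hτ hp ((hb p hp).2 E hU)⟩
end
end

section
/- Let X be a Banach space and τ : D → D injective. If the scalar rearrangement operator is bounded on dyadic H¹ (‖T_{τ,1}‖₁ < ∞) and the vector-valued rearrangement operator is bounded on H²_X (‖T_{τ,2} ⊗ Id_X‖₂ < ∞), then for every 0 < p ≤ 2 the operator T_{τ,p} ⊗ Id_X is bounded on H^p_X, i.e. ‖T_{τ,p} ⊗ Id_X‖_p < ∞. -/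
open MeasureTheory Set
open scoped ENNReal NNReal Classical

noncomputable section

open DyadicI

section Aux

variable {X : Type*} [NormedAddCommGroup X] [NormedSpace ℝ X]

/-- signed sums as a vector in an `ℓ²` sum of copies of `X`. -/
def radVec (s : Finset DyadicI) (y : DyadicI → X) :
    PiLp 2 (fun _ : ({I // I ∈ s} → Bool) => X) :=
  WithLp.toLp 2 (fun ε => ∑ I ∈ s.attach, (if ε I then (1 : ℝ) else -1) • y I.1)

def rad (s : Finset DyadicI) (y : DyadicI → X) : ℝ := ‖radVec s y‖ / Real.sqrt (2 ^ s.card)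

lemma sqFn_eq_rad (s : Finset DyadicI) (x : DyadicI → X) (t : ℝ) :
    sqFn s x t = rad s (fun I => haar I t • x I) := by
  unfold sqFn rad radVec
  rw [PiLp.norm_eq_of_L2, Real.sqrt_div (by positivity)]
  simp only [mul_smul]

lemma radVec_add (s : Finset DyadicI) (y z : DyadicI → X) :
    radVec s (fun I => y I + z I) = radVec s y + radVec s z := by
  ext ε
  simp [radVec, Finset.sum_add_distrib]

lemma radVec_smul (s : Finset DyadicI) (c : ℝ) (y : DyadicI → X) :
    radVec s (fun I => c • y I) = c • radVec s y := by
  ext ε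
  simp only [radVec, PiLp.smul_apply, Finset.smul_sum]
  refine Finset.sum_congr rfl fun I _ => ?_
  rw [smul_comm]

lemma radVec_congr (s : Finset DyadicI) (y z : DyadicI → X) (h : ∀ I ∈ s, y I = z I) :
    radVec s y = radVec s z := by
  ext ε
  simp only [radVec]
  refine Finset.sum_congr rfl fun I _ => ?_
  rw [h I.1 I.2]

lemma rad_congr (s : Finset DyadicI) (y z : DyadicI → X) (h : ∀ I ∈ s, y I = z I) :
    rad s y = rad s z := by
  unfold rad; rw [radVec_congr s y z h]

lemma rad_nonneg (s : Finset DyadicI) (y : DyadicI → X) : 0 ≤ rad s y := by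
  unfold rad; positivity

lemma rad_add (s : Finset DyadicI) (y z : DyadicI → X) :
    rad s (fun I => y I + z I) ≤ rad s y + rad s z := by
  unfold rad
  rw [radVec_add, ← add_div]
  gcongr
  exact norm_add_le _ _

lemma rad_smul (s : Finset DyadicI) (c : ℝ) (y : DyadicI → X) :
    rad s (fun I => c • y I) = |c| * rad s y := by
  unfold rad
  rw [radVec_smul, norm_smul, Real.norm_eq_abs, mul_div_assoc]

lemma rad_flip (s : Finset DyadicI) (y : DyadicI → X) (J : DyadicI) :
    rad s (fun I => if I = J then - y I else y I) = rad s y := by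
  unfold rad
  congr 1
  rw [PiLp.norm_eq_of_L2, PiLp.norm_eq_of_L2]
  congr 1
  let e : ({I // I ∈ s} → Bool) ≃ ({I // I ∈ s} → Bool) :=
    { toFun := fun ε I => if I.1 = J then !(ε I) else ε I
      invFun := fun ε I => if I.1 = J then !(ε I) else ε I
      left_inv := by intro ε; funext I; by_cases h : I.1 = J <;> simp [h]
      right_inv := by intro ε; funext I; by_cases h : I.1 = J <;> simp [h] }
  refine Fintype.sum_equiv e _ _ fun ε => ?_
  simp only [radVec]
  congr 2
  refine Finset.sum_congr rfl fun I _ => ?_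
  by_cases h : I.1 = J
  · cases hh : ε I <;> simp [e, h, hh]
  · simp [e, h]

lemma rad_contract_one (s : Finset DyadicI) (y : DyadicI → X) (J : DyadicI) (c : ℝ)
    (hc : |c| ≤ 1) :
    rad s (fun I => if I = J then c • y I else y I) ≤ rad s y := by
  have h := abs_le.1 hc
  have e : (fun I => if I = J then c • y I else y I) =
      fun I => ((1 + c) / 2) • y I + ((1 - c) / 2) • (if I = J then - y I else y I) := by
    funext I
    by_cases hI : I = J
    · simp only [hI, if_true, smul_neg, ← sub_eq_add_neg, ← sub_smul]
      congr 1; ring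
    · simp only [hI, if_false, ← add_smul]
      rw [show (1 + c) / 2 + (1 - c) / 2 = 1 by ring, one_smul]
  rw [e]
  refine (rad_add s _ _).trans ?_
  rw [rad_smul, rad_smul, rad_flip, abs_of_nonneg (by linarith), abs_of_nonneg (by linarith)]
  apply le_of_eq; ring

lemma rad_contract (s : Finset DyadicI) (y : DyadicI → X) (c : DyadicI → ℝ)
    (hc : ∀ I ∈ s, |c I| ≤ 1) :
    rad s (fun I => c I • y I) ≤ rad s y := by
  have key : ∀ A : Finset DyadicI, A ⊆ s →
      rad s (fun I => if I ∈ A then c I • y I else y I) ≤ rad s y := by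
    intro A
    induction A using Finset.induction_on with
    | empty => intro _; simp
    | insert a A ha ih =>
      intro hA
      have hA' : A ⊆ s := fun i hi => hA (Finset.mem_insert_of_mem hi)
      refine le_trans ?_ (ih hA')
      refine le_trans (le_of_eq ?_) (rad_contract_one s
        (fun I => if I ∈ A then c I • y I else y I) a (c a) (hc a (hA (Finset.mem_insert_self _ _))))
      congr 1
      funext I
      by_cases hI : I = a
      · subst hI; simp [ha]
      · simp [hI]
  refine le_trans (le_of_eq ?_) (key s subset_rfl)
  exact rad_congr s _ _ fun I hI => by simp [hI]

lemma rad_contract_abs (s : Finset DyadicI) (y : DyadicI → X) (c d : DyadicI → ℝ)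
    (hc : ∀ I ∈ s, |c I| ≤ |d I|) :
    rad s (fun I => c I • y I) ≤ rad s (fun I => d I • y I) := by
  refine le_trans (le_of_eq ?_) (rad_contract s (fun I => d I • y I) (fun I => c I / d I) ?_)
  · refine rad_congr s _ _ fun I hI => ?_
    by_cases h : d I = 0
    · have := hc I hI
      rw [h, abs_zero] at this
      have := abs_nonpos_iff.1 this
      simp [h, this]
    · rw [smul_smul, div_mul_cancel₀ _ h]
  · intro I hI
    rw [abs_div]
    exact div_le_one_of_le₀ (hc I hI) (abs_nonneg _)

lemma rad_single (s : Finset DyadicI) (y : DyadicI → X) (J : DyadicI) (hJ : J ∈ s) :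
    ‖y J‖ ≤ rad s y := by
  have h := rad_contract s y (fun I => if I = J then 1 else 0)
    (by intro I _; by_cases h : I = J <;> simp [h])
  refine le_trans (le_of_eq ?_) h
  unfold rad
  rw [PiLp.norm_eq_of_L2]
  have : ∀ ε : ({I // I ∈ s} → Bool),
      ‖(radVec s (fun I => (if I = J then (1:ℝ) else 0) • y I)) ε‖ ^ 2 = ‖y J‖ ^ 2 := by
    intro ε
    simp only [radVec]
    rw [Finset.sum_eq_single ⟨J, hJ⟩]
    · cases ε ⟨J, hJ⟩ <;> simp
    · intro b _ hb
      have : b.1 ≠ J := fun h => hb (Subtype.ext h)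
      simp [this]
    · simp
  rw [Finset.sum_congr rfl (fun ε _ => this ε)]
  rw [Finset.sum_const, Finset.card_univ, Fintype.card_fun, Fintype.card_coe, Fintype.card_bool,
    nsmul_eq_mul, Real.sqrt_mul (by positivity), Real.sqrt_sq (norm_nonneg _)]
  push_cast
  rw [mul_div_assoc, mul_comm, div_mul_cancel₀]
  positivity


lemma DyadicI.len_pos (I : DyadicI) : 0 < len I := by unfold len; positivity

lemma len_eq (I : DyadicI) : len I = 1 / 2 ^ I.n := by
  unfold len; rw [zpow_neg, zpow_natCast, one_div]

lemma mem_toSet_iff (I : DyadicI) (t : ℝ) :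
    t ∈ toSet I ↔ (I.k : ℝ) ≤ t * 2 ^ I.n ∧ t * 2 ^ I.n < I.k + 1 := by
  unfold toSet lep
  rw [Set.mem_Ico, len_eq, mul_one_div, ← add_div, div_le_iff₀ (by positivity),
    lt_div_iff₀ (by positivity)]

lemma lep_mem (I : DyadicI) : lep I ∈ toSet I := by
  unfold toSet; simp [DyadicI.len_pos]

lemma toSet_sub (I : DyadicI) : toSet I ⊆ Set.Icc 0 1 := by
  intro t ht
  rw [mem_toSet_iff] at ht
  have hp : (0:ℝ) < 2 ^ I.n := by positivity
  have hk : (I.k : ℝ) + 1 ≤ 2 ^ I.n := by exact_mod_cast I.hk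
  have h0 : (0:ℝ) ≤ I.k := by positivity
  constructor
  · by_contra h; push Not at h; nlinarith
  · by_contra h; push Not at h; nlinarith

lemma nested (K J : DyadicI) (h : K.n ≤ J.n) (t : ℝ) (u : ℝ) (ht : t ∈ toSet J)
    (hu : u ∈ toSet J) : t ∈ toSet K → u ∈ toSet K := by
  rw [mem_toSet_iff] at ht hu
  rw [mem_toSet_iff, mem_toSet_iff]
  obtain ⟨d, hd⟩ := Nat.exists_eq_add_of_le h
  rw [hd, pow_add, ← mul_assoc] at ht hu
  have hp : (0:ℝ) < 2 ^ d := by positivity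
  rintro ⟨h1, h2⟩
  have a1 : (K.k : ℝ) * 2 ^ d < J.k + 1 := by nlinarith
  have a2 : (J.k : ℝ) < (K.k + 1) * 2 ^ d := by nlinarith
  have b1 : K.k * 2 ^ d ≤ J.k := by
    have : K.k * 2 ^ d < J.k + 1 := by exact_mod_cast a1
    omega
  have b2 : J.k + 1 ≤ (K.k + 1) * 2 ^ d := by
    have : J.k < (K.k + 1) * 2 ^ d := by exact_mod_cast a2
    omega
  have c1 : (K.k : ℝ) * 2 ^ d ≤ J.k := by exact_mod_cast b1
  have c2 : (J.k : ℝ) + 1 ≤ (K.k + 1) * 2 ^ d := by exact_mod_cast b2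
  constructor
  · refine le_of_mul_le_mul_right ?_ hp
    linarith
  · refine lt_of_mul_lt_mul_right ?_ hp.le
    linarith

/-- real-valued indicator -/
def ind (I : DyadicI) (t : ℝ) : ℝ := Set.indicator (toSet I) (fun _ => (1 : ℝ)) t

lemma ind_of_mem {I : DyadicI} {t : ℝ} (h : t ∈ toSet I) : ind I t = 1 := by simp [ind, h]
lemma ind_of_not_mem {I : DyadicI} {t : ℝ} (h : t ∉ toSet I) : ind I t = 0 := by simp [ind, h]
lemma ind_nonneg (I : DyadicI) (t : ℝ) : 0 ≤ ind I t := by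
  by_cases h : t ∈ toSet I <;> simp [ind, h]
lemma ind_le_one (I : DyadicI) (t : ℝ) : ind I t ≤ 1 := by
  by_cases h : t ∈ toSet I <;> simp [ind, h]

lemma ind_const {K J : DyadicI} (h : K.n ≤ J.n) {t : ℝ} (ht : t ∈ toSet J) :
    ind K (lep J) = ind K t := by
  by_cases hK : t ∈ toSet K
  · rw [ind_of_mem hK, ind_of_mem (nested K J h t _ ht (lep_mem J) hK)]
  · rw [ind_of_not_mem hK, ind_of_not_mem fun h' => hK (nested K J h _ t (lep_mem J) ht h')]

lemma measurable_ind (I : DyadicI) : Measurable (ind I) := by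
  unfold ind
  exact measurable_const.indicator (by unfold toSet; exact measurableSet_Ico)

lemma abs_haar (I : DyadicI) (t : ℝ) : |haar I t| = ind I t := by
  have hl := DyadicI.len_pos I
  unfold haar
  split_ifs with h1 h2
  · rw [ind_of_mem, abs_one]
    unfold toSet; exact ⟨h1.1, by linarith [h1.2]⟩
  · rw [ind_of_mem, abs_neg, abs_one]
    unfold toSet; exact ⟨by linarith [h2.1], h2.2⟩
  · rw [ind_of_not_mem, abs_zero]
    intro h
    unfold toSet at h
    rw [Set.mem_Ico] at h1 h2 h
    by_cases h3 : t < I.lep + I.len / 2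
    · exact h1 ⟨h.1, h3⟩
    · exact h2 ⟨by linarith, h.2⟩

lemma measurable_haar (I : DyadicI) : Measurable (haar I) := by
  unfold haar
  exact Measurable.ite measurableSet_Ico measurable_const
    (Measurable.ite measurableSet_Ico measurable_const measurable_const)

/-- the unit interval measure -/
abbrev mu0 : Measure ℝ := volume.restrict (Set.Icc (0:ℝ) 1)

lemma bm_int {f : ℝ → ℝ} (hm : Measurable f) (C : ℝ) (h : ∀ t, |f t| ≤ C) :
    Integrable f mu0 :=
  Integrable.of_bound hm.aestronglyMeasurable C (Filter.Eventually.of_forall h)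

lemma integrable_ind (I : DyadicI) : Integrable (ind I) mu0 :=
  bm_int (measurable_ind I) 1 fun t => by
    rw [abs_of_nonneg (ind_nonneg I t)]; exact ind_le_one I t

lemma integral_ind (I : DyadicI) : ∫ t, ind I t ∂mu0 = len I := by
  have hm : MeasurableSet (toSet I) := by unfold toSet; exact measurableSet_Ico
  unfold ind
  rw [integral_indicator_const _ hm, Measure.real, Measure.restrict_apply hm,
    Set.inter_eq_left.2 (toSet_sub I)]
  unfold toSet
  rw [Real.volume_Ico, ENNReal.toReal_ofReal (by linarith [DyadicI.len_pos I])]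
  simp


lemma sqFn_nonneg (s : Finset DyadicI) (x : DyadicI → X) (t : ℝ) : 0 ≤ sqFn s x t :=
  Real.sqrt_nonneg _

lemma measurable_sqFn (s : Finset DyadicI) (x : DyadicI → X) : Measurable (sqFn s x) := by
  unfold sqFn
  refine Measurable.sqrt (Measurable.div_const ?_ _)
  refine Finset.measurable_sum _ fun ε _ => ?_
  refine Measurable.pow_const ?_ 2
  refine StronglyMeasurable.measurable ?_
  refine StronglyMeasurable.norm ?_
  refine Finset.stronglyMeasurable_fun_sum _ fun I _ => ?_
  exact StronglyMeasurable.smul_const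
    ((measurable_haar I.1).const_mul _).stronglyMeasurable _

lemma sqFn_le (s : Finset DyadicI) (x : DyadicI → X) (t : ℝ) : sqFn s x t ≤ rad s x := by
  rw [sqFn_eq_rad]
  refine rad_contract s x _ fun I _ => ?_
  rw [abs_haar]; exact ind_le_one I t

lemma integrable_sqFn_rpow (s : Finset DyadicI) (x : DyadicI → X) (p : ℝ) (hp : 0 < p) :
    Integrable (fun t => sqFn s x t ^ p) mu0 := by
  refine bm_int ((measurable_sqFn s x).pow_const p) (rad s x ^ p) fun t => ?_
  rw [abs_of_nonneg (Real.rpow_nonneg (sqFn_nonneg s x t) p)]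
  exact Real.rpow_le_rpow (sqFn_nonneg s x t) (sqFn_le s x t) hp.le

end Aux

section Aux2

variable {X : Type*} [NormedAddCommGroup X] [NormedSpace ℝ X]

/-- measurable selection of the maximum of finitely many functions. -/
lemma exists_max_sel (s : Finset DyadicI) (g : DyadicI → ℝ → ℝ) (hg : ∀ I, Measurable (g I)) :
    ∃ e : DyadicI → ℝ → ℝ, (∀ I, Measurable (e I)) ∧ (∀ I t, 0 ≤ e I t) ∧ (∀ I t, e I t ≤ 1) ∧
      (∀ t, ∑ I ∈ s, e I t ≤ 1) ∧ (∀ t, ∀ J ∈ s, g J t ≤ ∑ I ∈ s, e I t * g I t) := by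
  induction s using Finset.induction_on with
  | empty => exact ⟨fun _ _ => 0, by simp⟩
  | insert a s ha ih =>
    obtain ⟨e, h1, h2, h2', h3, h4⟩ := ih
    have hm : Measurable (fun t => ∑ I ∈ s, e I t * g I t) :=
      Finset.measurable_sum _ fun I _ => (h1 I).mul (hg I)
    have hset : MeasurableSet {t | (∑ I ∈ s, e I t * g I t) < g a t ∨ s = ∅} :=
      (measurableSet_lt hm (hg a)).union (MeasurableSet.const _)
    let P : ℝ → Prop := fun t => (∑ I ∈ s, e I t * g I t) < g a t ∨ s = ∅
    refine ⟨fun I t => if P t then (if I = a then 1 else 0) else (if I = a then 0 else e I t),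
      ?_, ?_, ?_, ?_, ?_⟩
    · intro I
      refine Measurable.ite hset measurable_const ?_
      by_cases h : I = a
      · simp [h]
      · simpa [h] using h1 I
    · intro I t; dsimp only; split_ifs <;> first | exact h2 I t | norm_num
    · intro I t; dsimp only; split_ifs <;> first | exact h2' I t | norm_num
    · intro t
      by_cases hP : P t
      · simp [hP]
      · simp only [hP, if_false]
        rw [Finset.sum_insert ha]
        simp only [if_true, zero_add]
        rw [Finset.sum_congr rfl fun I hI => if_neg (fun h : I = a => ha (h ▸ hI))]
        exact h3 t
    · intro t J hJ
      by_cases hP : P t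
      · simp only [hP, if_true]
        rw [Finset.sum_insert ha]
        have : ∑ x ∈ s, (if x = a then (1:ℝ) else 0) * g x t = 0 :=
          Finset.sum_eq_zero fun I hI => by rw [if_neg (fun h : I = a => ha (h ▸ hI))]; simp
        rw [this]
        simp only [if_true, one_mul, add_zero]
        rcases Finset.mem_insert.1 hJ with h | h
        · rw [h]
        · rcases hP with h' | h'
          · exact (h4 t J h).trans h'.le
          · simp [h'] at h
      · simp only [hP, if_false]
        rw [Finset.sum_insert ha]
        simp only [if_true, zero_mul, zero_add]
        rw [Finset.sum_congr rfl fun I hI => by rw [if_neg (fun h : I = a => ha (h ▸ hI))]]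
        rcases Finset.mem_insert.1 hJ with h | h
        · rw [h]; by_contra h'; exact hP (Or.inl (not_le.1 h'))
        · exact h4 t J h

/-- telescoping inequality -/
lemma telescope (s : Finset DyadicI) (r : DyadicI → ℕ) (d : DyadicI → ℝ) (hd : ∀ I, 0 ≤ d I) :
    ∑ J ∈ s, d J / Real.sqrt (∑ K ∈ s with r K ≤ r J, d K) ≤ 2 * Real.sqrt (∑ J ∈ s, d J) := by
  induction s using Finset.induction_on_max_value r with
  | empty => simp
  | insert a s ha hmax ih =>
    rw [Finset.sum_insert ha, Finset.sum_insert ha]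
    have e1 : ∑ K ∈ insert a s with r K ≤ r a, d K = d a + ∑ J ∈ s, d J := by
      rw [Finset.filter_true_of_mem, Finset.sum_insert ha]
      intro x hx
      rcases Finset.mem_insert.1 hx with h | h
      · rw [h]
      · exact hmax x h
    rw [e1]
    have e2 : ∑ J ∈ s, d J / Real.sqrt (∑ K ∈ insert a s with r K ≤ r J, d K) ≤
        ∑ J ∈ s, d J / Real.sqrt (∑ K ∈ s with r K ≤ r J, d K) := by
      refine Finset.sum_le_sum fun J hJ => ?_
      have h1 : d J ≤ ∑ K ∈ s with r K ≤ r J, d K :=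
        Finset.single_le_sum (f := d) (fun i _ => hd i) (by simp [hJ])
      have h2 : ∑ K ∈ s with r K ≤ r J, d K ≤ ∑ K ∈ insert a s with r K ≤ r J, d K := by
        refine Finset.sum_le_sum_of_subset_of_nonneg ?_ fun i _ _ => hd i
        exact Finset.filter_subset_filter _ (Finset.subset_insert _ _)
      rcases (hd J).eq_or_lt with h | h
      · simp [← h]
      · have : 0 < Real.sqrt (∑ K ∈ s with r K ≤ r J, d K) := Real.sqrt_pos.2 (h.trans_le h1)
        gcongr
    have hS : 0 ≤ ∑ J ∈ s, d J := Finset.sum_nonneg fun i _ => hd i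
    have ha0 := hd a
    set S := ∑ J ∈ s, d J
    have : d a / Real.sqrt (d a + S) ≤ 2 * Real.sqrt (d a + S) - 2 * Real.sqrt S := by
      rcases ha0.eq_or_lt with h | h
      · simp [← h]
      · have hpos : 0 < Real.sqrt (d a + S) := Real.sqrt_pos.2 (by linarith)
        rw [div_le_iff₀ hpos]
        have q1 := Real.sq_sqrt hS
        have q2 := Real.sq_sqrt (show 0 ≤ d a + S by linarith)
        nlinarith [sq_nonneg (Real.sqrt (d a + S) - Real.sqrt S)]
    linarith

lemma measurable_sqS (s : Finset DyadicI) (T : DyadicI → DyadicI) (c : DyadicI → ℝ) :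
    Measurable (fun t => Real.sqrt (∑ I ∈ s, c I ^ 2 * ind (T I) t)) :=
  Measurable.sqrt (Finset.measurable_sum _ fun I _ => (measurable_ind _).const_mul _)

lemma integrable_sqS (s : Finset DyadicI) (T : DyadicI → DyadicI) (c : DyadicI → ℝ) :
    Integrable (fun t => Real.sqrt (∑ I ∈ s, c I ^ 2 * ind (T I) t)) mu0 := by
  refine bm_int (measurable_sqS s T c) (Real.sqrt (∑ I ∈ s, c I ^ 2)) fun t => ?_
  rw [abs_of_nonneg (Real.sqrt_nonneg _)]
  refine Real.sqrt_le_sqrt (Finset.sum_le_sum fun I _ => ?_)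
  exact mul_le_of_le_one_right (sq_nonneg _) (ind_le_one _ _)

/-- Fefferman type inequality. -/
lemma fefferman (s : Finset DyadicI) (T : DyadicI → DyadicI) (c : DyadicI → ℝ)
    (e : DyadicI → ℝ → ℝ) (h1 : ∀ I, Measurable (e I)) (h2 : ∀ I t, 0 ≤ e I t)
    (h2' : ∀ I t, e I t ≤ 1)
    (h3 : ∀ t, ∑ I ∈ s, e I t ≤ 1) :
    ∑ I ∈ s, c I * Real.sqrt ((∫ t, e I t * ind (T I) t ∂mu0) / len (T I)) * len (T I) ≤
      (3 / 2) * ∫ t, Real.sqrt (∑ I ∈ s, c I ^ 2 * ind (T I) t) ∂mu0 := by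
  set A : DyadicI → ℝ := fun I =>
    Real.sqrt (∑ K ∈ s with (T K).n ≤ (T I).n, c K ^ 2 * ind (T K) (lep (T I))) with hA
  set F : ℝ → ℝ := fun t => Real.sqrt (∑ I ∈ s, c I ^ 2 * ind (T I) t) with hF
  have hAt : ∀ I t, t ∈ toSet (T I) → A I =
      Real.sqrt (∑ K ∈ s with (T K).n ≤ (T I).n, c K ^ 2 * ind (T K) t) := by
    intro I t ht
    rw [hA]
    dsimp only
    congr 1
    refine Finset.sum_congr rfl fun K hK => ?_
    rw [ind_const (Finset.mem_filter.1 hK).2 ht]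
  have hAF : ∀ I t, t ∈ toSet (T I) → A I ≤ F t := by
    intro I t ht
    rw [hAt I t ht]
    refine Real.sqrt_le_sqrt ?_
    exact Finset.sum_le_sum_of_subset_of_nonneg (Finset.filter_subset _ _)
      fun i _ _ => mul_nonneg (sq_nonneg _) (ind_nonneg _ _)
  have hA0 : ∀ I, 0 ≤ A I := fun I => Real.sqrt_nonneg _
  have hcA : ∀ I ∈ s, c I ^ 2 ≤ A I ^ 2 := by
    intro I hI
    rw [hA]
    dsimp only
    rw [Real.sq_sqrt (Finset.sum_nonneg fun i _ => mul_nonneg (sq_nonneg _) (ind_nonneg _ _))]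
    have := Finset.single_le_sum (s := s.filter fun K => (T K).n ≤ (T I).n)
      (f := fun K => c K ^ 2 * ind (T K) (lep (T I)))
      (fun i _ => mul_nonneg (sq_nonneg _) (ind_nonneg _ _)) (a := I) (by simp [hI])
    simpa [ind_of_mem (lep_mem (T I))] using this
  set G : ℝ → ℝ := fun t => ∑ I ∈ s, (c I ^ 2 / A I) * ind (T I) t with hG
  set H : ℝ → ℝ := fun t => ∑ I ∈ s, A I * (e I t * ind (T I) t) with hH
  have hie : ∀ I, Integrable (fun t => e I t * ind (T I) t) mu0 := by
    intro I
    refine bm_int ((h1 I).mul (measurable_ind _)) 1 fun t => ?_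
    rw [abs_of_nonneg (mul_nonneg (h2 I t) (ind_nonneg _ _))]
    exact mul_le_one₀ (h2' I t) (ind_nonneg _ _) (ind_le_one _ _)
  have hFi : Integrable F mu0 := integrable_sqS s T c
  have hGF : ∀ t, G t ≤ 2 * F t := by
    intro t
    have := telescope s (fun I => (T I).n) (fun I => c I ^ 2 * ind (T I) t)
      (fun I => mul_nonneg (sq_nonneg _) (ind_nonneg _ _))
    refine le_trans (le_of_eq ?_) this
    refine Finset.sum_congr rfl fun I _ => ?_
    by_cases ht : t ∈ toSet (T I)
    · rw [hAt I t ht, ind_of_mem ht]; simp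
    · rw [ind_of_not_mem ht]; simp
  have hHF : ∀ t, H t ≤ F t := by
    intro t
    have : H t ≤ ∑ I ∈ s, e I t * F t := by
      refine Finset.sum_le_sum fun I _ => ?_
      by_cases ht : t ∈ toSet (T I)
      · rw [ind_of_mem ht, mul_one, mul_comm]
        exact mul_le_mul_of_nonneg_left (hAF I t ht) (h2 I t)
      · rw [ind_of_not_mem ht]
        simpa using mul_nonneg (h2 I t) (Real.sqrt_nonneg _)
    refine this.trans ?_
    rw [← Finset.sum_mul]
    exact mul_le_of_le_one_left (Real.sqrt_nonneg _) (h3 t)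
  have hGi : ∫ t, G t ∂mu0 = ∑ I ∈ s, (c I ^ 2 / A I) * len (T I) := by
    rw [hG, integral_finsetSum _ fun I _ => (integrable_ind (T I)).const_mul _]
    refine Finset.sum_congr rfl fun I _ => ?_
    rw [integral_const_mul, integral_ind]
  have hHi : ∫ t, H t ∂mu0 = ∑ I ∈ s, A I * ∫ t, e I t * ind (T I) t ∂mu0 := by
    rw [hH, integral_finsetSum _ fun I _ => (hie I).const_mul _]
    refine Finset.sum_congr rfl fun I _ => ?_
    rw [integral_const_mul]
  have i1 : ∫ t, G t ∂mu0 ≤ 2 * ∫ t, F t ∂mu0 := by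
    rw [← integral_const_mul]
    exact integral_mono (integrable_finsetSum _ fun I _ => (integrable_ind (T I)).const_mul _)
      (hFi.const_mul _) hGF
  have i2 : ∫ t, H t ∂mu0 ≤ ∫ t, F t ∂mu0 :=
    integral_mono (integrable_finsetSum _ fun I _ => (hie I).const_mul _) hFi hHF
  have i3 : ∑ I ∈ s, c I * Real.sqrt ((∫ t, e I t * ind (T I) t ∂mu0) / len (T I)) * len (T I) ≤
      (1/2) * ∫ t, G t ∂mu0 + (1/2) * ∫ t, H t ∂mu0 := by
    rw [hGi, hHi, Finset.mul_sum, Finset.mul_sum, ← Finset.sum_add_distrib]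
    refine Finset.sum_le_sum fun I hI => ?_
    have hl := DyadicI.len_pos (T I)
    have hq : 0 ≤ ∫ t, e I t * ind (T I) t ∂mu0 :=
      integral_nonneg fun t => mul_nonneg (h2 I t) (ind_nonneg _ _)
    set q := ∫ t, e I t * ind (T I) t ∂mu0
    set l := len (T I)
    have hq' : q = Real.sqrt (q / l) ^ 2 * l := by
      rw [Real.sq_sqrt (by positivity)]; field_simp
    set u := Real.sqrt (q / l)
    rw [hq']
    rcases (hA0 I).eq_or_lt with h | h
    · have := hcA I hI
      rw [← h] at this
      have : c I = 0 := by nlinarith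
      rw [this, ← h]; simp
    · have : c I * u ≤ (1/2) * (c I ^ 2 / A I) + (1/2) * (A I * u ^ 2) := by
        have : (1/2) * (c I ^ 2 / A I) + (1/2) * (A I * u ^ 2) - c I * u =
          (c I - A I * u) ^ 2 / (2 * A I) := by field_simp; ring
        have : 0 ≤ (c I - A I * u) ^ 2 / (2 * A I) := by positivity
        linarith
      nlinarith
  linarith


lemma weight_ineq (b S R : ℝ) (hb0 : 0 < b) (hb1 : b < 1) (hS : 0 ≤ S) (hSR : S ≤ R) :
    |S ^ (-b) - R ^ (-b)| * S ≤ b / (1 - b) * (R ^ (1 - b) - S ^ (1 - b)) := by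
  have h1b : 0 < 1 - b := by linarith
  rcases hS.eq_or_lt with h | h
  · rw [← h, mul_zero, Real.zero_rpow h1b.ne']
    have : 0 ≤ R ^ (1 - b) := Real.rpow_nonneg (hS.trans hSR) _
    rw [sub_zero]; positivity
  · have hR : 0 < R := h.trans_le hSR
    have e1 : R ^ (-b) ≤ S ^ (-b) := Real.rpow_le_rpow_of_nonpos h hSR (by linarith)
    rw [abs_of_nonneg (by linarith)]
    have am := Real.geom_mean_le_arith_mean2_weighted (w₁ := 1 - b) (w₂ := b)
      (p₁ := S * R ^ (-b)) (p₂ := R ^ (1 - b)) h1b.le hb0.le (by positivity) (by positivity)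
      (by ring)
    rw [Real.mul_rpow h.le (by positivity), ← Real.rpow_mul hR.le, ← Real.rpow_mul hR.le,
      mul_assoc, ← Real.rpow_add hR, show -b * (1 - b) + (1 - b) * b = 0 by ring,
      Real.rpow_zero, mul_one] at am
    have e2 : S ^ (-b) * S = S ^ (1 - b) := by
      nth_rewrite 2 [← Real.rpow_one S]
      rw [← Real.rpow_add h]; congr 1; ring
    rw [sub_mul, e2, div_mul_eq_mul_div, le_div_iff₀ h1b]
    nlinarith

lemma abel (s : Finset DyadicI) (y : DyadicI → X) (b : ℝ) (hb0 : 0 < b) (hb1 : b < 1)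
    (S : ℕ → ℝ) (hS : ∀ n, S n = rad s (fun I => if I.n ≤ n then y I else 0)) (n : ℕ) :
    rad s (fun I => (if I.n ≤ n then S I.n ^ (-b) - S n ^ (-b) else 0) • y I) ≤
      b / (1 - b) * S n ^ (1 - b) := by
  have h1b : 0 < 1 - b := by linarith
  have hS0 : ∀ n, 0 ≤ S n := fun n => by rw [hS]; exact rad_nonneg _ _
  induction n with
  | zero =>
    have : rad s (fun I => (if I.n ≤ 0 then S I.n ^ (-b) - S 0 ^ (-b) else 0) • y I) = 0 := by
      have : (fun I : DyadicI => (if I.n ≤ 0 then S I.n ^ (-b) - S 0 ^ (-b) else 0) • y I) =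
          fun I => (0:ℝ) • y I := by
        funext I
        by_cases h : I.n ≤ 0
        · simp [Nat.le_zero.1 h]
        · simp [h]
      rw [this, rad_smul]; simp
    rw [this]
    have := Real.rpow_nonneg (hS0 0) (1 - b)
    positivity
  | succ n ih =>
    have mono : S n ≤ S (n + 1) := by
      rw [hS, hS]
      have := rad_contract s (fun I => if I.n ≤ n + 1 then y I else 0)
        (fun I => if I.n ≤ n then 1 else 0) (by intro I _; by_cases h : I.n ≤ n <;> simp [h])
      refine le_trans (le_of_eq ?_) this
      refine rad_congr s _ _ fun I _ => ?_
      by_cases h : I.n ≤ n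
      · simp [h, Nat.le_succ_of_le h]
      · simp [h]
    have key := weight_ineq b (S n) (S (n+1)) hb0 hb1 (hS0 n) mono
    have e : (fun I : DyadicI => (if I.n ≤ n + 1 then S I.n ^ (-b) - S (n+1) ^ (-b) else 0) • y I) =
      fun I => ((if I.n ≤ n then S I.n ^ (-b) - S n ^ (-b) else 0) • y I) +
        (S n ^ (-b) - S (n+1) ^ (-b)) • (if I.n ≤ n then y I else 0) := by
      funext I
      by_cases h : I.n ≤ n
      · simp only [h, Nat.le_succ_of_le h, if_true, ← add_smul]
        congr 1; ring
      · by_cases h' : I.n ≤ n + 1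
        · have : I.n = n + 1 := by omega
          simp [this]
        · simp [h, h']
    rw [e]
    refine (rad_add _ _ _).trans ?_
    rw [rad_smul, ← hS]
    linarith

end Aux2

section Aux3

variable {X : Type*} [NormedAddCommGroup X] [NormedSpace ℝ X]

lemma rad_le_of (s : Finset DyadicI) (u v : DyadicI → X) (D : ℝ) (hD : 0 ≤ D)
    (h : ∀ J ∈ s, ∃ c : ℝ, |c| ≤ D ∧ u J = c • v J) : rad s u ≤ D * rad s v := by
  choose! c hc hu using h
  rw [rad_congr s u _ hu]
  refine (rad_contract_abs s v c (fun _ => D) fun I hI => ?_).trans ?_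
  · rw [abs_of_nonneg hD]; exact hc I hI
  · rw [rad_smul, abs_of_nonneg hD]

/-- partial square function on `I`. -/
def SI (s : Finset DyadicI) (x : DyadicI → X) (I : DyadicI) : ℝ :=
  sqFn s (fun J => if J.n ≤ I.n then x J else 0) (lep I)

lemma SI_nonneg (s : Finset DyadicI) (x : DyadicI → X) (I : DyadicI) : 0 ≤ SI s x I :=
  sqFn_nonneg _ _ _

lemma SI_eq (s : Finset DyadicI) (x : DyadicI → X) (I : DyadicI) (t : ℝ) (ht : t ∈ toSet I) :
    SI s x I = rad s (fun J => if J.n ≤ I.n then haar J t • x J else 0) := by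
  unfold SI
  rw [sqFn_eq_rad]
  have e1 : (fun J => haar J (lep I) • (if J.n ≤ I.n then x J else 0)) =
      fun J => (if J.n ≤ I.n then haar J (lep I) else 0) • x J := by
    funext J; split_ifs <;> simp
  have e2 : (fun J => if J.n ≤ I.n then haar J t • x J else 0) =
      fun J => (if J.n ≤ I.n then haar J t else 0) • x J := by
    funext J; split_ifs <;> simp
  rw [e1, e2]
  have : ∀ J : DyadicI, |if J.n ≤ I.n then haar J (lep I) else 0| =
      |if J.n ≤ I.n then haar J t else 0| := by
    intro J
    split_ifs with h
    · rw [abs_haar, abs_haar, ind_const h ht]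
    · rfl
  exact le_antisymm (rad_contract_abs _ _ _ _ fun J _ => (this J).le)
    (rad_contract_abs _ _ _ _ fun J _ => (this J).ge)

lemma SI_le (s : Finset DyadicI) (x : DyadicI → X) (I : DyadicI) (t : ℝ) (ht : t ∈ toSet I) :
    SI s x I ≤ sqFn s x t := by
  rw [SI_eq s x I t ht, sqFn_eq_rad]
  have := rad_contract s (fun J => haar J t • x J) (fun J => if J.n ≤ I.n then 1 else 0)
    (by intro J _; by_cases h : J.n ≤ I.n <;> simp [h])
  refine le_trans (le_of_eq ?_) this
  congr 1; funext J; split_ifs <;> simp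

lemma norm_le_SI (s : Finset DyadicI) (x : DyadicI → X) (I : DyadicI) (hI : I ∈ s) :
    ‖x I‖ ≤ SI s x I := by
  rw [SI_eq s x I _ (lep_mem I)]
  have := rad_single s (fun J => if J.n ≤ I.n then haar J (lep I) • x J else 0) I hI
  simpa [norm_smul, abs_haar, ind_of_mem (lep_mem I)] using this

lemma f0_bound (s : Finset DyadicI) (x : DyadicI → X) (p : ℝ) (hp : 0 < p) (hp2 : p < 2) (t : ℝ) :
    sqFn s (fun I => (p / 2 * SI s x I ^ (-(1 - p / 2))) • x I) t ≤ sqFn s x t ^ (p / 2) := by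
  set b := 1 - p / 2 with hb
  have hb0 : 0 < b := by rw [hb]; linarith
  have hb1 : b < 1 := by rw [hb]; linarith
  set y : DyadicI → X := fun I => haar I t • x I with hy
  set S : ℕ → ℝ := fun n => rad s (fun I => if I.n ≤ n then y I else 0) with hS
  set n := s.sup (fun I => I.n) with hn
  have hle : ∀ I ∈ s, I.n ≤ n := fun I hI => Finset.le_sup (f := fun I : DyadicI => I.n) hI
  have hSn : S n = sqFn s x t := by
    rw [sqFn_eq_rad]
    exact rad_congr s _ _ fun I hI => by simp [hle I hI, hy]
  have ab := abel s y b hb0 hb1 S (fun _ => rfl) n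
  have e : sqFn s (fun I => (p / 2 * SI s x I ^ (-b)) • x I) t =
      rad s (fun I => (p / 2) • ((if I.n ≤ n then S I.n ^ (-b) - S n ^ (-b) else 0) • y I
        + S n ^ (-b) • y I)) := by
    rw [sqFn_eq_rad]
    refine rad_congr s _ _ fun I hI => ?_
    rw [if_pos (hle I hI), ← add_smul, sub_add_cancel]
    by_cases ht : t ∈ toSet I
    · rw [SI_eq s x I t ht]
      rw [smul_comm, mul_smul]
    · have : haar I t = 0 := by
        rw [← abs_eq_zero, abs_haar, ind_of_not_mem ht]
      simp [hy, this]
  rw [e, rad_smul, abs_of_pos (by linarith), ← hSn]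
  have hS0 : 0 ≤ S n := rad_nonneg _ _
  have hyS : rad s y = S n := rad_congr s _ _ fun I hI => by simp [hle I hI]
  have h1 := rad_add s (fun I => (if I.n ≤ n then S I.n ^ (-b) - S n ^ (-b) else 0) • y I)
    (fun I => S n ^ (-b) • y I)
  rw [rad_smul, hyS, abs_of_nonneg (Real.rpow_nonneg hS0 _)] at h1
  have h2 : S n ^ (-b) * S n ≤ S n ^ (1 - b) := by
    rcases hS0.eq_or_lt with h | h
    · rw [← h, mul_zero]; exact Real.rpow_nonneg le_rfl _
    · apply le_of_eq
      nth_rewrite 2 [← Real.rpow_one (S n)]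
      rw [← Real.rpow_add h]; congr 1; ring
  have h1b : 1 - b = p / 2 := by rw [hb]; ring
  rw [h1b] at ab h2
  have h3 : b / (p / 2) = 2 / p - 1 := by rw [hb]; field_simp
  rw [h3] at ab
  have h4 := Real.rpow_nonneg hS0 (p / 2)
  calc _ ≤ p / 2 * ((2 / p - 1) * S n ^ (p / 2) + S n ^ (p / 2)) := by
        gcongr; linarith
    _ = S n ^ (p / 2) := by field_simp; ring

lemma rearrCoef_apply (τ : DyadicI → DyadicI) (hτ : Function.Injective τ) (p : ℝ)
    (s : Finset DyadicI) (x : DyadicI → X) (I : DyadicI) (hI : I ∈ s) :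
    rearrCoef τ p s x (τ I) = ((len I / len (τ I)) ^ (1 / p)) • x I := by
  unfold rearrCoef
  rw [Finset.sum_eq_single I]
  · simp
  · intro J _ hJ; rw [if_neg fun h => hJ (hτ h)]
  · intro h; exact absurd hI h

lemma rearrCoefS_apply (τ : DyadicI → DyadicI) (hτ : Function.Injective τ) (p : ℝ)
    (s : Finset DyadicI) (x : DyadicI → ℝ) (I : DyadicI) (hI : I ∈ s) :
    rearrCoefS τ p s x (τ I) = ((len I / len (τ I)) ^ (1 / p)) * x I := by
  unfold rearrCoefS
  rw [Finset.sum_eq_single I]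
  · simp
  · intro J _ hJ; rw [if_neg fun h => hJ (hτ h)]
  · intro h; exact absurd hI h

lemma sqFnS_rearr (τ : DyadicI → DyadicI) (hτ : Function.Injective τ)
    (s : Finset DyadicI) (a : DyadicI → ℝ) (t : ℝ) :
    sqFnS (s.image τ) (rearrCoefS τ 1 s a) t =
      Real.sqrt (∑ I ∈ s, (len I / len (τ I) * a I) ^ 2 * ind (τ I) t) := by
  unfold sqFnS
  rw [Finset.sum_image fun _ _ _ _ h => hτ h]
  congr 1
  refine Finset.sum_congr rfl fun I hI => ?_
  rw [rearrCoefS_apply τ hτ 1 s a I hI]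
  simp [ind]

lemma h1_use (τ : DyadicI → DyadicI) (hτ : Function.Injective τ) (h1 : hpOpNormS τ 1 < ⊤) :
    ∃ K : ℝ, 1 ≤ K ∧ ∀ (s : Finset DyadicI) (a : DyadicI → ℝ) (B : ℝ), 0 < B →
      ∫ t, Real.sqrt (∑ I ∈ s, a I ^ 2 * ind I t) ∂mu0 ≤ B →
      ∫ t, Real.sqrt (∑ I ∈ s, (len I / len (τ I) * a I) ^ 2 * ind (τ I) t) ∂mu0 ≤ K * B := by
  refine ⟨(hpOpNormS τ 1).toReal + 1, by linarith [ENNReal.toReal_nonneg (a := hpOpNormS τ 1)], ?_⟩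
  intro s a B hB hle
  have hB' : 0 < B⁻¹ := inv_pos.2 hB
  have sc : ∀ (d : DyadicI → ℝ) (T : DyadicI → DyadicI) (t : ℝ),
      Real.sqrt (∑ I ∈ s, (B⁻¹ * d I) ^ 2 * ind (T I) t) =
      B⁻¹ * Real.sqrt (∑ I ∈ s, d I ^ 2 * ind (T I) t) := by
    intro d T t
    have : ∑ I ∈ s, (B⁻¹ * d I) ^ 2 * ind (T I) t =
        (B⁻¹) ^ 2 * ∑ I ∈ s, d I ^ 2 * ind (T I) t := by
      rw [Finset.mul_sum]
      refine Finset.sum_congr rfl fun I _ => by ring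
    rw [this, Real.sqrt_mul (sq_nonneg _), Real.sqrt_sq hB'.le]
  have hn : HpNormS 1 s (fun I => B⁻¹ * a I) ≤ 1 := by
    unfold HpNormS
    simp only [Real.rpow_one, div_one]
    have : ∀ t, sqFnS s (fun I => B⁻¹ * a I) t =
        B⁻¹ * Real.sqrt (∑ I ∈ s, a I ^ 2 * ind I t) := fun t => sc a id t
    simp only [this]
    rw [integral_const_mul, inv_mul_le_iff₀ hB, mul_one]
    exact hle
  have h := le_iSup₂_of_le (f := fun (s : Finset DyadicI) (a : DyadicI → ℝ) =>
    ⨆ (_ : HpNormS 1 s a ≤ 1), ENNReal.ofReal (HpNormS 1 (s.image τ) (rearrCoefS τ 1 s a)))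
    s (fun I => B⁻¹ * a I) (le_iSup_of_le hn le_rfl)
  change _ ≤ hpOpNormS τ 1 at h
  have h' := (ENNReal.ofReal_le_iff_le_toReal h1.ne).1 h
  unfold HpNormS at h'
  simp only [Real.rpow_one, div_one] at h'
  have : ∀ t, sqFnS (s.image τ) (rearrCoefS τ 1 s (fun I => B⁻¹ * a I)) t =
      B⁻¹ * Real.sqrt (∑ I ∈ s, (len I / len (τ I) * a I) ^ 2 * ind (τ I) t) := by
    intro t
    rw [sqFnS_rearr τ hτ, ← sc]
    congr 1
    refine Finset.sum_congr rfl fun I _ => by ring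
  simp only [this] at h'
  rw [integral_const_mul, inv_mul_le_iff₀ hB] at h'
  refine h'.trans ?_
  nlinarith

lemma sqrt_amgm (l A B : ℝ) (hl : 0 < l) (hA : 0 ≤ A) (hB : 0 ≤ B) :
    Real.sqrt (A * B) ≤ 1 / 2 * (l * A + l⁻¹ * B) := by
  refine Real.sqrt_le_iff.2 ⟨by positivity, ?_⟩
  have : l * l⁻¹ = 1 := mul_inv_cancel₀ hl.ne'
  calc A * B = (l * A) * (l⁻¹ * B) := by
        rw [show (l * A) * (l⁻¹ * B) = (l * l⁻¹) * (A * B) by ring, this, one_mul]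
    _ ≤ _ := by nlinarith [sq_nonneg (l * A - l⁻¹ * B)]

/-- bound for the weighted maximal function -/
lemma max_bound (τ : DyadicI → DyadicI) (hτ : Function.Injective τ) (h1 : hpOpNormS τ 1 < ⊤) :
    ∃ L : ℝ, 0 ≤ L ∧ ∀ (s : Finset DyadicI) (x : DyadicI → X) (p : ℝ), 0 < p →
      ∫ t, sqFn s x t ^ p ∂mu0 ≤ 1 →
      ∃ m : ℝ → ℝ, Integrable m mu0 ∧ (∀ t, 0 ≤ m t) ∧
        (∀ I ∈ s, ∀ t ∈ toSet (τ I), len I / len (τ I) * SI s x I ^ p ≤ m t) ∧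
        ∫ t, m t ∂mu0 ≤ L := by
  obtain ⟨K, hK, hK1⟩ := h1_use τ hτ h1
  refine ⟨(3 / 2 * K) ^ 2, by positivity, ?_⟩
  intro s x p hp hN
  set v : DyadicI → ℝ := fun I => len I / len (τ I) * SI s x I ^ p with hv
  have hSp : ∀ I, 0 ≤ SI s x I ^ p := fun I => Real.rpow_nonneg (SI_nonneg s x I) p
  have hw : ∀ I, 0 < len I / len (τ I) := fun I =>
    div_pos (DyadicI.len_pos _) (DyadicI.len_pos _)
  have hv0 : ∀ I, 0 ≤ v I := fun I => mul_nonneg (hw I).le (hSp I)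
  obtain ⟨e, e1, e2, e2', e3, e4⟩ := exists_max_sel s (fun I t => v I * ind (τ I) t)
    fun I => (measurable_ind _).const_mul _
  have hie : ∀ I, Integrable (fun t => e I t * ind (τ I) t) mu0 := by
    intro I
    refine bm_int ((e1 I).mul (measurable_ind _)) 1 fun t => ?_
    rw [abs_of_nonneg (mul_nonneg (e2 I t) (ind_nonneg _ _))]
    exact mul_le_one₀ (e2' I t) (ind_nonneg _ _) (ind_le_one _ _)
  have hme : (fun t => ∑ I ∈ s, e I t * (v I * ind (τ I) t)) =
      fun t => ∑ I ∈ s, v I * (e I t * ind (τ I) t) := by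
    funext t; exact Finset.sum_congr rfl fun I _ => by ring
  refine ⟨fun t => ∑ I ∈ s, e I t * (v I * ind (τ I) t), ?_, ?_, ?_, ?_⟩
  · rw [hme]
    exact integrable_finsetSum _ fun I _ => (hie I).const_mul _
  · intro t
    exact Finset.sum_nonneg fun I _ => mul_nonneg (e2 I t) (mul_nonneg (hv0 I) (ind_nonneg _ _))
  · intro I hI t ht
    have := e4 t I hI
    simpa [ind_of_mem ht] using this
  · rw [hme]
    set q : DyadicI → ℝ := fun I => ∫ t, e I t * ind (τ I) t ∂mu0 with hq
    have hq0 : ∀ I, 0 ≤ q I := fun I =>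
      integral_nonneg fun t => mul_nonneg (e2 I t) (ind_nonneg _ _)
    have hM : ∫ t, ∑ I ∈ s, v I * (e I t * ind (τ I) t) ∂mu0 = ∑ I ∈ s, v I * q I := by
      rw [integral_finsetSum _ fun I _ => (hie I).const_mul _]
      refine Finset.sum_congr rfl fun I _ => ?_
      rw [integral_const_mul]
    rw [hM]
    set M := ∑ I ∈ s, v I * q I with hMdef
    have hM0 : 0 ≤ M := Finset.sum_nonneg fun I _ => mul_nonneg (hv0 I) (hq0 I)
    set θ : DyadicI → ℝ := fun I => q I / len (τ I) with hθ
    have hθ0 : ∀ I, 0 ≤ θ I := fun I => div_nonneg (hq0 I) (DyadicI.len_pos _).le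
    set a : DyadicI → ℝ := fun I => SI s x I ^ p * Real.sqrt (θ I) with ha
    set l := 3 / 2 * K with hl
    have hl0 : 0 < l := by rw [hl]; linarith
    have ff := fefferman s τ (fun I => len I / len (τ I) * a I) e e1 e2 e2' e3
    have hL : ∑ I ∈ s, len I / len (τ I) * a I *
        Real.sqrt ((∫ t, e I t * ind (τ I) t ∂mu0) / len (τ I)) * len (τ I) = M := by
      refine Finset.sum_congr rfl fun I _ => ?_
      change len I / len (τ I) * (SI s x I ^ p * Real.sqrt (θ I)) * Real.sqrt (θ I) * len (τ I) = _
      have := Real.mul_self_sqrt (hθ0 I)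
      have e : θ I * len (τ I) = q I := div_mul_cancel₀ _ (DyadicI.len_pos _).ne'
      calc _ = len I / len (τ I) * SI s x I ^ p * ((Real.sqrt (θ I) * Real.sqrt (θ I)) * len (τ I)) := by
            ring
        _ = _ := by rw [this, e]
    rw [hL] at ff
    have hphi : ∫ t, Real.sqrt (∑ I ∈ s, a I ^ 2 * ind I t) ∂mu0 ≤ 1 / 2 * (l + M / l) := by
      set G : ℝ → ℝ := fun t => ∑ I ∈ s, (SI s x I ^ p * θ I) * ind I t with hG
      have hGi : Integrable G mu0 :=
        integrable_finsetSum _ fun I _ => (integrable_ind I).const_mul _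
      have hGM : ∫ t, G t ∂mu0 = M := by
        rw [hG, integral_finsetSum _ fun I _ => (integrable_ind I).const_mul _]
        refine Finset.sum_congr rfl fun I _ => ?_
        rw [integral_const_mul, integral_ind]
        simp only [hv, hθ]
        ring
      have hG0 : ∀ t, 0 ≤ G t := fun t => Finset.sum_nonneg fun I _ =>
        mul_nonneg (mul_nonneg (hSp I) (hθ0 I)) (ind_nonneg _ _)
      have pw : ∀ t, Real.sqrt (∑ I ∈ s, a I ^ 2 * ind I t) ≤
          1 / 2 * (l * sqFn s x t ^ p + l⁻¹ * G t) := by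
        intro t
        have hA := Real.rpow_nonneg (sqFn_nonneg s x t) p
        have hB := hG0 t
        have b1 : ∑ I ∈ s, a I ^ 2 * ind I t ≤ sqFn s x t ^ p * G t := by
          rw [hG, Finset.mul_sum]
          refine Finset.sum_le_sum fun I _ => ?_
          by_cases ht : t ∈ toSet I
          · rw [ind_of_mem ht, mul_one, mul_one, ha]
            dsimp only
            rw [mul_pow, Real.sq_sqrt (hθ0 I), sq, mul_assoc]
            refine mul_le_mul_of_nonneg_right ?_ (mul_nonneg (hSp I) (hθ0 I))
            exact Real.rpow_le_rpow (SI_nonneg s x I) (SI_le s x I t ht) hp.le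
          · rw [ind_of_not_mem ht]; simp
        exact (Real.sqrt_le_sqrt b1).trans (sqrt_amgm _ _ _ hl0 hA hB)
      have hFi := integrable_sqFn_rpow s x p hp
      have := integral_mono (integrable_sqS s id a)
        (((hFi.const_mul l).add (hGi.const_mul l⁻¹)).const_mul (1/2)) pw
      refine this.trans ?_
      rw [integral_const_mul]
      simp only [Pi.add_apply]
      rw [integral_add (hFi.const_mul l) (hGi.const_mul l⁻¹), integral_const_mul,
        integral_const_mul, hGM]
      have : l * ∫ t, sqFn s x t ^ p ∂mu0 ≤ l * 1 := mul_le_mul_of_nonneg_left hN hl0.le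
      rw [div_eq_inv_mul M l]
      linarith
    have hBpos : 0 < 1 / 2 * (l + M / l) := by
      have := div_nonneg hM0 hl0.le
      linarith
    have hfin := hK1 s a _ hBpos hphi
    have : M ≤ l * (1 / 2 * (l + M / l)) := by
      rw [hl, mul_assoc]; rw [← hl]; linarith
    have e : l * (1 / 2 * (l + M / l)) = 1 / 2 * l ^ 2 + 1 / 2 * M := by field_simp
    linarith

end Aux3

/-- Let `X` be a Banach space and `τ : D → D` injective. If the
scalar rearrangement operator is bounded on dyadic `H¹` (`‖T_{τ,1}‖₁ < ∞`) and the
vector-valued rearrangement operator is bounded on `H²_X` (`‖T_{τ,2} ⊗ Id_X‖₂ < ∞`),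
then `‖T_{τ,p} ⊗ Id_X‖_p < ∞` for every `0 < p ≤ 2`. -/
theorem statement14 (X : Type*) [NormedAddCommGroup X] [NormedSpace ℝ X]
    [CompleteSpace X] (τ : DyadicI → DyadicI) (hτ : Function.Injective τ)
    (h1 : hpOpNormS τ 1 < ⊤) (h2 : hpOpNorm τ 2 X < ⊤) :
    ∀ p : ℝ, 0 < p → p ≤ 2 → hpOpNorm τ p X < ⊤ := by
  intro p hp hp2
  rcases hp2.eq_or_lt with rfl | hp2
  · exact h2
  obtain ⟨L, hL0, hL⟩ := max_bound (X := X) τ hτ h1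
  set K := (hpOpNorm τ 2 X).toReal with hK
  have hK0 : 0 ≤ K := ENNReal.toReal_nonneg
  have hp' : 0 < 2 / p := by positivity
  set D := (2 / p) ^ p * (L + K ^ 2) with hD
  have hD0 : 0 ≤ D := by positivity
  refine lt_of_le_of_lt (b := ENNReal.ofReal (D ^ (1 / p))) ?_ ENNReal.ofReal_lt_top
  refine iSup₂_le fun s x => iSup_le fun hx => ENNReal.ofReal_le_ofReal ?_
  have hint0 : 0 ≤ ∫ t, sqFn s x t ^ p ∂mu0 :=
    integral_nonneg fun t => Real.rpow_nonneg (sqFn_nonneg s x t) p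
  have hN : ∫ t, sqFn s x t ^ p ∂mu0 ≤ 1 := by
    unfold HpNormV at hx
    by_contra h
    push Not at h
    have := Real.one_lt_rpow h (show 0 < 1 / p by positivity)
    linarith
  obtain ⟨m, hmi, hm0, hmax, hmL⟩ := hL s x p hp hN
  set b := 1 - p / 2 with hb
  set z : DyadicI → X := fun I => (p / 2 * SI s x I ^ (-b)) • x I with hz
  have hz1 : HpNormV 2 s z ≤ 1 := by
    unfold HpNormV
    refine Real.rpow_le_one (integral_nonneg fun t => Real.rpow_nonneg (sqFn_nonneg s z t) 2) ?_
      (by norm_num)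
    refine le_trans (integral_mono (integrable_sqFn_rpow s z 2 (by norm_num))
      (integrable_sqFn_rpow s x p hp) fun t => ?_) hN
    have := Real.rpow_le_rpow (sqFn_nonneg s z t) (f0_bound s x p hp hp2 t)
      (show (0:ℝ) ≤ 2 by norm_num)
    refine this.trans (le_of_eq ?_)
    rw [← Real.rpow_mul (sqFn_nonneg s x t)]
    congr 1; ring
  have h := le_iSup₂_of_le (f := fun (s : Finset DyadicI) (x : DyadicI → X) =>
    ⨆ (_ : HpNormV 2 s x ≤ 1), ENNReal.ofReal (HpNormV 2 (s.image τ) (rearrCoef τ 2 s x)))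
    s z (le_iSup_of_le hz1 le_rfl)
  change _ ≤ hpOpNorm τ 2 X at h
  have h' := (ENNReal.ofReal_le_iff_le_toReal h2.ne).1 h
  rw [← hK] at h'
  set V := sqFn (s.image τ) (rearrCoef τ 2 s z) with hV
  have hV0 : ∀ t, 0 ≤ V t := fun t => sqFn_nonneg _ _ t
  have hVi : Integrable (fun t => V t ^ (2:ℝ)) mu0 := integrable_sqFn_rpow _ _ 2 (by norm_num)
  have hVK : ∫ t, V t ^ (2:ℝ) ∂mu0 ≤ K ^ 2 := by
    unfold HpNormV at h'
    have hi : 0 ≤ ∫ t, V t ^ (2:ℝ) ∂mu0 :=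
      integral_nonneg fun t => Real.rpow_nonneg (hV0 t) 2
    rw [← Real.sqrt_eq_rpow, Real.sqrt_le_left hK0] at h'
    exact h'
  have hpa : (1 / p - 1 / 2) * p = b := by rw [hb]; field_simp
  have hb0 : 0 < b := by rw [hb]; linarith
  have ha0 : 0 < 1 / p - 1 / 2 := by
    by_contra hc; push Not at hc; nlinarith
  -- pointwise estimate
  have pw : ∀ t, sqFn (s.image τ) (rearrCoef τ p s x) t ≤ 2 / p * m t ^ (1 / p - 1 / 2) * V t := by
    intro t
    rw [hV, sqFn_eq_rad, sqFn_eq_rad]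
    have hmt : 0 ≤ m t ^ (1 / p - 1 / 2) := Real.rpow_nonneg (hm0 t) _
    refine rad_le_of _ _ _ _ (by positivity) fun J hJ => ?_
    obtain ⟨I, hI, rfl⟩ := Finset.mem_image.1 hJ
    by_cases ht : t ∈ toSet (τ I)
    · have hw : 0 < len I / len (τ I) := div_pos (DyadicI.len_pos _) (DyadicI.len_pos _)
      have hS := SI_nonneg s x I
      have hv0 : 0 ≤ len I / len (τ I) * SI s x I ^ p :=
        mul_nonneg hw.le (Real.rpow_nonneg hS _)
      refine ⟨2 / p * (len I / len (τ I) * SI s x I ^ p) ^ (1 / p - 1 / 2), ?_, ?_⟩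
      · rw [abs_of_nonneg (mul_nonneg hp'.le (Real.rpow_nonneg hv0 _))]
        exact mul_le_mul_of_nonneg_left
          (Real.rpow_le_rpow hv0 (hmax I hI t ht) ha0.le) hp'.le
      · rw [rearrCoef_apply τ hτ p s x I hI, rearrCoef_apply τ hτ 2 s z I hI, hz]
        dsimp only
        rcases hS.eq_or_lt with h0 | h0
        · have := norm_le_SI s x I hI
          rw [← h0] at this
          rw [norm_le_zero_iff.1 this]; simp
        · rw [smul_smul, smul_smul, smul_smul, smul_smul]
          congr 1
          set w := len I / len (τ I)
          set S := SI s x I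
          rw [Real.mul_rpow hw.le (Real.rpow_nonneg h0.le _), ← Real.rpow_mul h0.le,
            mul_comm p, hpa, Real.rpow_neg h0.le]
          have e : w ^ (1 / p) = w ^ (1 / p - 1 / 2) * w ^ (1 / (2:ℝ)) := by
            rw [← Real.rpow_add hw]; congr 1; ring
          rw [e]
          have hSb : S ^ b ≠ 0 := (Real.rpow_pos_of_pos h0 b).ne'
          field_simp
    · refine ⟨0, by rw [abs_zero]; exact mul_nonneg hp'.le hmt, ?_⟩
      have : haar (τ I) t = 0 := by
        rw [← abs_eq_zero, abs_haar, ind_of_not_mem ht]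
      rw [this]; simp
  have pw2 : ∀ t, sqFn (s.image τ) (rearrCoef τ p s x) t ^ p ≤
      (2 / p) ^ p * (m t + V t ^ (2:ℝ)) := by
    intro t
    have hmt := hm0 t
    have hVt := hV0 t
    have hma : 0 ≤ m t ^ (1 / p - 1 / 2) := Real.rpow_nonneg hmt _
    refine (Real.rpow_le_rpow (sqFn_nonneg _ _ t) (pw t) hp.le).trans ?_
    rw [mul_assoc, Real.mul_rpow hp'.le (mul_nonneg hma hVt), Real.mul_rpow hma hVt,
      ← Real.rpow_mul hmt, hpa]
    have hV2 : 0 ≤ V t ^ (2:ℝ) := Real.rpow_nonneg hVt _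
    have hVp : V t ^ p = (V t ^ (2:ℝ)) ^ (p / 2) := by
      rw [← Real.rpow_mul hVt]; congr 1; ring
    have am := Real.geom_mean_le_arith_mean2_weighted (w₁ := b) (w₂ := p / 2)
      (p₁ := m t) (p₂ := V t ^ (2:ℝ)) hb0.le (by positivity) hmt hV2 (by rw [hb]; ring)
    rw [hVp]
    refine mul_le_mul_of_nonneg_left (am.trans ?_) (Real.rpow_nonneg hp'.le _)
    have k1 : b ≤ 1 := by rw [hb]; linarith
    have k2 : p / 2 ≤ 1 := by linarith
    exact add_le_add (mul_le_of_le_one_left hmt k1) (mul_le_of_le_one_left hV2 k2)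
  unfold HpNormV
  have hfi : 0 ≤ ∫ t, sqFn (s.image τ) (rearrCoef τ p s x) t ^ p ∂mu0 :=
    integral_nonneg fun t => Real.rpow_nonneg (sqFn_nonneg _ _ t) p
  refine Real.rpow_le_rpow hfi ?_ (by positivity)
  refine (integral_mono (integrable_sqFn_rpow _ _ p hp) ((hmi.add hVi).const_mul _) pw2).trans ?_
  rw [integral_const_mul]
  simp only [Pi.add_apply]
  rw [integral_add hmi hVi, hD]
  exact mul_le_mul_of_nonneg_left (add_le_add hmL hVK) (Real.rpow_nonneg hp'.le _)
end
end
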